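/- Let μ be a T-invariant and shift-ergodic probability measure on X_λ for some 0 < λ < 1/2. Then there exists a deterministic sequence (v_k)_{k≥1} of finite real numbers such that μ-a.s., for every k ≥ 1 and every k-soliton γ ∈ Γ_k η, lim_{t→∞} x(γ^t)/t = v_k, where x(γ) denotes the leftmost site of γ. Moreover the speeds satisfy, for every k ≥ 1, v_k = k + Σ_{m<k} 2m·ρ̄_m·(v_k − v_m) − Σ_{m>k} 2k·ρ̄_m·(v_m − v_k). -/

import Mathlib

open MeasureTheory Filter Finset

/-- A ball configuration: a box at each integer, occupied (`true`) or empty (`false`). -/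
abbrev Cfg := ℤ → Bool

/-- Numerical (integer) value of a box. -/
def valZ (b : Bool) : ℤ := if b then 1 else 0

/-- Numerical (real) value of a box. -/
def valR (b : Bool) : ℝ := if b then 1 else 0

/-- `x` is a record of the configuration `η`:
for every `z ≤ x`, the number of balls in `[z,x]` is strictly smaller than the
number of empty boxes in `[z,x]`. -/
def isRecord (η : Cfg) (x : ℤ) : Prop :=
  ∀ z ≤ x, (∑ y ∈ Finset.Icc z x, valZ (η y)) < ∑ y ∈ Finset.Icc z x, (1 - valZ (η y))

open Classical in
/-- The box-ball (Takahashi–Satsuma) operator `T`. -/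
noncomputable def bbsT (η : Cfg) : Cfg := fun x => if isRecord η x then false else !(η x)

/-- `η` has asymptotic density `lam` of balls on both half lines. -/
def inXlam (lam : ℝ) (η : Cfg) : Prop :=
  Tendsto (fun y : ℕ => (∑ x ∈ Finset.Icc (-(y : ℤ)) 0, valR (η x)) / (y : ℝ))
    atTop (nhds lam) ∧
  Tendsto (fun y : ℕ => (∑ x ∈ Finset.Icc (0 : ℤ) (y : ℤ), valR (η x)) / (y : ℝ))
    atTop (nhds lam)

/-- `η ∈ 𝒳`: it has a well-defined density `0 < lam < 1/2`. -/
def inX (η : Cfg) : Prop := ∃ lam : ℝ, 0 < lam ∧ lam < 1 / 2 ∧ inXlam lam η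

/-- `ξ` is a walk lift of the configuration `η`. -/
def IsLift (η : Cfg) (ξ : ℤ → ℤ) : Prop :=
  ∀ x : ℤ, ξ x - ξ (x - 1) = 2 * valZ (η x) - 1

/-- Running minimum `min_{y ≤ x} ξ(y)` of a walk. -/
noncomputable def runMin (ξ : ℤ → ℤ) (x : ℤ) : ℤ := sInf (ξ '' Set.Iic x)

/-- The box-ball operator on walks: reflection at the running minimum. -/
noncomputable def liftT (ξ : ℤ → ℤ) : ℤ → ℤ := fun x => 2 * runMin ξ x - ξ x

/-- The canonical walk lift of `η` with value `0` at the origin. -/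
noncomputable def xi0 (η : Cfg) : ℤ → ℤ := fun x =>
  if 0 ≤ x then ∑ y ∈ Finset.Icc 1 x, (2 * valZ (η y) - 1)
  else -∑ y ∈ Finset.Icc (x + 1) 0, (2 * valZ (η y) - 1)
/-- Maximal runs of a word of (position, letter) pairs. -/
def runsOf : List (ℤ × Bool) → List (List (ℤ × Bool))
  | [] => []
  | a :: l =>
    match runsOf l with
    | [] => [[a]]
    | r :: rs =>
      if (r.head?.map Prod.snd) = some a.2 then (a :: r) :: rs else [a] :: r :: rs

/-- Takahashi–Satsuma step: find the leftmost run whose length is at least the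
length of the run preceding it; the soliton consists of the preceding run
together with the first (that many) letters of the selected run. -/
def findSoliton : List (List (ℤ × Bool)) → Option (List (ℤ × Bool))
  | r1 :: r2 :: rest =>
    if r1.length ≤ r2.length then some (r1 ++ r2.take r1.length)
    else findSoliton (r2 :: rest)
  | _ => none

/-- Iterated Takahashi–Satsuma algorithm (with fuel): repeatedly identify the
soliton given by `findSoliton` and remove its letters from the word. -/
def tsAux : ℕ → List (ℤ × Bool) → List (List (ℤ × Bool))
  | 0, _ => []
  | fuel + 1, w =>
    match findSoliton (runsOf w) with
    | none => []
    | some s => s :: tsAux fuel (w.filter (fun a => !((s.map Prod.fst).contains a.1)))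

/-- The solitons identified by the Takahashi–Satsuma algorithm in a finite word. -/
def tsSolitons (w : List (ℤ × Bool)) : List (List (ℤ × Bool)) := tsAux w.length w

/-- The word (with positions) strictly between sites `y1` and `y2`. -/
def excursionWord (η : Cfg) (y1 y2 : ℤ) : List (ℤ × Bool) :=
  (List.range (y2 - y1 - 1).toNat).map fun n => (y1 + 1 + n, η (y1 + 1 + n))

/-- `Γ_k η`: the set of `k`-solitons of `η`, each identified with the set of `2k`
sites it occupies.  A `k`-soliton is obtained by applying the Takahashi–Satsuma
algorithm to an excursion of `η` (the word between two consecutive records). -/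
def Gamma (η : Cfg) (k : ℕ) : Set (Finset ℤ) :=
  {γ | ∃ y1 y2 : ℤ, y1 < y2 ∧ isRecord η y1 ∧ isRecord η y2 ∧
    (∀ z : ℤ, y1 < z → z < y2 → ¬ isRecord η z) ∧
    ∃ s ∈ tsSolitons (excursionWord η y1 y2), s.length = 2 * k ∧
      γ = (s.map Prod.fst).toFinset}

/-- The head of a soliton `γ` of `η`: the positions of its ones. -/
def headF (η : Cfg) (γ : Finset ℤ) : Finset ℤ := γ.filter fun x => η x = true

/-- The tail of a soliton `γ` of `η`: the positions of its zeros. -/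
def tailF (η : Cfg) (γ : Finset ℤ) : Finset ℤ := γ.filter fun x => η x = false
/-- `x` is a `k`-slot of `η`: either a record, or the `j`-th smallest site of the
tail or of the head of some soliton, with `j > k` (slot level `j - 1 ≥ k`). -/
def IsKSlot (η : Cfg) (k : ℕ) (x : ℤ) : Prop :=
  isRecord η x ∨ ∃ m : ℕ, ∃ γ ∈ Gamma η m,
    (x ∈ tailF η γ ∧ k < ((tailF η γ).filter fun y => y ≤ x).card) ∨
    (x ∈ headF η γ ∧ k < ((headF η γ).filter fun y => y ≤ x).card)

open Classical in
/-- Increasing enumeration of a (doubly unbounded, locally finite) set `S ⊆ ℤ`,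
normalized so that the `0`-th element is the base point `b`.  (Junk value if no
such enumeration exists.) -/
noncomputable def enumZ (S : Set ℤ) (b : ℤ) : ℤ → ℤ :=
  if h : ∃ f : ℤ → ℤ, StrictMono f ∧ f 0 = b ∧ Set.range f = S then h.choose
  else fun _ => 0

/-- Position `r(ξ,j)` of Record `j` of a walk `ξ`: leftmost site where `ξ` takes
the value `-j`. -/
noncomputable def recPos (ξ : ℤ → ℤ) (j : ℤ) : ℤ := sInf {x : ℤ | ξ x = -j}

/-- `s_k(ξ,i)`: the `i`-th `k`-slot of the configuration `η` lifted by the walk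
`ξ`, enumerated increasingly and normalized by `s_k(ξ,0) = r(ξ,0)`. -/
noncomputable def skEnum (η : Cfg) (ξ : ℤ → ℤ) (k : ℕ) : ℤ → ℤ :=
  enumZ {x : ℤ | IsKSlot η k x} (recPos ξ 0)

/-- `M_k ξ (i)`: the number of `k`-solitons appended to the `i`-th `k`-slot,
i.e. contained in `[s_k(ξ,i)+1, s_k(ξ,i+1)-1]`. -/
noncomputable def Mk (η : Cfg) (ξ : ℤ → ℤ) (k : ℕ) (i : ℤ) : ℕ :=
  Set.ncard {γ | γ ∈ Gamma η k ∧
    ∀ x ∈ γ, skEnum η ξ k i < x ∧ x < skEnum η ξ k (i + 1)}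

open Classical in
/-- The trajectory `γ^t` of a tagged `k`-soliton `γ` of `η`: `γ^0 = γ` and
`γ^{t+1}` is the `k`-soliton of `T^{t+1} η` whose head is the tail of `γ^t`. -/
noncomputable def solTraj (η : Cfg) (k : ℕ) (γ : Finset ℤ) : ℕ → Finset ℤ
  | 0 => γ
  | t + 1 =>
    if h : ∃ γ' ∈ Gamma (bbsT^[t + 1] η) k,
        headF (bbsT^[t + 1] η) γ' = tailF (bbsT^[t] η) (solTraj η k γ t)
    then h.choose else ∅

/-- `J_m^t ξ`: the flow of `m`-solitons through Record `0` by time `t`. -/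
noncomputable def Jflow (η : Cfg) (ξ : ℤ → ℤ) (m : ℕ) (t : ℕ) : ℕ :=
  Set.ncard {γ | γ ∈ Gamma η m ∧ (∀ x ∈ γ, x < recPos ξ 0) ∧
    ∀ x ∈ solTraj η m γ t, recPos (liftT^[t] ξ) 0 ≤ x}

/-- `o_k^t(ξ) = Σ_{m>k} 2(m-k)·J_m^t ξ`: the flow of `k`-slots through Record
`0` by time `t`, counted as the number of pairs (an `m`-soliton `γ` with `m > k`
crossing Record `0` by time `t`, a site of `γ` of slot level `≥ k`); each such
`γ` carries exactly `2(m-k)` such sites. -/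
noncomputable def oOff (η : Cfg) (ξ : ℤ → ℤ) (k : ℕ) (t : ℕ) : ℕ :=
  Set.ncard {p : Finset ℤ × ℤ | ∃ m : ℕ, k < m ∧ p.1 ∈ Gamma η m ∧
    (∀ x ∈ p.1, x < recPos ξ 0) ∧
    (∀ x ∈ solTraj η m p.1 t, recPos (liftT^[t] ξ) 0 ≤ x) ∧
    ((p.2 ∈ tailF η p.1 ∧ k < ((tailF η p.1).filter fun y => y ≤ p.2).card) ∨
     (p.2 ∈ headF η p.1 ∧ k < ((headF η p.1).filter fun y => y ≤ p.2).card))}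

/-- The relabeled `i`-th `k`-slot at time `t`:
`s_k^t(ξ,i) = s_k(T^t ξ, o_k^t(ξ) + i)`. -/
noncomputable def skEnumT (η : Cfg) (ξ : ℤ → ℤ) (k : ℕ) (t : ℕ) (i : ℤ) : ℤ :=
  skEnum (bbsT^[t] η) (liftT^[t] ξ) k ((oOff η ξ k t : ℤ) + i)
/-- The shift `θ` on configurations: `θη(y) = η(y+1)`. -/
def shiftC (η : Cfg) : Cfg := fun y => η (y + 1)

/-- The shift by `n`: `θ^n η (y) = η (y + n)`. -/
def shiftBy (n : ℤ) (η : Cfg) : Cfg := fun y => η (y + n)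

/-- The shift on `ℕ^ℤ` (soliton components). -/
def shiftN (z : ℤ → ℕ) : ℤ → ℕ := fun i => z (i + 1)

/-- `r(η)`: the position of the first record of `η` in `[1,∞)`. -/
noncomputable def rFirst (η : Cfg) : ℤ := sInf {x : ℤ | 1 ≤ x ∧ isRecord η x}

/-- The record-shift `θ̂ η = θ^{r(η)} η`. -/
noncomputable def thetaHat (η : Cfg) : Cfg := shiftBy (rFirst η) η

/-- The dynamics seen from a record, `T̂ η = θ^{ψ_η(0)} (Tη)` where `ψ_η(0)` is
the position of Record `0` of `Tξ` for the canonical lift `ξ = ξ°[η]`. -/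
noncomputable def That (η : Cfg) : Cfg := shiftBy (recPos (liftT (xi0 η)) 0) (bbsT η)

/-- The set `𝒳` of configurations with density in `(0,1/2)`. -/
def Xset : Set Cfg := {η | inX η}

/-- The set `𝒳̂` of configurations in `𝒳` having a record at the origin. -/
def XhatSet : Set Cfg := {η | inX η ∧ isRecord η 0}

/-- The `k`-component of a configuration (seen from its canonical lift `ξ°[η]`,
which for `η ∈ 𝒳̂` has Record `0` at the origin). -/
noncomputable def MkHat (η : Cfg) (k : ℕ) (i : ℤ) : ℕ := Mk η (xi0 η) k i

/-- `μ` is the inverse-Palm measure of `μ̂`: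
`μ(A) = μ̂(r)⁻¹ · ∫ Σ_{i=1}^{r(η)} 1_A(θ^i η) dμ̂`. -/
def PalmIdentity (muhat mu : MeasureTheory.Measure Cfg) : Prop :=
  ∀ A : Set Cfg, MeasurableSet A →
    mu A = (∫⁻ η, ((rFirst η).toNat : ENNReal) ∂muhat)⁻¹ *
      ∫⁻ η, ∑ i ∈ Finset.Icc (1 : ℤ) (rFirst η),
        A.indicator (fun _ => (1 : ENNReal)) (shiftBy i η) ∂muhat

/-- The number of `k`-solitons in the excursion of `η` between Records 0 and 1
(i.e. contained in `(0, r(η))`), for `η` with a record at the origin. -/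
noncomputable def excCount (η : Cfg) (k : ℕ) : ℕ :=
  Set.ncard {γ | γ ∈ Gamma η k ∧ ∀ x ∈ γ, 0 < x ∧ x < rFirst η}

/-- `ρ_k`: the mean number of `k`-solitons per excursion, under
`μ̂ = μ( · | 0 ∈ Rη)`. -/
noncomputable def rhoK (mu : MeasureTheory.Measure Cfg) (k : ℕ) : ℝ :=
  ∫ η, (excCount η k : ℝ) ∂(ProbabilityTheory.cond mu XhatSet)

/-- `w_0 = 1 + Σ_k 2k ρ_k`: the mean excursion length. -/
noncomputable def w0of (mu : MeasureTheory.Measure Cfg) : ℝ :=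
  1 + ∑' k : ℕ, 2 * (k : ℝ) * rhoK mu k

/-- `ρ̄_k = ρ_k / w_0`: the mean number of `k`-solitons per site. -/
noncomputable def rhoBar (mu : MeasureTheory.Measure Cfg) (k : ℕ) : ℝ :=
  rhoK mu k / w0of mu

/-- The leftmost site of a soliton. -/
noncomputable def leftmost (γ : Finset ℤ) : ℤ := sInf (γ : Set ℤ)

/-!
Scanning a configuration once from left to right, the Takahashi–Satsuma algorithm becomes a carrier
with numbered seats: the site `x` uses seat `seat η x` (`0` exactly at the records), a ball takes an
empty seat and an empty box releases an occupied one. In these terms a `k`-soliton is a ball on each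
of the seats `1, …, k` together with the `k` empty boxes releasing them, and `T` exchanges the two
occupation states of every seat, so that tails become heads.

For each `k`, the indicator of the sites that are records or use a seat above `k` obeys a discrete
conservation law along the dynamics, and so do the balls of seat `m` minus those of seat `m + 1`,
which count the `m`-solitons up to a coboundary. A tagged `k`-soliton keeps its slot up to a bounded
error, so it moves along a level line of the height function of the first law. By the maximal
ergodic inequality the height grows linearly in space and in time, and `v_k` is the ratio of the
mean current to the mean density. For the second law the mean current is `ρ̄_m v_m`; expressing the
means of the first law through those of the second and summing by parts gives the speed equations.
-/

/-! ### The one-pass form of the Takahashi–Satsuma algorithm -/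

/-- A letter of a word: a site together with the content of its box. -/
abbrev Letter := ℤ × Bool

/-- The state of the one-pass Takahashi–Satsuma algorithm: the runs still waiting to be matched,
the most recent run first, and in each run the most recent letter first. -/
abbrev RunStack := List (List Letter)

lemma runsOf_cons_eq (a : Letter) (l : List Letter) :
    ∃ r rs, runsOf (a :: l) = (a :: r) :: rs := by
  rw [runsOf]
  split
  · exact ⟨[], [], rfl⟩
  · split_ifs
    · exact ⟨_, _, rfl⟩
    · exact ⟨[], _, rfl⟩

lemma runsOf_const_append {b : Bool} {r : List Letter} (hne : r ≠ []) (hb : ∀ a ∈ r, a.2 = b)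
    (l : List Letter) : ∃ l' rs, runsOf (r ++ l) = (r ++ l') :: rs := by
  induction r with
  | nil => exact absurd rfl hne
  | cons a r ih =>
    cases r with
    | nil => exact runsOf_cons_eq a l
    | cons a' r =>
      obtain ⟨l', rs, h⟩ := ih (by simp) fun x hx => hb x (List.mem_cons_of_mem _ hx)
      refine ⟨l', rs, ?_⟩
      rw [List.cons_append, runsOf, h]
      simp [hb a (by simp), hb a' (by simp)]

lemma runsOf_const_append_of_head_ne {b : Bool} {r : List Letter} (hne : r ≠ [])
    (hb : ∀ a ∈ r, a.2 = b) {l : List Letter} (hl : ∀ a ∈ l.head?, a.2 ≠ b) :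
    runsOf (r ++ l) = r :: runsOf l := by
  induction r with
  | nil => exact absurd rfl hne
  | cons a r ih =>
    have ha : a.2 = b := hb a (by simp)
    cases r with
    | nil =>
      cases l with
      | nil => simp [runsOf]
      | cons x l =>
        obtain ⟨r, rs, h⟩ := runsOf_cons_eq x l
        have hx : x.2 ≠ b := hl x (by simp)
        rw [List.singleton_append, runsOf, h]
        simp [ha, hx]
    | cons a' r =>
      have h := ih (by simp) fun x hx => hb x (List.mem_cons_of_mem _ hx)
      rw [List.cons_append, runsOf, h]
      simp [ha, hb a' (by simp)]

lemma filter_notMem_map_of_nodup {α β : Type*} [DecidableEq β] (f : α → β) {l₁ s l₂ : List α}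
    (hd : ((l₁ ++ (s ++ l₂)).map f).Nodup) :
    (l₁ ++ (s ++ l₂)).filter (fun a => !(s.map f).contains (f a)) = l₁ ++ l₂ := by
  simp only [List.map_append, List.nodup_append, List.mem_append] at hd
  obtain ⟨-, ⟨-, -, hs₂⟩, h₁⟩ := hd
  have keep₁ : l₁.filter (fun a => !(s.map f).contains (f a)) = l₁ :=
    List.filter_eq_self.2 fun a ha => by
      simpa using fun b hb hab => h₁ _ (List.mem_map_of_mem ha) _ (.inl (List.mem_map_of_mem hb))
        hab.symm
  have keep₂ : l₂.filter (fun a => !(s.map f).contains (f a)) = l₂ :=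
    List.filter_eq_self.2 fun a ha => by
      simpa using fun b hb hab => hs₂ _ (List.mem_map_of_mem hb) _ (List.mem_map_of_mem ha) hab
  have drop : s.filter (fun a => !(s.map f).contains (f a)) = [] :=
    List.filter_eq_nil_iff.2 fun a ha => by simpa using ⟨a, ha, rfl⟩
  rw [List.filter_append, List.filter_append, keep₁, keep₂, drop, List.nil_append]

namespace RunStack

/-- The bit of the letters of the top run. The runs alternate and the bottom one consists of
balls, so the bit is the parity of the number of runs; it is `false` for the empty stack. -/
def topBit (st : RunStack) : Bool := st.length.bodd

/-- Reading a letter extends the top run or opens a new one. The result is the run containing the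
letter and the runs below it; a record (an empty box read on the empty stack) gives `([], [])`. -/
def push : RunStack → Letter → List Letter × RunStack
  | [], a => if a.2 then ([a], []) else ([], [])
  | r :: s, a => if a.2 = topBit (r :: s) then (a :: r, s) else ([a], r :: s)

/-- After a letter has been read, a top run as long as the run below it forms a soliton with that
run, and both are removed. -/
def settle : List Letter × RunStack → RunStack
  | (c, []) => if c = [] then [] else [c]
  | (c, r :: s) => if r.length = c.length then s else c :: r :: s

/-- The soliton removed by `RunStack.settle`, if any. -/
def completed : List Letter × RunStack → Option (List Letter)
  | (_, []) => none
  | (c, r :: _) => if r.length = c.length then some (r.reverse ++ c.reverse) else none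

/-- The transition of the one-pass algorithm. -/
def step (st : RunStack) (a : Letter) : RunStack := settle (push st a)

/-- The solitons completed while reading a word. -/
def emissions (st : RunStack) : List Letter → List (List Letter)
  | [] => []
  | a :: q => (completed (push st a)).toList ++ emissions (step st a) q

/-- The letter `a` read on the stack `st` is not a record. -/
def Admits (st : RunStack) (a : Letter) : Prop := st = [] → a.2 = true

/-- No letter of the word is a record when the word is read from the stack `st`. -/
def AdmitsWord (st : RunStack) : List Letter → Prop
  | [] => True
  | a :: q => st.Admits a ∧ AdmitsWord (step st a) q

/-- The invariant of the one-pass algorithm: the runs alternate and their lengths strictly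
decrease from the bottom to the top. -/
def Valid : RunStack → Prop
  | [] => True
  | r :: s => r ≠ [] ∧ (∀ a ∈ r, a.2 = !topBit s) ∧ (∀ r' ∈ s, r.length < r'.length) ∧ Valid s

/-- The invariant between `RunStack.push` and `RunStack.settle`: the top run may be as long as the
run below it. -/
structure IsPending (p : List Letter × RunStack) : Prop where
  ne_nil : p.1 ≠ []
  bit : ∀ b ∈ p.1, b.2 = !topBit p.2
  length_le : ∀ r ∈ p.2, p.1.length ≤ r.length
  valid : Valid p.2

/-- The letters on the stack in the order in which they were read. -/
def word : RunStack → List Letter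
  | [] => []
  | r :: s => word s ++ r.reverse

variable {st : RunStack} {a : Letter}

@[simp] lemma topBit_nil : topBit [] = false := rfl

@[simp] lemma topBit_cons (r : List Letter) (s : RunStack) : topBit (r :: s) = !topBit s := by
  simp [topBit]

lemma push_nil_of_false {x : ℤ} : push [] (x, false) = ([], []) := rfl

lemma step_nil_of_false {x : ℤ} : step [] (x, false) = [] := rfl

lemma not_admits_iff : ¬ st.Admits a ↔ st = [] ∧ a.2 = false := by
  simp [Admits]

lemma push_cases (h : st.Admits a) :
    (a.2 = !topBit st ∧ push st a = ([a], st)) ∨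
      ∃ r s, st = r :: s ∧ a.2 = !topBit s ∧ push st a = (a :: r, s) := by
  cases st with
  | nil => simp [push, h rfl]
  | cons r s =>
    by_cases hb : a.2 = topBit (r :: s)
    · exact .inr ⟨r, s, rfl, by simpa using hb, by simp only [push, hb, if_true]⟩
    · exact .inl ⟨Bool.eq_not.2 hb, by simp only [push, hb, if_false]⟩

lemma isPending_push (hv : Valid st) (h : st.Admits a) : IsPending (push st a) := by
  rcases push_cases h with ⟨hb, e⟩ | ⟨r, s, rfl, hb, e⟩ <;> rw [e]
  · refine ⟨by simp, by simpa using hb, fun r hr => ?_, hv⟩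
    cases st with
    | nil => simp at hr
    | cons r' s =>
      have hpos := List.length_pos_iff.2 hv.1
      rcases List.mem_cons.1 hr with rfl | hr
      · exact hpos
      · exact hpos.trans (hv.2.2.1 r hr)
  · obtain ⟨-, hbit, hlt, hs⟩ := hv
    exact ⟨by simp, by simpa [hb] using hbit, fun r' hr' => by simpa using hlt r' hr', hs⟩

lemma word_push (h : st.Admits a) :
    word (push st a).2 ++ (push st a).1.reverse = word st ++ [a] := by
  rcases push_cases h with ⟨-, e⟩ | ⟨r, s, rfl, -, e⟩ <;> simp [e, word]

lemma IsPending.settle_cases {p : List Letter × RunStack} (h : IsPending p) :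
    (completed p = none ∧ settle p = p.1 :: p.2 ∧ ∀ r ∈ p.2, p.1.length < r.length) ∨
      ∃ r s, p.2 = r :: s ∧ r.length = p.1.length ∧
        completed p = some (r.reverse ++ p.1.reverse) ∧ settle p = s := by
  obtain ⟨c, s⟩ := p
  cases s with
  | nil => simp [completed, settle, h.ne_nil]
  | cons r s =>
    by_cases hl : r.length = c.length
    · exact .inr ⟨r, s, rfl, hl, by simp [completed, hl], by simp [settle, hl]⟩
    · refine .inl ⟨by simp [completed, hl], by simp [settle, hl], fun r' hr' => ?_⟩
      have hlt : c.length < r.length := (h.length_le r (by simp)).lt_of_ne' hl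
      rcases List.mem_cons.1 hr' with rfl | hr'
      · exact hlt
      · exact hlt.trans (h.valid.2.2.1 r' hr')

lemma IsPending.valid_settle {p : List Letter × RunStack} (h : IsPending p) :
    Valid (settle p) := by
  rcases h.settle_cases with ⟨-, e, hlt⟩ | ⟨r, s, hp, -, -, e⟩ <;> rw [e]
  · exact ⟨h.ne_nil, h.bit, hlt, h.valid⟩
  · have := h.valid
    rw [hp] at this
    exact this.2.2.2

lemma Valid.step (hv : Valid st) (a : Letter) : Valid (step st a) := by
  by_cases h : st.Admits a
  · exact (isPending_push hv h).valid_settle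
  · obtain ⟨rfl, hb⟩ := not_admits_iff.1 h
    simp [RunStack.step, push, hb, settle, Valid]

lemma runsOf_word_append (hv : Valid st) {l : List Letter}
    (hl : ∀ a ∈ l.head?, a.2 ≠ topBit st) :
    runsOf (word st ++ l) = (st.map List.reverse).reverse ++ runsOf l := by
  induction st generalizing l with
  | nil => simp [word]
  | cons r s ih =>
    obtain ⟨hne, hbit, -, hs⟩ := hv
    have hhead : ∀ a ∈ (r.reverse ++ l).head?, a.2 ≠ topBit s := fun a ha => by
      have : a ∈ r := by
        rw [List.head?_append_of_ne_nil _ (by simpa using hne)] at ha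
        simpa using List.mem_of_mem_head? ha
      simp [hbit a this]
    rw [word, List.append_assoc, ih hs hhead,
      runsOf_const_append_of_head_ne (b := topBit (r :: s)) (by simpa using hne)
        (by simpa using hbit) hl]
    simp

lemma findSoliton_skip (hv : Valid st) {x : List Letter} {rest : List (List Letter)}
    (hx : ∀ r ∈ st, x.length < r.length) :
    findSoliton ((st.map List.reverse).reverse ++ x :: rest) = findSoliton (x :: rest) := by
  induction st generalizing x rest with
  | nil => simp
  | cons r s ih =>
    obtain ⟨-, -, hlt, hs⟩ := hv
    have hr : ¬ r.reverse.length ≤ x.length := by simpa using hx r (by simp)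
    have := ih hs (x := r.reverse) (rest := x :: rest) (by simpa using hlt)
    rw [List.map_cons, List.reverse_cons, List.append_assoc, List.singleton_append, this,
      findSoliton, if_neg hr]

lemma findSoliton_word (hv : Valid st) : findSoliton (runsOf (word st)) = none := by
  have h := runsOf_word_append hv (l := []) (by simp)
  rw [List.append_nil] at h
  rw [h]
  cases st with
  | nil => rfl
  | cons r s =>
    have := findSoliton_skip hv.2.2.2 (x := r.reverse) (rest := []) (by simpa using hv.2.2.1)
    simpa [runsOf, findSoliton] using this

lemma IsPending.findSoliton_word_append {c r : List Letter} {s : RunStack}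
    (h : IsPending (c, r :: s)) (hl : r.length = c.length) (q : List Letter) :
    findSoliton (runsOf (word (r :: s) ++ (c.reverse ++ q))) = some (r.reverse ++ c.reverse) := by
  have hhead : ∀ a ∈ (c.reverse ++ q).head?, a.2 ≠ topBit (r :: s) := fun a ha => by
    have hc : a ∈ c := by
      rw [List.head?_append_of_ne_nil _ (by simpa using h.ne_nil)] at ha
      simpa using List.mem_of_mem_head? ha
    simp [h.bit a hc]
  obtain ⟨l, rs, hruns⟩ := runsOf_const_append (r := c.reverse) (by simpa using h.ne_nil)
    (by simpa using h.bit) q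
  have skip := findSoliton_skip h.valid.2.2.2 (x := r.reverse) (rest := (c.reverse ++ l) :: rs)
    (by simpa using h.valid.2.2.1)
  rw [runsOf_word_append h.valid hhead, hruns, List.map_cons, List.reverse_cons,
    List.append_assoc, List.singleton_append, skip, findSoliton, if_pos (by simp [hl]),
    List.take_left' (by simp [hl])]

lemma tsAux_succ_append {l₁ s l₂ : List Letter}
    (hd : ((l₁ ++ (s ++ l₂)).map Prod.fst).Nodup)
    (hfind : findSoliton (runsOf (l₁ ++ (s ++ l₂))) = some s) (n : ℕ) :
    tsAux (n + 1) (l₁ ++ (s ++ l₂)) = s :: tsAux n (l₁ ++ l₂) := by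
  rw [tsAux, hfind]
  simp only
  rw [filter_notMem_map_of_nodup Prod.fst hd]

theorem tsAux_word_append (q : List Letter) : ∀ {st : RunStack} {fuel : ℕ}, Valid st →
    st.AdmitsWord q → ((word st ++ q).map Prod.fst).Nodup → (word st ++ q).length ≤ fuel →
    tsAux fuel (word st ++ q) = st.emissions q := by
  induction q with
  | nil =>
    intro st fuel hv _ _ _
    cases fuel with
    | zero => rfl
    | succ n => simp [tsAux, findSoliton_word hv, emissions]
  | cons a q ih =>
    rintro st fuel hv ⟨hadm, hq⟩ hd hf
    have hp := isPending_push hv hadm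
    have hword : word st ++ a :: q = word (push st a).2 ++ ((push st a).1.reverse ++ q) := by
      rw [← List.append_assoc, word_push hadm, List.append_assoc, List.singleton_append]
    rcases hp.settle_cases with ⟨hnone, hset, -⟩ | ⟨r, s, hrest, hl, hsome, hset⟩
    · have hstep : word st ++ a :: q = word (step st a) ++ q := by
        rw [hword, step, hset, word, List.append_assoc]
      rw [hstep] at hd hf ⊢
      simpa [emissions, hnone] using ih (hv.step a) hq hd hf
    · set c := (push st a).1
      have hpair : push st a = (c, r :: s) := Prod.ext rfl hrest
      have hstep : step st a = s := hset
      have hsol : word st ++ a :: q = word s ++ ((r.reverse ++ c.reverse) ++ q) := by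
        simp [hword, hrest, word]
      rw [hpair] at hp
      have hfind := hp.findSoliton_word_append hl q
      rw [show word (r :: s) ++ (c.reverse ++ q) = word st ++ a :: q by rw [hword, hrest]] at hfind
      have hrpos := List.length_pos_iff.2 hp.valid.1
      rw [hsol] at hd hf hfind ⊢
      cases fuel with
      | zero => simp [hp.ne_nil] at hf
      | succ n =>
        have hd' : ((word s ++ q).map Prod.fst).Nodup :=
          hd.sublist (((List.sublist_append_right _ _).append_left _).map _)
        have hf' : (word s ++ q).length ≤ n := by
          simp only [List.length_append, List.length_reverse] at hf ⊢
          omega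
        rw [tsAux_succ_append hd hfind, ih (hstep ▸ hv.step a) (hstep ▸ hq) hd' hf', emissions,
          hsome, hstep]
        rfl

end RunStack

/-! ### Records and the stack at a site -/

lemma isLift_xi0 (η : Cfg) : IsLift η (xi0 η) := by
  intro x
  rcases lt_trichotomy x 0 with h | rfl | h
  · have : Icc (x - 1 + 1) 0 = insert x (Icc (x + 1) 0) := by
      ext y
      simp only [Finset.mem_Icc, Finset.mem_insert]
      omega
    rw [xi0, xi0, if_neg (by omega), if_neg (by omega), this, sum_insert (by simp)]
    ring
  · simp [xi0]
  · have : Icc 1 x = insert x (Icc 1 (x - 1)) := by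
      ext y
      simp only [Finset.mem_Icc, Finset.mem_insert]
      omega
    rw [xi0, xi0, if_pos (by omega), if_pos (by omega), this, sum_insert (by simp)]
    ring

namespace IsLift

variable {η : Cfg} {ξ : ℤ → ℤ}

lemma apply_succ (h : IsLift η ξ) (x : ℤ) : ξ (x + 1) = ξ x + (2 * valZ (η (x + 1)) - 1) := by
  have := h (x + 1)
  rw [add_sub_cancel_right] at this
  linarith

lemma sum_Icc (h : IsLift η ξ) {z x : ℤ} (hzx : z - 1 ≤ x) :
    ∑ y ∈ Icc z x, (2 * valZ (η y) - 1) = ξ x - ξ (z - 1) := by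
  induction x, hzx using Int.leInduction with
  | base => simp
  | succ x hx ih =>
    have : Icc z (x + 1) = insert (x + 1) (Icc z x) := by
      ext y
      simp only [Finset.mem_Icc, Finset.mem_insert]
      omega
    rw [this, sum_insert (by simp), ih, h.apply_succ]
    ring

lemma isRecord_iff (h : IsLift η ξ) {x : ℤ} : isRecord η x ↔ ∀ z < x, ξ x < ξ z := by
  have key : ∀ z ≤ x, ((∑ y ∈ Icc z x, valZ (η y)) < ∑ y ∈ Icc z x, (1 - valZ (η y))) ↔
      ξ x < ξ (z - 1) := fun z hz => by
    have hsum := h.sum_Icc (z := z) (x := x) (by omega)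
    have hsplit : ∑ y ∈ Icc z x, (2 * valZ (η y) - 1) =
        (∑ y ∈ Icc z x, valZ (η y)) - ∑ y ∈ Icc z x, (1 - valZ (η y)) := by
      rw [← sum_sub_distrib]
      exact sum_congr rfl fun _ _ => by ring
    constructor <;> intro <;> linarith
  exact ⟨fun hr z hz => by simpa using (key (z + 1) (by omega)).1 (hr (z + 1) (by omega)),
    fun hr z hz => (key z hz).2 (hr (z - 1) (by omega))⟩

end IsLift

/-- Records occur arbitrarily far to the left and to the right, so that every site lies in a
finite excursion or is a record. -/
def HasRecords (η : Cfg) : Prop := ∀ x : ℤ, (∃ y ≤ x, isRecord η y) ∧ (∃ y ≥ x, isRecord η y)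

/-- Records occur arbitrarily far in both directions at all times of the box-ball dynamics. -/
def AlwaysHasRecords (η : Cfg) : Prop := ∀ t : ℕ, HasRecords (bbsT^[t] η)

namespace AlwaysHasRecords

variable {η : Cfg} (hη : AlwaysHasRecords η)
include hη

lemma hasRecords : HasRecords η := hη 0

lemma iterate (t : ℕ) : AlwaysHasRecords (bbsT^[t] η) := fun s => by
  rw [← Function.iterate_add_apply]
  exact hη (s + t)

lemma next : AlwaysHasRecords (bbsT η) := hη.iterate 1

end AlwaysHasRecords

lemma HasRecords.induction {η : Cfg} (hη : HasRecords η) {P : ℤ → Prop}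
    (record : ∀ x, isRecord η x → P x) (step : ∀ x, P (x - 1) → P x) (x : ℤ) : P x := by
  obtain ⟨y, hy, hr⟩ := (hη x).1
  induction x, hy using Int.leInduction with
  | base => exact record y hr
  | succ x _ ih => exact step _ (by simpa using ih)

lemma HasRecords.exists_last_record {η : Cfg} (hη : HasRecords η) (x : ℤ) :
    ∃ (y : ℤ) (n : ℕ), x = y + n ∧ isRecord η y ∧ ∀ z ∈ Set.Ioc y (y + n), ¬ isRecord η z := by
  induction x using hη.induction with
  | record x hx => exact ⟨x, 0, by simp, hx, by simp⟩
  | step x ih =>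
    obtain ⟨y, n, hx, hy, hn⟩ := ih
    by_cases hr : isRecord η x
    · exact ⟨x, 0, by simp, hr, by simp⟩
    · refine ⟨y, n + 1, by push_cast; omega, hy, fun z hz => ?_⟩
      obtain ⟨h1, h2⟩ := Set.mem_Ioc.1 hz
      rcases eq_or_ne z x with rfl | hne
      · exact hr
      · exact hn z ⟨h1, by push_cast at h2; omega⟩

namespace RunStack

/-- The number of balls minus the number of empty boxes on the stack. -/
def height : RunStack → ℤ
  | [] => 0
  | r :: s => height s + if topBit s then -(r.length : ℤ) else r.length

variable {st : RunStack} {a : Letter}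

lemma Valid.height_bounds (hv : Valid st) :
    (st.topBit = true → ∀ r ∈ st.head?, (r.length : ℤ) ≤ height st) ∧
      (st ≠ [] → 1 ≤ height st) := by
  induction st with
  | nil => simp
  | cons r s ih =>
    obtain ⟨hne, -, hlt, hs⟩ := hv
    obtain ⟨top_le, one_le⟩ := ih hs
    have hpos : 1 ≤ r.length := List.length_pos_iff.2 hne
    cases s with
    | nil => simpa [height] using hpos
    | cons r' s =>
      have hr' : r.length < r'.length := hlt r' (by simp)
      have hs1 := one_le (by simp)
      cases hb : topBit (r' :: s) with
      | true =>
        have := top_le hb r' (by simp)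
        simp only [topBit_cons r, height.eq_2 r, hb]
        exact ⟨by simp, fun _ => by simp; omega⟩
      | false =>
        simp only [topBit_cons r, height.eq_2 r, hb]
        exact ⟨by simpa using by omega, fun _ => by simp; omega⟩

lemma Valid.height_nonneg (hv : Valid st) : 0 ≤ height st := by
  rcases eq_or_ne st [] with rfl | h
  · rfl
  · exact zero_le_one.trans (hv.height_bounds.2 h)

lemma IsPending.height_settle {p : List Letter × RunStack} (h : IsPending p) :
    height (settle p) = height (p.1 :: p.2) := by
  rcases h.settle_cases with ⟨-, e, -⟩ | ⟨r, s, hp, hl, -, e⟩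
  · rw [e]
  · rw [e, hp, height, height, topBit_cons, hl]
    cases topBit s <;> simp

lemma height_push (h : st.Admits a) :
    height ((push st a).1 :: (push st a).2) = height st + (2 * valZ a.2 - 1) := by
  rcases push_cases h with ⟨hb, e⟩ | ⟨r, s, rfl, hb, e⟩ <;> rw [e, hb]
  · cases ht : topBit st <;> simp [height, ht, valZ]
  · cases ht : topBit s <;> simp [height, ht, valZ] <;> ring

lemma height_step (hv : Valid st) (h : st.Admits a) :
    height (step st a) = height st + (2 * valZ a.2 - 1) :=
  (isPending_push hv h).height_settle.trans (height_push h)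

end RunStack

/-- The stack reached from the empty stack by reading the sites `y + 1, …, y + n`. -/
def stackFrom (η : Cfg) (y : ℤ) : ℕ → RunStack
  | 0 => []
  | n + 1 => (stackFrom η y n).step (y + n + 1, η (y + n + 1))

open Classical in
/-- The stack after reading site `x`, started empty from the last record up to `x`. -/
noncomputable def stackAt (η : Cfg) (x : ℤ) : RunStack :=
  if h : ∃ n : ℕ, isRecord η (x - n) then stackFrom η (x - Nat.find h) (Nat.find h) else []

section Stack

variable {η : Cfg} {x y : ℤ} {n : ℕ}

lemma valid_stackFrom (η : Cfg) (y : ℤ) (n : ℕ) : (stackFrom η y n).Valid := by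
  induction n with
  | zero => trivial
  | succ n ih => exact ih.step _

lemma valid_stackAt (η : Cfg) (x : ℤ) : (stackAt η x).Valid := by
  unfold stackAt
  split_ifs
  · exact valid_stackFrom _ _ _
  · trivial

lemma isRecord_of_stackFrom_eq_nil (hy : isRecord η y)
    (hh : ∀ m ≤ n, (stackFrom η y m).height = xi0 η (y + m) - xi0 η y)
    (hnil : stackFrom η y n = []) (hη : η (y + n + 1) = false) : isRecord η (y + n + 1) := by
  rw [(isLift_xi0 η).isRecord_iff] at hy ⊢
  have hstep := (isLift_xi0 η).apply_succ (y + n)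
  have hn : (0 : ℤ) = xi0 η (y + n) - xi0 η y := by simpa [hnil, RunStack.height] using hh n le_rfl
  simp only [hη, valZ] at hstep
  intro z hz
  rcases lt_or_ge z y with h | h
  · have := hy z h
    simp at hstep
    omega
  · obtain ⟨m, rfl⟩ := Int.exists_add_of_le h
    have hm := hh m (by omega)
    have := (valid_stackFrom η y m).height_nonneg
    simp at hstep
    omega

lemma height_stackFrom (hy : isRecord η y) (hn : ∀ z ∈ Set.Ioc y (y + n), ¬ isRecord η z) :
    ∀ m ≤ n, (stackFrom η y m).height = xi0 η (y + m) - xi0 η y := by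
  induction n with
  | zero =>
    intro m hm
    simp [Nat.le_zero.1 hm, stackFrom, RunStack.height]
  | succ n ih =>
    have ih := ih fun z hz => hn z ⟨hz.1, by push_cast; linarith [hz.2]⟩
    intro m hm
    rcases hm.lt_or_eq with h | rfl
    · exact ih m (by omega)
    have hadm : (stackFrom η y n).Admits (y + n + 1, η (y + n + 1)) := fun hnil => by
      by_contra hb
      exact hn _ ⟨by omega, by push_cast; omega⟩
        (isRecord_of_stackFrom_eq_nil hy ih hnil (by simpa using hb))
    have := (isLift_xi0 η).apply_succ (y + n)
    rw [stackFrom, RunStack.height_step (valid_stackFrom η y n) hadm, ih n le_rfl]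
    push_cast
    rw [← add_assoc]
    linarith

lemma stackAt_eq_stackFrom (hy : isRecord η y) (hn : ∀ z ∈ Set.Ioc y (y + n), ¬ isRecord η z) :
    stackAt η (y + n) = stackFrom η y n := by
  classical
  have h : ∃ m : ℕ, isRecord η (y + n - m) := ⟨n, by simpa using hy⟩
  have hfind : Nat.find h = n := by
    rw [Nat.find_eq_iff]
    refine ⟨by simpa using hy, fun m hm hr => hn _ ?_ hr⟩
    constructor <;> omega
  have hcongr : ∀ m, m = n → stackFrom η (y + n - m) m = stackFrom η y n := by
    rintro m rfl
    simp
  rw [stackAt, dif_pos (by convert h)]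
  exact hcongr _ (by convert hfind)

lemma stackAt_of_isRecord (h : isRecord η x) : stackAt η x = [] := by
  simpa [stackFrom] using stackAt_eq_stackFrom (n := 0) h (by simp)

namespace HasRecords

variable (hη : HasRecords η)
include hη

lemma isRecord_iff_stackAt : isRecord η x ↔ stackAt η (x - 1) = [] ∧ η x = false := by
  obtain ⟨y, n, hx, hy, hn⟩ := hη.exists_last_record (x - 1)
  obtain rfl : x = y + n + 1 := by omega
  rw [hx, stackAt_eq_stackFrom hy hn]
  have hh := height_stackFrom hy hn
  refine ⟨fun hr => ?_, fun ⟨hnil, hb⟩ => isRecord_of_stackFrom_eq_nil hy hh hnil hb⟩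
  have hlt := (isLift_xi0 η).isRecord_iff.1 hr y (by omega)
  have hstep := (isLift_xi0 η).apply_succ (y + n)
  have hn := hh n le_rfl
  have hv := valid_stackFrom η y n
  have hb : η (y + n + 1) = false := by
    by_contra hb
    have := hv.height_nonneg
    simp [Bool.eq_true_of_not_eq_false hb, valZ] at hstep
    omega
  refine ⟨?_, hb⟩
  by_contra hne
  have := hv.height_bounds.2 hne
  simp [hb, valZ] at hstep
  omega

lemma admits_iff : (stackAt η (x - 1)).Admits (x, η x) ↔ ¬ isRecord η x := by
  rw [hη.isRecord_iff_stackAt, ← not_iff_not, not_not]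
  exact RunStack.not_admits_iff

lemma stackAt_eq_step (x : ℤ) : stackAt η x = (stackAt η (x - 1)).step (x, η x) := by
  by_cases hr : isRecord η x
  · obtain ⟨hnil, hb⟩ := hη.isRecord_iff_stackAt.1 hr
    rw [stackAt_of_isRecord hr, hnil, hb, RunStack.step_nil_of_false]
  · obtain ⟨y, n, hx, hy, hn⟩ := hη.exists_last_record (x - 1)
    obtain rfl : x = y + n + 1 := by omega
    have h := stackAt_eq_stackFrom (n := n + 1) hy fun z hz => by
      rcases eq_or_ne z (y + n + 1) with rfl | hne
      · exact hr
      · obtain ⟨h1, h2⟩ := Set.mem_Ioc.1 hz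
        exact hn z ⟨h1, by push_cast at h2; omega⟩
    push_cast at h
    rw [hx, stackAt_eq_stackFrom hy hn, add_assoc, h, ← add_assoc, stackFrom]

end HasRecords

end Stack

/-! ### Seats and the carrier -/

namespace RunStack

/-- Whether seat `j` of the carrier is occupied when the algorithm is in the state `st`: the number
of runs of length at least `j` is odd. Seats are numbered from `1`; seat `0` holds the parity of
the number of runs. -/
def occupied : RunStack → ℕ → Bool
  | [], _ => false
  | r :: s, j => xor (decide (j ≤ r.length)) (occupied s j)

variable {st : RunStack} {a : Letter} {p : List Letter × RunStack} {i : ℕ}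

lemma occupied_of_forall_le (h : ∀ r ∈ st, i ≤ r.length) : occupied st i = topBit st := by
  induction st with
  | nil => rfl
  | cons r s ih =>
    rw [occupied, ih fun r' hr' => h r' (List.mem_cons_of_mem _ hr'), topBit_cons]
    simp [h r (by simp)]

lemma exists_forall_ge_occupied_eq_false (st : RunStack) :
    ∃ N, ∀ n ≥ N, occupied st n = false := by
  induction st with
  | nil => exact ⟨0, fun _ _ => rfl⟩
  | cons r s ih =>
    obtain ⟨N, hN⟩ := ih
    refine ⟨max N (r.length + 1), fun n hn => ?_⟩
    have : ¬ n ≤ r.length := by omega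
    simp [occupied, hN n (by omega), this]

lemma IsPending.occupied_settle (h : IsPending p) (i : ℕ) :
    occupied (settle p) i = xor (decide (i ≤ p.1.length)) (occupied p.2 i) := by
  rcases h.settle_cases with ⟨-, e, -⟩ | ⟨r, s, hp, hl, -, e⟩
  · rw [e, occupied]
  · rw [e, hp, occupied, hl, ← Bool.xor_assoc, Bool.xor_self, Bool.false_xor]

lemma IsPending.isSome_completed (h : IsPending p) :
    (completed p).isSome ↔ occupied (settle p) (p.1.length + 1) = !topBit p.2 := by
  rw [h.occupied_settle]
  rcases h.settle_cases with ⟨hnone, -, hlt⟩ | ⟨r, s, hp, hl, hsome, -⟩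
  · rw [hnone, occupied_of_forall_le hlt]
    simp
  · have hv := h.valid
    rw [hp] at hv
    rw [hsome, hp, occupied, occupied_of_forall_le fun r' hr' => hl ▸ hv.2.2.1 r' hr', hl]
    simp

lemma bit_eq_not_topBit (h : st.Admits a) : a.2 = !topBit (push st a).2 := by
  rcases push_cases h with ⟨hb, e⟩ | ⟨r, s, rfl, hb, e⟩ <;> rw [hb, e]

section Step

variable (hv : Valid st) (h : st.Admits a)
include hv h

lemma one_le_length_push : 1 ≤ (push st a).1.length :=
  List.length_pos_iff.2 (isPending_push hv h).ne_nil

lemma occupied_push_snd (hi : i ≤ (push st a).1.length) : occupied (push st a).2 i = !a.2 := by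
  rw [occupied_of_forall_le fun r hr => hi.trans ((isPending_push hv h).length_le r hr),
    bit_eq_not_topBit h, Bool.not_not]

lemma occupied_step_of_le (hi : i ≤ (push st a).1.length) : occupied (step st a) i = a.2 := by
  rw [step, (isPending_push hv h).occupied_settle, occupied_push_snd hv h hi]
  simp [hi]

lemma occupied_length_push : occupied st (push st a).1.length = !a.2 := by
  have hrest := occupied_push_snd hv h le_rfl
  rcases push_cases h with ⟨-, e⟩ | ⟨r, s, rfl, -, e⟩ <;> rw [e] at hrest ⊢
  · exact hrest
  · rw [occupied, hrest]
    simp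

lemma occupied_step_of_ne (hi : 1 ≤ i) (hne : i ≠ (push st a).1.length) :
    occupied (step st a) i = occupied st i := by
  rw [step, (isPending_push hv h).occupied_settle]
  rcases push_cases h with ⟨-, e⟩ | ⟨r, s, rfl, -, e⟩ <;> rw [e] at hne ⊢ <;>
    simp only [List.length_cons, List.length_nil] at hne ⊢
  · simp [show ¬ i ≤ 0 + 1 by omega]
  · rw [occupied, decide_eq_decide.2 (show i ≤ r.length + 1 ↔ i ≤ r.length by omega)]

lemma isSome_completed_push : (completed (push st a)).isSome ↔
    occupied (step st a) (push st a).1.length =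
      occupied (step st a) ((push st a).1.length + 1) := by
  rw [occupied_step_of_le hv h le_rfl, step, (isPending_push hv h).isSome_completed,
    ← bit_eq_not_topBit h, eq_comm]

end Step

end RunStack

open RunStack

/-- The seat of the carrier used at site `x`, with the value `0` at records. It is the position of
`x` within the head or the tail of its soliton, counted from `1`. -/
noncomputable def seat (η : Cfg) (x : ℤ) : ℕ := (push (stackAt η (x - 1)) (x, η x)).1.length

/-- Whether seat `j` of the carrier is occupied just after site `x`. -/
noncomputable def carrier (η : Cfg) (x : ℤ) (j : ℕ) : Bool := (stackAt η x).occupied j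

/-- The soliton whose last site is `x`, if any. -/
noncomputable def completedAt (η : Cfg) (x : ℤ) : Option (List Letter) :=
  completed (push (stackAt η (x - 1)) (x, η x))

/-- The seat rules of the carrier, for arbitrary seat numbers `l` and carrier states `w`: a ball
takes the first vacant seat, an empty box vacates the first occupied seat, and a record is an empty
box at which the carrier is empty. -/
structure SeatRules (η : Cfg) (l : ℤ → ℕ) (w : ℤ → ℕ → Bool) : Prop where
  empty_of_record : ∀ x, l x = 0 → η x = false
  before_record : ∀ x, l x = 0 → ∀ i, w (x - 1) i = false
  after_record : ∀ x, l x = 0 → ∀ i, w x i = false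
  before_self : ∀ x, 1 ≤ l x → w (x - 1) (l x) = !η x
  after_of_le : ∀ x, 1 ≤ l x → ∀ i, i ≤ l x → w x i = η x
  after_of_ne : ∀ x i, 1 ≤ i → i ≠ l x → w x i = w (x - 1) i

namespace HasRecords

variable {η : Cfg} {x : ℤ} (hη : HasRecords η)
include hη

lemma seat_eq_zero_iff : seat η x = 0 ↔ isRecord η x := by
  constructor
  · intro h
    by_contra hr
    have : 1 ≤ seat η x := one_le_length_push (valid_stackAt η _) (hη.admits_iff.2 hr)
    omega
  · intro hr
    obtain ⟨hnil, hb⟩ := hη.isRecord_iff_stackAt.1 hr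
    rw [seat, hnil, hb, push_nil_of_false, List.length_nil]

lemma admits_of_one_le_seat (h : 1 ≤ seat η x) : (stackAt η (x - 1)).Admits (x, η x) :=
  hη.admits_iff.2 fun hr => by simp [hη.seat_eq_zero_iff.2 hr] at h

lemma seatRules : SeatRules η (seat η) (carrier η) where
  empty_of_record _ hx := (hη.isRecord_iff_stackAt.1 (hη.seat_eq_zero_iff.1 hx)).2
  before_record x hx i := by
    rw [carrier, (hη.isRecord_iff_stackAt.1 (hη.seat_eq_zero_iff.1 hx)).1, occupied]
  after_record x hx i := by
    rw [carrier, stackAt_of_isRecord (hη.seat_eq_zero_iff.1 hx), occupied]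
  before_self x hx := occupied_length_push (valid_stackAt η _) (hη.admits_of_one_le_seat hx)
  after_of_le x hx i hi := by
    rw [carrier, hη.stackAt_eq_step]
    exact occupied_step_of_le (valid_stackAt η _) (hη.admits_of_one_le_seat hx) hi
  after_of_ne x i hi hne := by
    rcases Nat.eq_zero_or_pos (seat η x) with h | h
    · have hr := hη.seat_eq_zero_iff.1 h
      rw [carrier, carrier, stackAt_of_isRecord hr, (hη.isRecord_iff_stackAt.1 hr).1]
    · rw [carrier, carrier, hη.stackAt_eq_step]
      exact occupied_step_of_ne (valid_stackAt η _) (hη.admits_of_one_le_seat h) hi hne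

lemma isSome_completedAt_iff : (completedAt η x).isSome ↔
    1 ≤ seat η x ∧ carrier η x (seat η x) = carrier η x (seat η x + 1) := by
  rcases Nat.eq_zero_or_pos (seat η x) with h | h
  · obtain ⟨hnil, hb⟩ := hη.isRecord_iff_stackAt.1 (hη.seat_eq_zero_iff.1 h)
    simp [h, completedAt, hnil, hb, push_nil_of_false, completed]
  · have := isSome_completed_push (valid_stackAt η _) (hη.admits_of_one_le_seat h)
    rw [← hη.stackAt_eq_step] at this
    exact this.trans (iff_and_self.2 fun _ => h)

end HasRecords

/-! ### Solitons as pairs of runs -/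

/-- The sites of `r`, listed from right to left, form a run of letters `b`: their seats are
`r.length, …, 1`, and between two of them there are only sites of lower seats and no record. -/
def IsRun (η : Cfg) (b : Bool) : List ℤ → Prop
  | [] => True
  | a :: r => η a = b ∧ seat η a = r.length + 1 ∧
      (∀ a' ∈ r.head?, a' < a ∧ ∀ z ∈ Set.Ioo a' a, 1 ≤ seat η z ∧ seat η z < r.length) ∧
      IsRun η b r

/-- `r` is a run of letters of `η` which is still on the stack after site `x`. -/
def IsOpenRun (η : Cfg) (x : ℤ) (r : List Letter) : Prop :=
  ∃ (b : Bool) (c : List ℤ), r = c.map (·, b) ∧ IsRun η b c ∧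
    ∀ a ∈ c.head?, a ≤ x ∧ ∀ z ∈ Set.Ioc a x, 1 ≤ seat η z ∧ seat η z < c.length

/-- `γ` is a `k`-soliton of `η` with last head site `u` and last tail site `d`: the union of a run
of `k` balls ending at `u` and a run of `k` empty boxes ending at `d`, completed at the later of
these two sites. -/
def IsSoliton (η : Cfg) (k : ℕ) (γ : Finset ℤ) (u d : ℤ) : Prop :=
  ∃ h t : List ℤ, IsRun η true (u :: h) ∧ IsRun η false (d :: t) ∧ h.length + 1 = k ∧
    t.length + 1 = k ∧ γ = (u :: h).toFinset ∪ (d :: t).toFinset ∧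
    (∀ z ∈ Set.Ioo (min u d) (max u d), 1 ≤ seat η z ∧ seat η z < k) ∧
    carrier η (max u d) k = carrier η (max u d) (k + 1)

section OpenRuns

variable {η : Cfg} {x : ℤ} {r : List Letter} {s : List Letter}

lemma exists_isRun_push (hadm : (stackAt η (x - 1)).Admits (x, η x))
    (hopen : ∀ r ∈ stackAt η (x - 1), IsOpenRun η (x - 1) r) :
    ∃ c, (push (stackAt η (x - 1)) (x, η x)).1 = (x :: c).map (·, η x) ∧
      IsRun η (η x) (x :: c) := by
  have hseat : seat η x = (push (stackAt η (x - 1)) (x, η x)).1.length := rfl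
  have hv := valid_stackAt η (x - 1)
  rcases push_cases hadm with ⟨-, e⟩ | ⟨r, s, hst, hb, e⟩ <;> rw [e] at hseat ⊢
  · exact ⟨[], rfl, rfl, hseat, by simp, trivial⟩
  · rw [hst] at hopen hv
    obtain ⟨b, c, rfl, hc, hlast⟩ := hopen _ List.mem_cons_self
    obtain ⟨p, hp⟩ := List.exists_mem_of_ne_nil _ hv.1
    obtain rfl : b = η x := by
      rw [← show p.2 = b by obtain ⟨a, -, rfl⟩ := List.mem_map.1 hp; rfl]
      exact (hv.2.1 p hp).trans hb.symm
    refine ⟨c, rfl, rfl, by simpa using hseat, fun a ha => ?_, hc⟩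
    obtain ⟨hax, hz⟩ := hlast a ha
    exact ⟨by omega, fun z hz' => hz z ⟨hz'.1, by have := hz'.2; omega⟩⟩

lemma IsOpenRun.succ (h : IsOpenRun η (x - 1) r) (h1 : 1 ≤ seat η x) (hlt : seat η x < r.length) :
    IsOpenRun η x r := by
  obtain ⟨b, c, rfl, hc, hlast⟩ := h
  refine ⟨b, c, rfl, hc, fun a ha => ?_⟩
  obtain ⟨hax, hz⟩ := hlast a ha
  refine ⟨by omega, fun z ⟨hz1, hz2⟩ => ?_⟩
  rcases eq_or_ne z x with rfl | hne
  · exact ⟨h1, by simpa using hlt⟩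
  · exact hz z ⟨hz1, by omega⟩

lemma mem_of_mem_push_snd {st : RunStack} {a : Letter} (h : st.Admits a)
    (hr : r ∈ (push st a).2) : r ∈ st := by
  rcases push_cases h with ⟨-, e⟩ | ⟨r', s, rfl, -, e⟩ <;> rw [e] at hr
  · exact hr
  · exact List.mem_cons_of_mem _ hr

namespace HasRecords

variable (hη : HasRecords η)
include hη

lemma isOpenRun_of_mem_stackAt : ∀ r ∈ stackAt η x, IsOpenRun η x r := by
  induction x using hη.induction with
  | record x hx => simp [stackAt_of_isRecord hx]
  | step x ih =>
    by_cases hx : isRecord η x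
    · simp [stackAt_of_isRecord hx]
    have hadm := hη.admits_iff.2 hx
    have hpos : 1 ≤ seat η x := one_le_length_push (valid_stackAt η _) hadm
    have hp := isPending_push (valid_stackAt η _) hadm
    have hrest : ∀ r ∈ (push (stackAt η (x - 1)) (x, η x)).2, seat η x < r.length →
        IsOpenRun η x r := fun r hr => (ih r (mem_of_mem_push_snd hadm hr)).succ hpos
    rw [hη.stackAt_eq_step, step]
    rcases hp.settle_cases with ⟨-, e, hlt⟩ | ⟨r, s, he, hl, -, e⟩ <;> rw [e]
    · obtain ⟨c, hc, hrun⟩ := exists_isRun_push hadm ih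
      refine List.forall_mem_cons.2 ⟨⟨η x, x :: c, hc, hrun, ?_⟩, fun r hr => hrest r hr (hlt r hr)⟩
      simpa using fun z h₁ h₂ => absurd h₁ (not_lt.2 h₂)
    · intro r' hr'
      have hv := hp.valid
      rw [he] at hv hrest
      exact hrest r' (List.mem_cons_of_mem _ hr') (hl.symm.trans_lt (hv.2.2.1 r' hr'))

lemma isSoliton_of_completedAt (h : completedAt η x = some s) :
    s.length = 2 * seat η x ∧ ∃ u d, max u d = x ∧
      IsSoliton η (seat η x) (s.map Prod.fst).toFinset u d := by
  obtain ⟨hpos, hcar⟩ := hη.isSome_completedAt_iff.1 (by rw [h]; rfl)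
  have hadm := hη.admits_of_one_le_seat hpos
  have hp := isPending_push (valid_stackAt η _) hadm
  obtain ⟨c, hc, hrun⟩ := exists_isRun_push hadm fun r => hη.isOpenRun_of_mem_stackAt r
  have hk : seat η x = c.length + 1 := hrun.2.1
  rcases hp.settle_cases with ⟨hnone, -, -⟩ | ⟨r, t, he, hl, hsome, -⟩
  · rw [completedAt, hnone] at h
    simp at h
  obtain ⟨b, c', rfl, hrun', hlast⟩ := hη.isOpenRun_of_mem_stackAt r
    (mem_of_mem_push_snd hadm (he ▸ List.mem_cons_self))
  obtain ⟨a, t', rfl⟩ := List.exists_cons_of_length_pos (l := c') (by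
    rw [← List.length_map, hl, hc]
    simp)
  obtain rfl : b = !η x := by
    have h1 := hp.valid
    have h2 := hp.bit (x, η x) (by simp [hc])
    rw [he] at h1 h2
    rw [topBit_cons, Bool.not_not] at h2
    exact (h1.2.1 (a, b) (by simp)).trans (congrArg _ h2.symm)
  obtain ⟨hax, hz⟩ := hlast a (by simp)
  have hlen : t'.length + 1 = seat η x := by simpa [hc, hk] using hl
  obtain rfl : s = ((a :: t').map (·, !η x)).reverse ++ ((x :: c).map (·, η x)).reverse := by
    rw [completedAt, hsome, hc] at h
    exact (Option.some.inj h).symm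
  have hbetween : ∀ z ∈ Set.Ioo a x, 1 ≤ seat η z ∧ seat η z < seat η x := fun z hz' => by
    have := hz z ⟨hz'.1, by have := hz'.2; omega⟩
    simpa [hlen] using this
  refine ⟨by simp; omega, ?_⟩
  cases hηx : η x <;> rw [hηx] at hrun hrun'
  · refine ⟨a, x, by omega, t', c, hrun', hrun, hlen, hk.symm, by ext; simp; tauto, ?_⟩
    rw [min_eq_left (by omega), max_eq_right (by omega)]
    exact ⟨hbetween, hcar⟩
  · refine ⟨x, a, by omega, c, t', hrun, hrun', hk.symm, hlen, by ext; simp; tauto, ?_⟩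
    rw [min_eq_right (by omega), max_eq_left (by omega)]
    exact ⟨hbetween, hcar⟩

end HasRecords

end OpenRuns

/-! ### The Takahashi–Satsuma solitons are those completed by the one-pass algorithm -/

/-- The word of the `n` sites following `y`. -/
def siteWord (η : Cfg) (y : ℤ) (n : ℕ) : List Letter :=
  (List.range n).map fun i : ℕ => (y + i + 1, η (y + i + 1))

section Excursions

variable {η : Cfg} {y y₁ y₂ : ℤ} {n k : ℕ} {s : List Letter} {γ : Finset ℤ}

lemma siteWord_succ (η : Cfg) (y : ℤ) (n : ℕ) :
    siteWord η y (n + 1) = siteWord η y n ++ [(y + n + 1, η (y + n + 1))] := by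
  simp [siteWord, List.range_succ]

lemma nodup_siteWord (η : Cfg) (y : ℤ) (n : ℕ) : ((siteWord η y n).map Prod.fst).Nodup := by
  rw [siteWord, List.map_map]
  exact List.nodup_range.map fun _ _ h => by simpa using h

lemma excursionWord_eq_siteWord (η : Cfg) (y₁ y₂ : ℤ) :
    excursionWord η y₁ y₂ = siteWord η y₁ (y₂ - y₁ - 1).toNat := by
  -- The cast in `excursionWord` elaborates to a monadic lift of the list `List.range _`.
  have hcast : ∀ N : ℕ, (do let i ← List.range N; pure (i : ℤ)) =
      (List.range N).map (fun i : ℕ => (i : ℤ)) := fun N => by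
    rw [List.map_eq_flatMap]
    rfl
  rw [excursionWord, hcast, List.map_map, siteWord]
  refine List.map_congr_left fun i _ => ?_
  rw [Function.comp_apply, add_right_comm]

lemma foldl_step_siteWord (η : Cfg) (y : ℤ) (n : ℕ) :
    (siteWord η y n).foldl step [] = stackFrom η y n := by
  induction n with
  | zero => rfl
  | succ n ih =>
    rw [siteWord_succ, List.foldl_append, ih, stackFrom, List.foldl_cons, List.foldl_nil]

lemma RunStack.emissions_append_singleton (st : RunStack) (q : List Letter) (a : Letter) :
    st.emissions (q ++ [a]) =
      st.emissions q ++ (completed (push (q.foldl step st) a)).toList := by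
  induction q generalizing st with
  | nil => simp [emissions]
  | cons b q ih => simp [emissions, ih]

lemma RunStack.admitsWord_append_singleton (st : RunStack) (q : List Letter) (a : Letter) :
    st.AdmitsWord (q ++ [a]) ↔ st.AdmitsWord q ∧ Admits (q.foldl step st) a := by
  induction q generalizing st with
  | nil => simp [AdmitsWord]
  | cons b q ih => simp [AdmitsWord, ih, and_assoc]

lemma mem_emissions_siteWord : s ∈ emissions [] (siteWord η y n) ↔
    ∃ i < n, completed (push (stackFrom η y i) (y + i + 1, η (y + i + 1))) = some s := by
  induction n with
  | zero => simp [siteWord, emissions]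
  | succ n ih =>
    rw [siteWord_succ, emissions_append_singleton, foldl_step_siteWord, List.mem_append, ih,
      Option.mem_toList]
    simp only [Nat.lt_succ_iff_lt_or_eq, or_and_right, exists_or, exists_eq_left]

lemma admitsWord_siteWord :
    AdmitsWord [] (siteWord η y n) ↔
      ∀ i < n, (stackFrom η y i).Admits (y + i + 1, η (y + i + 1)) := by
  induction n with
  | zero => simp [siteWord, AdmitsWord]
  | succ n ih =>
    rw [siteWord_succ, admitsWord_append_singleton, foldl_step_siteWord, ih]
    simp only [Nat.lt_succ_iff_lt_or_eq, or_imp, forall_and, forall_eq]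

namespace HasRecords

variable (hη : HasRecords η)
include hη

lemma mem_tsSolitons_excursionWord (hy₁ : isRecord η y₁)
    (hn : ∀ z ∈ Set.Ioo y₁ y₂, ¬ isRecord η z) :
    s ∈ tsSolitons (excursionWord η y₁ y₂) ↔
      ∃ x ∈ Set.Ioo y₁ y₂, completedAt η x = some s := by
  have hstack : ∀ i < (y₂ - y₁ - 1).toNat, stackAt η (y₁ + i) = stackFrom η y₁ i := fun i hi =>
    stackAt_eq_stackFrom hy₁ fun z hz => hn z ⟨hz.1, by have := hz.2; omega⟩
  have hadm : AdmitsWord [] (excursionWord η y₁ y₂) := by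
    rw [excursionWord_eq_siteWord, admitsWord_siteWord]
    intro i hi
    have := hη.admits_iff.2 (hn (y₁ + i + 1) ⟨by omega, by omega⟩)
    rwa [add_sub_cancel_right, hstack i hi] at this
  have hnodup : ((excursionWord η y₁ y₂).map Prod.fst).Nodup := by
    rw [excursionWord_eq_siteWord]
    exact nodup_siteWord η y₁ _
  have hts : tsSolitons (excursionWord η y₁ y₂) = emissions [] (excursionWord η y₁ y₂) :=
    tsAux_word_append (st := []) _ trivial hadm hnodup le_rfl
  rw [hts, excursionWord_eq_siteWord, mem_emissions_siteWord]
  constructor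
  · rintro ⟨i, hi, h⟩
    refine ⟨y₁ + i + 1, ⟨by omega, by omega⟩, ?_⟩
    rwa [completedAt, add_sub_cancel_right, hstack i hi]
  · rintro ⟨x, ⟨hx₁, hx₂⟩, h⟩
    obtain ⟨i, rfl⟩ : ∃ i : ℕ, x = y₁ + i + 1 := ⟨(x - y₁ - 1).toNat, by omega⟩
    rw [completedAt, add_sub_cancel_right, hstack i (by omega)] at h
    exact ⟨i, by omega, h⟩

lemma mem_Gamma_iff : γ ∈ Gamma η k ↔
    ∃ x s, completedAt η x = some s ∧ s.length = 2 * k ∧ γ = (s.map Prod.fst).toFinset := by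
  constructor
  · rintro ⟨y₁, y₂, -, hy₁, -, hn, s, hs, hl, hγ⟩
    obtain ⟨x, -, hx⟩ := (hη.mem_tsSolitons_excursionWord hy₁ fun z hz => hn z hz.1 hz.2).1 hs
    exact ⟨x, s, hx, hl, hγ⟩
  · rintro ⟨x, s, hx, hl, hγ⟩
    have hxr : ¬ isRecord η x := fun hr => by
      have := (hη.isSome_completedAt_iff.1 (by rw [hx]; rfl)).1
      simp [hη.seat_eq_zero_iff.2 hr] at this
    obtain ⟨y₁, n, rfl, hy₁, hleft⟩ := hη.exists_last_record x
    obtain ⟨y₂, ⟨hxy, hy₂⟩, hright⟩ := Int.exists_least_of_bdd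
      (P := fun y => y₁ + n ≤ y ∧ isRecord η y) ⟨y₁ + n, fun z hz => hz.1⟩ (hη (y₁ + n)).2
    have hn : ∀ z ∈ Set.Ioo y₁ y₂, ¬ isRecord η z := fun z hz hr => by
      rcases le_or_gt z (y₁ + n) with h | h
      · exact hleft z ⟨hz.1, h⟩ hr
      · exact absurd (hright z ⟨h.le, hr⟩) (by have := hz.2; omega)
    have hne₁ : y₁ ≠ y₁ + n := fun h => hxr (h ▸ hy₁)
    have hne₂ : y₁ + n ≠ y₂ := fun h => hxr (h ▸ hy₂)
    exact ⟨y₁, y₂, by omega, hy₁, hy₂, fun z h1 h2 => hn z ⟨h1, h2⟩, s,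
      (hη.mem_tsSolitons_excursionWord hy₁ hn).2 ⟨_, ⟨by omega, by omega⟩, hx⟩, hl, hγ⟩

end HasRecords

end Excursions

/-! ### Reading the carrier -/

namespace SeatRules

variable {η : Cfg} {l : ℤ → ℕ} {w : ℤ → ℕ → Bool} {a b x : ℤ} {i j : ℕ} {c : Bool}
  (h : SeatRules η l w)
include h

lemma before_of_lt (hi : 1 ≤ i) (hl : i < l x) : w (x - 1) i = η x := by
  rw [← h.after_of_ne x i hi hl.ne, h.after_of_le x (hi.trans hl.le) i hl.le]

lemma after_self (hx : 1 ≤ l x) : w x (l x) = η x :=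
  h.after_of_le x hx _ le_rfl

lemma eq_of_forall_ne (hj : 1 ≤ j) (hab : a ≤ b) (hne : ∀ z ∈ Set.Ioc a b, l z ≠ j) :
    w b j = w a j := by
  induction b, hab using Int.leInduction with
  | base => rfl
  | succ b hb ih =>
    have := h.after_of_ne (b + 1) j hj (hne _ ⟨by omega, le_rfl⟩).symm
    rw [add_sub_cancel_right] at this
    rw [this, ih fun z hz => hne z ⟨hz.1, by have := hz.2; omega⟩]

lemma exists_mem_Ioc_of_ne (hj : 1 ≤ j) (hab : a ≤ b) (ha : w a j = !c) (hb : w b j = c) :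
    ∃ z ∈ Set.Ioc a b, l z = j ∧ η z = c := by
  induction b, hab using Int.leInduction with
  | base => simp [ha] at hb
  | succ b hab ih =>
    by_cases hl : l (b + 1) = j
    · exact ⟨b + 1, ⟨by omega, le_rfl⟩, hl, by rw [← hb, ← hl, h.after_self (by omega)]⟩
    · have := h.after_of_ne (b + 1) j hj (Ne.symm hl)
      rw [add_sub_cancel_right] at this
      obtain ⟨z, hz, hz'⟩ := ih (this ▸ hb)
      exact ⟨z, ⟨hz.1, by have := hz.2; omega⟩, hz'⟩

end SeatRules

/-! ### Runs and solitons -/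

section Runs

variable {η η' : Cfg} {b b' : Bool} {a z : ℤ} {r r' : List ℤ}

lemma IsRun.bit (h : IsRun η b r) : ∀ a ∈ r, η a = b := by
  induction r with
  | nil => simp
  | cons a r ih => exact List.forall_mem_cons.2 ⟨h.1, ih h.2.2.2⟩

lemma IsRun.span (h : IsRun η b (a :: r)) (hz : z ∈ a :: r) :
    z ≤ a ∧ ∀ y ∈ Set.Icc z a, 1 ≤ seat η y ∧ seat η y ≤ r.length + 1 := by
  induction r generalizing a with
  | nil =>
    obtain rfl : z = a := by simpa using hz
    have := h.2.1
    exact ⟨le_rfl, fun y hy => by obtain rfl := hy.2.antisymm hy.1; omega⟩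
  | cons c r ih =>
    obtain ⟨-, ha, hnext, hr⟩ := h
    obtain ⟨hca, hgap⟩ := hnext c (by simp)
    rw [List.length_cons] at *
    have htop : ∀ y ∈ Set.Ioc c a, 1 ≤ seat η y ∧ seat η y ≤ r.length + 1 + 1 := fun y hy => by
      rcases hy.2.eq_or_lt with rfl | hlt
      · omega
      · have := hgap y ⟨hy.1, hlt⟩
        omega
    rcases List.mem_cons.1 hz with rfl | hz
    · exact ⟨le_rfl, fun y hy => htop y ⟨hca.trans_le hy.1, hy.2⟩⟩
    · obtain ⟨hzc, hspan⟩ := ih hr hz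
      refine ⟨by omega, fun y hy => ?_⟩
      rcases le_or_gt y c with hyc | hyc
      · have := hspan y ⟨hy.1, hyc⟩
        omega
      · exact htop y ⟨hyc, hy.2⟩

/-- The site with seat `j` is the last one before the site with seat `j + 1` carrying this seat and
letter. -/
lemma IsRun.eq_of_cons (h : IsRun η b (a :: r)) (h' : IsRun η' b' (a :: r'))
    (hl : r.length = r'.length)
    (hiff : ∀ j z, 1 ≤ j → (seat η z = j ∧ η z = b ↔ seat η' z = j ∧ η' z = b')) : r = r' := by
  induction r generalizing a r' with
  | nil => exact (List.length_eq_zero_iff.1 hl.symm).symm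
  | cons c r ih =>
    obtain ⟨c', r', rfl⟩ := List.exists_cons_of_length_pos (l := r')
      (by rw [← hl, List.length_cons]; omega)
    obtain ⟨-, -, hnext, hr⟩ := h
    obtain ⟨-, -, hnext', hr'⟩ := h'
    obtain ⟨hca, hgap⟩ := hnext c (by simp)
    obtain ⟨hca', hgap'⟩ := hnext' c' (by simp)
    simp only [List.length_cons] at hl hgap hgap'
    have hc := (hiff _ c (by omega)).1 ⟨hr.2.1, hr.1⟩
    have hc' := (hiff _ c' (by omega)).2 ⟨hr'.2.1, hr'.1⟩
    obtain rfl : c = c' := by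
      rcases lt_trichotomy c c' with hlt | heq | hlt
      · have := hgap c' ⟨hlt, hca'⟩
        omega
      · exact heq
      · have := hgap' c ⟨hlt, hca⟩
        omega
    rw [ih hr hr' (by omega)]

end Runs

namespace IsSoliton

variable {η : Cfg} {k : ℕ} {γ : Finset ℤ} {u d z : ℤ} (hγ : IsSoliton η k γ u d)
include hγ

lemma seat_head : seat η u = k := by
  obtain ⟨h, t, hh, -, hk, -⟩ := hγ
  exact hk ▸ hh.2.1

lemma seat_tail : seat η d = k := by
  obtain ⟨h, t, -, ht, -, hk, -⟩ := hγ
  exact hk ▸ ht.2.1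

lemma apply_head : η u = true := by
  obtain ⟨h, t, hh, -⟩ := hγ
  exact hh.1

lemma apply_tail : η d = false := by
  obtain ⟨h, t, -, ht, -⟩ := hγ
  exact ht.1

lemma ne : u ≠ d := by
  rintro rfl
  simpa [hγ.apply_head] using hγ.apply_tail

lemma one_le : 1 ≤ k := by
  obtain ⟨h, t, -, -, hk, -⟩ := hγ
  omega

lemma seat_lt (hz : z ∈ Set.Ioo (min u d) (max u d)) : 1 ≤ seat η z ∧ seat η z < k := by
  obtain ⟨h, t, -, -, -, -, -, hgap, -⟩ := hγ
  exact hgap z hz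

lemma span (hz : z ∈ γ) :
    z ≤ max u d ∧ ∀ y ∈ Set.Icc z (max u d), 1 ≤ seat η y ∧ seat η y ≤ k := by
  have hgap := fun y => hγ.seat_lt (z := y)
  have hu := hγ.seat_head
  have hd := hγ.seat_tail
  have hk := hγ.one_le
  obtain ⟨h, t, hh, ht, hhk, htk, rfl, -⟩ := hγ
  have hrun : (z ≤ u ∧ ∀ y ∈ Set.Icc z u, 1 ≤ seat η y ∧ seat η y ≤ k) ∨
      (z ≤ d ∧ ∀ y ∈ Set.Icc z d, 1 ≤ seat η y ∧ seat η y ≤ k) := by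
    rw [Finset.mem_union, List.mem_toFinset, List.mem_toFinset] at hz
    exact hz.imp (fun hz => hhk ▸ hh.span hz) (fun hz => htk ▸ ht.span hz)
  refine ⟨by omega, fun y hy => ?_⟩
  obtain ⟨hzy, hy⟩ := hy
  by_cases hy' : y ∈ Set.Ioo (min u d) (max u d)
  · exact ⟨(hgap y hy').1, (hgap y hy').2.le⟩
  rw [Set.mem_Ioo, not_and] at hy'
  rcases eq_or_ne y u with rfl | hyu
  · omega
  rcases eq_or_ne y d with rfl | hyd
  · omega
  rcases hrun with ⟨-, hs⟩ | ⟨-, hs⟩ <;> exact hs y ⟨hzy, by omega⟩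

lemma exists_isRun_headF : ∃ h, IsRun η true (u :: h) ∧ h.length + 1 = k ∧
    headF η γ = (u :: h).toFinset := by
  obtain ⟨h, t, hh, ht, hk, -, rfl, -⟩ := hγ
  refine ⟨h, hh, hk, ?_⟩
  rw [headF, Finset.filter_union, Finset.filter_true_of_mem, Finset.filter_false_of_mem,
    Finset.union_empty]
  · intro z hz
    simp [ht.bit z (List.mem_toFinset.1 hz)]
  · exact fun z hz => hh.bit z (List.mem_toFinset.1 hz)

lemma exists_isRun_tailF : ∃ t, IsRun η false (d :: t) ∧ t.length + 1 = k ∧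
    tailF η γ = (d :: t).toFinset := by
  obtain ⟨h, t, hh, ht, -, hk, rfl, -⟩ := hγ
  refine ⟨t, ht, hk, ?_⟩
  rw [tailF, Finset.filter_union, Finset.filter_false_of_mem, Finset.filter_true_of_mem,
    Finset.empty_union]
  · exact fun z hz => ht.bit z (List.mem_toFinset.1 hz)
  · intro z hz
    simp [hh.bit z (List.mem_toFinset.1 hz)]

lemma isGreatest_headF : IsGreatest (headF η γ : Set ℤ) u := by
  obtain ⟨h, hh, -, e⟩ := hγ.exists_isRun_headF
  rw [e]
  exact ⟨by simp, fun z hz => (hh.span (List.mem_toFinset.1 hz)).1⟩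

lemma isGreatest_tailF : IsGreatest (tailF η γ : Set ℤ) d := by
  obtain ⟨t, ht, -, e⟩ := hγ.exists_isRun_tailF
  rw [e]
  exact ⟨by simp, fun z hz => (ht.span (List.mem_toFinset.1 hz)).1⟩

lemma head_mem : u ∈ γ := Finset.filter_subset _ _ hγ.isGreatest_headF.1

lemma tail_mem : d ∈ γ := Finset.filter_subset _ _ hγ.isGreatest_tailF.1

lemma carrier_succ_eq (hη : HasRecords η) (hz : z ∈ Set.Icc (min u d) (max u d)) :
    carrier η z (k + 1) = η (max u d) := by
  have hspan : ∀ y ∈ Set.Icc (min u d) (max u d), seat η y ≤ k := fun y hy => by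
    rcases min_choice u d with e | e <;> rw [e] at hy
    exacts [((hγ.span hγ.head_mem).2 y hy).2, ((hγ.span hγ.tail_mem).2 y hy).2]
  have hlast : seat η (max u d) = k := by
    rcases max_choice u d with e | e <;> rw [e]
    exacts [hγ.seat_head, hγ.seat_tail]
  have hk := hγ.one_le
  have hconst : carrier η (max u d) (k + 1) = carrier η z (k + 1) :=
    hη.seatRules.eq_of_forall_ne (by omega) hz.2 fun y hy => by
      have := hspan y ⟨hz.1.trans hy.1.le, hy.2⟩
      omega
  have hlast' := hη.seatRules.after_self (hlast ▸ hk)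
  obtain ⟨h, t, -, -, -, -, -, -, heq⟩ := hγ
  rw [← hconst, ← heq, ← hlast', hlast]

end IsSoliton

/-! ### Duality between consecutive configurations -/

/-- Two carriers are complementary on all seats below an occupied seat of the first one. -/
def ComplementaryBelowTop (w w' : ℕ → Bool) : Prop :=
  ∀ i, w i = true → ∀ j, 1 ≤ j → j ≤ i → w' j = !w j

section Duality

variable {η η' : Cfg} {l l' : ℤ → ℕ} {w w' : ℤ → ℕ → Bool} {x : ℤ} {i j : ℕ}
  (r : SeatRules η l w) (r' : SeatRules η' l' w') (hx : 1 ≤ l x) (hη : η' x = !η x)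
  (hw : ComplementaryBelowTop (w (x - 1)) (w' (x - 1)))

namespace ComplementaryBelowTop

include r r' hη hw in
lemma le_seat_of_ball (hb : η x = true) (hx' : 1 ≤ l' x) : l x ≤ l' x := by
  by_contra! hlt
  have hbelow := r.before_of_lt hx' hlt
  rw [hb] at hbelow
  have := hw _ hbelow _ hx' le_rfl
  rw [r'.before_self x hx', hη, hb, hbelow] at this
  simp at this

include r r' hx hη hw

lemma seat_eq_of_empty (he : η x = false) : l' x = l x := by
  rw [he, Bool.not_false] at hη
  have htop : w (x - 1) (l x) = true := by rw [r.before_self x hx, he, Bool.not_false]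
  have hx' : 1 ≤ l' x := Nat.one_le_iff_ne_zero.2 fun h0 => by
    simp [r'.empty_of_record x h0] at hη
  have hself' := r'.before_self x hx'
  rw [hη, Bool.not_true] at hself'
  rcases lt_trichotomy (l' x) (l x) with hlt | heq | hlt
  · have := hw _ htop _ hx' hlt.le
    rw [hself', r.before_of_lt hx' hlt, he] at this
    simp at this
  · exact heq
  · have := hw _ htop _ hx le_rfl
    rw [r'.before_of_lt hx hlt, hη, htop] at this
    simp at this

lemma seat_eq_of_ball (hb : η x = true) (hi : l x ≤ i) (hwi : w (x - 1) i = true) :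
    l' x = l x := by
  have hflip : w' (x - 1) (l x) = true := by
    rw [hw i hwi _ hx hi, r.before_self x hx, hb, Bool.not_true, Bool.not_false]
  have hx' : 1 ≤ l' x := Nat.one_le_iff_ne_zero.2 fun h0 => by
    simp [r'.before_record x h0] at hflip
  refine (le_seat_of_ball r r' hη hw hb hx').antisymm' (not_lt.1 fun hlt => ?_)
  rw [r'.before_of_lt hx hlt, hη, hb] at hflip
  simp at hflip

lemma after_eq_of_seat_eq (hl : l' x = l x) (hwi : w (x - 1) i = true)
    (hj : 1 ≤ j) (hji : j ≤ i) : w' x j = !w x j := by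
  rcases eq_or_ne j (l x) with rfl | hne
  · rw [r.after_self hx, ← hl, r'.after_self (hl ▸ hx), hη]
  · rw [r'.after_of_ne x j hj (hl ▸ hne), r.after_of_ne x j hj hne, hw i hwi j hj hji]

lemma after : ComplementaryBelowTop (w x) (w' x) := by
  intro i hwi j hj hji
  rcases lt_or_ge (l x) i with hi | hi
  · have hwi' : w (x - 1) i = true := r.after_of_ne x i (by omega) hi.ne' ▸ hwi
    refine after_eq_of_seat_eq r r' hx hη hw ?_ hwi' hj hji
    cases hb : η x
    · exact seat_eq_of_empty r r' hx hη hw hb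
    · exact seat_eq_of_ball r r' hx hη hw hb hi.le hwi'
  · have hb : η x = true := r.after_of_le x hx i hi ▸ hwi
    rw [r.after_of_le x hx j (by omega), hb, Bool.not_true]
    rcases Nat.eq_zero_or_pos (l' x) with h0 | hx'
    · exact r'.after_record x h0 j
    · have := le_seat_of_ball r r' hη hw hb hx'
      rw [r'.after_of_le x hx' j (by omega), hη, hb, Bool.not_true]

end ComplementaryBelowTop

end Duality

namespace HasRecords

variable {η : Cfg} {x : ℤ} {j : ℕ} (hη : HasRecords η)
include hη

lemma bbsT_of_seat_eq_zero (hx : seat η x = 0) : bbsT η x = false :=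
  if_pos (hη.seat_eq_zero_iff.1 hx)

lemma bbsT_of_one_le_seat (hx : 1 ≤ seat η x) : bbsT η x = !η x :=
  if_neg fun h => Nat.one_le_iff_ne_zero.1 hx (hη.seat_eq_zero_iff.2 h)

lemma one_le_seat_of_bbsT (hx : bbsT η x = true) : 1 ≤ seat η x ∧ η x = false := by
  rcases Nat.eq_zero_or_pos (seat η x) with h0 | hpos
  · simp [hη.bbsT_of_seat_eq_zero h0] at hx
  · exact ⟨hpos, by simpa [hη.bbsT_of_one_le_seat hpos] using hx⟩

variable (hη' : HasRecords (bbsT η))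
include hη'

lemma complementaryBelowTop_bbsT (x : ℤ) :
    ComplementaryBelowTop (carrier η x) (carrier (bbsT η) x) := by
  have hzero : ∀ x, isRecord η x → ComplementaryBelowTop (carrier η x) (carrier (bbsT η) x) :=
    fun x hx i hi => by
      simp [hη.seatRules.after_record x (hη.seat_eq_zero_iff.2 hx)] at hi
  induction x using hη.induction with
  | record x hx => exact hzero x hx
  | step x ih =>
    rcases Nat.eq_zero_or_pos (seat η x) with h0 | hx
    · exact hzero x (hη.seat_eq_zero_iff.1 h0)
    · exact .after hη.seatRules hη'.seatRules hx (hη.bbsT_of_one_le_seat hx) ih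

lemma seat_bbsT (hx : 1 ≤ seat η x) (he : η x = false) : seat (bbsT η) x = seat η x :=
  ComplementaryBelowTop.seat_eq_of_empty hη.seatRules hη'.seatRules hx (hη.bbsT_of_one_le_seat hx)
    (hη.complementaryBelowTop_bbsT hη' _) he

lemma seat_bbsT_eq_iff (hj : 1 ≤ j) :
    seat (bbsT η) x = j ∧ bbsT η x = true ↔ seat η x = j ∧ η x = false := by
  constructor
  · rintro ⟨rfl, hx⟩
    obtain ⟨hpos, he⟩ := hη.one_le_seat_of_bbsT hx
    exact ⟨(hη.seat_bbsT hη' hpos he).symm, he⟩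
  · rintro ⟨rfl, he⟩
    exact ⟨hη.seat_bbsT hη' hj he, by rw [hη.bbsT_of_one_le_seat hj, he, Bool.not_false]⟩

end HasRecords

/-! ### Tracking solitons -/

namespace HasRecords

variable {η : Cfg} {k : ℕ} {γ : Finset ℤ} {u d e x : ℤ} (hη : HasRecords η)
include hη

lemma exists_isSoliton_of_mem_Gamma (hγ : γ ∈ Gamma η k) : ∃ u d, IsSoliton η k γ u d := by
  obtain ⟨x, s, hs, hl, rfl⟩ := hη.mem_Gamma_iff.1 hγ
  obtain ⟨hlen, u, d, -, hsol⟩ := hη.isSoliton_of_completedAt hs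
  rw [show seat η x = k by omega] at hsol
  exact ⟨u, d, hsol⟩

lemma exists_isSoliton_of_carrier_eq (hk : 1 ≤ k) (hx : seat η x = k)
    (hc : carrier η x k = carrier η x (k + 1)) :
    ∃ γ ∈ Gamma η k, ∃ u d, max u d = x ∧ IsSoliton η k γ u d := by
  subst hx
  obtain ⟨s, hs⟩ := Option.isSome_iff_exists.1 (hη.isSome_completedAt_iff.2 ⟨hk, hc⟩)
  obtain ⟨hlen, u, d, hmax, hsol⟩ := hη.isSoliton_of_completedAt hs
  exact ⟨_, hη.mem_Gamma_iff.2 ⟨x, s, hs, hlen, rfl⟩, u, d, hmax, hsol⟩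

lemma exists_lt_seat_eq (hk : 1 ≤ k) (hx : carrier η x k = true) : ∃ z, x < z ∧ seat η z = k := by
  obtain ⟨y, hy, hyr⟩ := (hη (x + 1)).2
  obtain ⟨z, hz, hzk, -⟩ := hη.seatRules.exists_mem_Ioc_of_ne (c := false) hk (by omega) hx
    (hη.seatRules.after_record y (hη.seat_eq_zero_iff.2 hyr) k)
  exact ⟨z, hz.1, hzk⟩

lemma exists_isSoliton_of_carrier_succ (hk : 1 ≤ k) (hu : seat η u = k) (hb : η u = true)
    (hc : carrier η u (k + 1) = true) : ∃ γ ∈ Gamma η k, ∃ d, IsSoliton η k γ u d := by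
  have hcu : carrier η u k = carrier η u (k + 1) := by
    rw [hc, ← hb, ← hη.seatRules.after_self (hu ▸ hk), hu]
  obtain ⟨γ, hγ, u', d, hmax, hsol⟩ := hη.exists_isSoliton_of_carrier_eq hk hu hcu
  rcases max_choice u' d with h | h
  · obtain rfl : u' = u := by omega
    exact ⟨γ, hγ, d, hsol⟩
  · obtain rfl : d = u := by omega
    simp [hsol.apply_tail] at hb

lemma exists_isSoliton_of_forall_ne (hk : 1 ≤ k) (hu : seat η u = k) (hb : η u = true)
    (hc : carrier η u (k + 1) = false) (hue : u < e) (he : seat η e = k)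
    (hne : ∀ z ∈ Set.Ioo u e, seat η z ≠ k ∧ seat η z ≠ k + 1) :
    ∃ γ ∈ Gamma η k, ∃ d, IsSoliton η k γ u d := by
  have r := hη.seatRules
  have hcarrier : carrier η (e - 1) k = true := by
    rw [r.eq_of_forall_ne (a := u) hk (by omega)
      fun z hz => (hne z ⟨hz.1, by have := hz.2; omega⟩).1, ← hb, ← r.after_self (hu ▸ hk), hu]
  have hempty : η e = false := by
    have := r.before_self e (he ▸ hk)
    simpa [he, hcarrier] using this
  have hsucc : carrier η e (k + 1) = false := by
    rw [r.eq_of_forall_ne (by omega) hue.le, hc]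
    intro z hz
    rcases hz.2.eq_or_lt with rfl | hlt
    · omega
    · exact (hne z ⟨hz.1, hlt⟩).2
  have hce : carrier η e k = carrier η e (k + 1) := by
    rw [hsucc, ← hempty, ← r.after_self (he ▸ hk), he]
  obtain ⟨γ, hγ, u', d, hmax, hsol⟩ := hη.exists_isSoliton_of_carrier_eq hk he hce
  have hu'e : u' ≠ e := by
    rintro rfl
    simp [hsol.apply_head] at hempty
  obtain rfl : u' = u := by
    rcases lt_trichotomy u' u with h | h | h
    · have := hsol.seat_lt (z := u) ⟨by omega, by omega⟩
      omega
    · exact h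
    · exact absurd hsol.seat_head (hne u' ⟨h, by omega⟩).1
  exact ⟨γ, hγ, d, hsol⟩

/-- Seat `k` is occupied somewhere between `d` and `e`: by the head of the soliton if it comes
after the tail, and otherwise by the ball taking seat `k + 1`, which fills all lower seats. -/
lemma exists_mem_Ioo_of_seat_eq_succ (hγ : IsSoliton η k γ u d) (hde : d < e)
    (he : seat η e = k + 1) (hηe : η e = false) :
    ∃ g ∈ Set.Ioo d e, seat η g = k ∧ η g = false := by
  have r := hη.seatRules
  have hk := hγ.one_le
  have htop : carrier η (e - 1) (k + 1) = true := by
    have := r.before_self e (by omega)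
    rwa [he, hηe] at this
  have hbelow : carrier η (e - 1) k = false := hηe ▸ r.before_of_lt hk (by omega)
  obtain ⟨f, hf, hck⟩ : ∃ f ∈ Set.Ico d e, carrier η f k = true := by
    rcases lt_or_gt_of_ne hγ.ne with hud | hdu
    · have hcd : carrier η d (k + 1) = false := by
        rw [hγ.carrier_succ_eq hη ⟨min_le_right _ _, le_max_right _ _⟩, max_eq_right hud.le,
          hγ.apply_tail]
      obtain ⟨f, hf, hfk, hb⟩ := r.exists_mem_Ioc_of_ne (by omega) (by omega) hcd htop
      exact ⟨f, ⟨hf.1.le, by have := hf.2; omega⟩,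
        by rw [r.after_of_le f (by omega) k (by omega), hb]⟩
    · refine ⟨u, ⟨hdu.le, ?_⟩, ?_⟩
      · rcases lt_trichotomy u e with h | rfl | h
        · exact h
        · have := hγ.seat_head
          omega
        · have := hγ.seat_lt (z := e) ⟨by omega, by omega⟩
          omega
      · rw [r.after_of_le u (by rw [hγ.seat_head]; exact hk) k hγ.seat_head.ge, hγ.apply_head]
  obtain ⟨g, hg, hg'⟩ := r.exists_mem_Ioc_of_ne hk (by have := hf.2; omega) hck hbelow
  exact ⟨g, ⟨hf.1.trans_lt hg.1, by have := hg.2; omega⟩, hg'⟩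

variable (hη' : HasRecords (bbsT η))
include hη'

lemma exists_isSoliton_bbsT (hγ : IsSoliton η k γ u d) :
    ∃ γ' ∈ Gamma (bbsT η) k, ∃ d', IsSoliton (bbsT η) k γ' d d' := by
  have hk := hγ.one_le
  obtain ⟨hd, hb⟩ := (hη.seat_bbsT_eq_iff hη' hk).2 ⟨hγ.seat_tail, hγ.apply_tail⟩
  cases hc : carrier (bbsT η) d (k + 1) with
  | true => exact hη'.exists_isSoliton_of_carrier_succ hk hd hb hc
  | false =>
    have r' := hη'.seatRules
    have hcd : carrier (bbsT η) d k = true := by rw [← hb, ← r'.after_self (hd ▸ hk), hd]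
    obtain ⟨z, hz, hzk⟩ := hη'.exists_lt_seat_eq hk hcd
    obtain ⟨e, ⟨hde, he⟩, hmin⟩ := Int.exists_least_of_bdd
      (P := fun z => d < z ∧ (seat (bbsT η) z = k ∨ seat (bbsT η) z = k + 1))
      ⟨d, fun z hz => hz.1.le⟩ ⟨z, hz, .inl hzk⟩
    have hne : ∀ z ∈ Set.Ioo d e, seat (bbsT η) z ≠ k ∧ seat (bbsT η) z ≠ k + 1 := fun z hz =>
      not_or.1 fun h => (hmin z ⟨hz.1, h⟩).not_gt hz.2
    rcases he with he | he
    · exact hη'.exists_isSoliton_of_forall_ne hk hd hb hc hde he hne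
    · have hball : bbsT η e = true := by
        rw [← r'.before_of_lt hk (by omega), ← hcd]
        exact r'.eq_of_forall_ne hk (by omega) fun z hz => (hne z ⟨hz.1, by have := hz.2; omega⟩).1
      obtain ⟨hse, hηe⟩ := (hη.seat_bbsT_eq_iff hη' (by omega)).1 ⟨he, hball⟩
      obtain ⟨g, hg, hgk⟩ := hη.exists_mem_Ioo_of_seat_eq_succ hγ hde hse hηe
      exact absurd ((hη.seat_bbsT_eq_iff hη' hk).2 hgk).1 (hne g hg).1

lemma exists_headF_eq_tailF (hγ : γ ∈ Gamma η k) :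
    ∃ γ' ∈ Gamma (bbsT η) k, headF (bbsT η) γ' = tailF η γ := by
  obtain ⟨u, d, hsol⟩ := hη.exists_isSoliton_of_mem_Gamma hγ
  obtain ⟨γ', hγ', d', hsol'⟩ := hη.exists_isSoliton_bbsT hη' hsol
  obtain ⟨t, ht, htk, etail⟩ := hsol.exists_isRun_tailF
  obtain ⟨h, hh, hhk, ehead⟩ := hsol'.exists_isRun_headF
  refine ⟨γ', hγ', ?_⟩
  rw [etail, ehead, hh.eq_of_cons ht (by omega) fun j z hj => hη.seat_bbsT_eq_iff hη' hj]

end HasRecords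

section Trajectories

variable {η : Cfg} {k : ℕ} {γ : Finset ℤ} (hη : AlwaysHasRecords η)
  (hγ : γ ∈ Gamma η k)
include hη

lemma solTraj_succ_spec {t : ℕ} (ht : solTraj η k γ t ∈ Gamma (bbsT^[t] η) k) :
    solTraj η k γ (t + 1) ∈ Gamma (bbsT^[t + 1] η) k ∧
      headF (bbsT^[t + 1] η) (solTraj η k γ (t + 1)) = tailF (bbsT^[t] η) (solTraj η k γ t) := by
  have hex : ∃ γ' ∈ Gamma (bbsT^[t + 1] η) k,
      headF (bbsT^[t + 1] η) γ' = tailF (bbsT^[t] η) (solTraj η k γ t) := by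
    have := hη (t + 1)
    rw [Function.iterate_succ_apply'] at this ⊢
    exact (hη t).exists_headF_eq_tailF this ht
  rw [solTraj, dif_pos hex]
  exact hex.choose_spec

include hγ

lemma solTraj_mem_Gamma (t : ℕ) : solTraj η k γ t ∈ Gamma (bbsT^[t] η) k := by
  induction t with
  | zero => exact hγ
  | succ t ih => exact (solTraj_succ_spec hη ih).1

theorem exists_isSoliton_solTraj :
    ∃ u : ℕ → ℤ, ∀ t, IsSoliton (bbsT^[t] η) k (solTraj η k γ t) (u t) (u (t + 1)) := by
  choose u d hud using fun t =>
    (hη t).exists_isSoliton_of_mem_Gamma (solTraj_mem_Gamma hη hγ t)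
  have hhead : ∀ t, u (t + 1) = d t := fun t => by
    have h := (hud (t + 1)).isGreatest_headF
    rw [(solTraj_succ_spec hη (solTraj_mem_Gamma hη hγ t)).2] at h
    exact h.unique (hud t).isGreatest_tailF
  exact ⟨u, fun t => hhead t ▸ hud t⟩

end Trajectories

/-! ### Shift covariance -/

section Shift

variable {η : Cfg} {n : ℤ}

lemma isRecord_shiftBy {x : ℤ} : isRecord (shiftBy n η) x ↔ isRecord η (x + n) := by
  have sum_shift (g : ℤ → ℤ) (z : ℤ) :
      ∑ y ∈ Icc z x, g (y + n) = ∑ y ∈ Icc (z + n) (x + n), g y := by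
    rw [← Finset.image_add_right_Icc, Finset.sum_image (add_left_injective n).injOn]
  simp only [isRecord, shiftBy, sum_shift fun y => valZ (η y), sum_shift fun y => 1 - valZ (η y)]
  exact ⟨fun h z hz => by simpa using h (z - n) (by omega), fun h z hz => h (z + n) (by omega)⟩

lemma HasRecords.shift (hη : HasRecords η) (n : ℤ) : HasRecords (shiftBy n η) := fun x => by
  obtain ⟨⟨y, hy, hry⟩, ⟨z, hz, hrz⟩⟩ := hη (x + n)
  exact ⟨⟨y - n, by omega, isRecord_shiftBy.2 (by simpa using hry)⟩,
    ⟨z - n, by omega, isRecord_shiftBy.2 (by simpa using hrz)⟩⟩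

lemma bbsT_shiftBy (n : ℤ) (η : Cfg) : bbsT (shiftBy n η) = shiftBy n (bbsT η) :=
  funext fun _ => by classical exact if_congr isRecord_shiftBy rfl rfl

lemma iterate_bbsT_shiftBy (n : ℤ) (t : ℕ) (η : Cfg) :
    bbsT^[t] (shiftBy n η) = shiftBy n (bbsT^[t] η) :=
  (Function.Commute.iterate_left (f := bbsT) (g := shiftBy n) (bbsT_shiftBy n) t) η

lemma AlwaysHasRecords.shift (hη : AlwaysHasRecords η) (n : ℤ) :
    AlwaysHasRecords (shiftBy n η) := fun t => by
  rw [iterate_bbsT_shiftBy]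
  exact (hη t).shift n

lemma SeatRules.seat_eq {l l' : ℤ → ℕ} {w w' : ℤ → ℕ → Bool} {x : ℤ} (r : SeatRules η l w)
    (r' : SeatRules η l' w') (hx : 1 ≤ l x) (hx' : 1 ≤ l' x) (hw : w (x - 1) = w' (x - 1)) :
    l x = l' x := by
  have self := r.before_self x hx
  have self' := r'.before_self x hx'
  rcases lt_trichotomy (l x) (l' x) with h | h | h
  · rw [hw, r'.before_of_lt hx h] at self
    simp at self
  · exact h
  · rw [← hw, r.before_of_lt hx' h] at self'
    simp at self'

lemma SeatRules.unique (hη : HasRecords η) {l l' : ℤ → ℕ} {w w' : ℤ → ℕ → Bool}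
    (r : SeatRules η l w) (r' : SeatRules η l' w') (hl : ∀ x, l x = 0 ↔ isRecord η x)
    (hl' : ∀ x, l' x = 0 ↔ isRecord η x) : l = l' ∧ w = w' := by
  have hseat : ∀ x, w (x - 1) = w' (x - 1) → l x = l' x := fun x hw => by
    by_cases hr : isRecord η x
    · rw [(hl x).2 hr, (hl' x).2 hr]
    · exact r.seat_eq r' (Nat.one_le_iff_ne_zero.2 (mt (hl x).1 hr))
        (Nat.one_le_iff_ne_zero.2 (mt (hl' x).1 hr)) hw
  have hrecord : ∀ x, isRecord η x → w x = w' x := fun x hr => funext fun i => by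
    rw [r.after_record x ((hl x).2 hr), r'.after_record x ((hl' x).2 hr)]
  have hcarrier : ∀ x, w x = w' x := fun x => by
    induction x using hη.induction with
    | record x hr => exact hrecord x hr
    | step x ih =>
      by_cases hr : isRecord η x
      · exact hrecord x hr
      · have hx : 1 ≤ l x := Nat.one_le_iff_ne_zero.2 (mt (hl x).1 hr)
        have hx' := hseat x ih ▸ hx
        funext i
        rcases le_or_gt i (l x) with hi | hi
        · rw [r.after_of_le x hx i hi, r'.after_of_le x hx' i (hseat x ih ▸ hi)]
        · rw [r.after_of_ne x i (by omega) hi.ne',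
            r'.after_of_ne x i (by omega) (hseat x ih ▸ hi.ne'), ih]
  exact ⟨funext fun x => hseat x (hcarrier _), funext hcarrier⟩

lemma HasRecords.seat_carrier_shiftBy (hη : HasRecords η) (n : ℤ) :
    (seat (shiftBy n η) = fun x => seat η (x + n)) ∧
      carrier (shiftBy n η) = fun x => carrier η (x + n) := by
  have r := hη.seatRules
  have hpred : ∀ x : ℤ, x - 1 + n = x + n - 1 := fun x => by ring
  have r' : SeatRules (shiftBy n η) (fun x => seat η (x + n)) (fun x => carrier η (x + n)) :=
    { empty_of_record := fun x => r.empty_of_record (x + n)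
      before_record := fun x => by simpa only [hpred] using r.before_record (x + n)
      after_record := fun x => r.after_record (x + n)
      before_self := fun x => by simpa only [hpred, shiftBy] using r.before_self (x + n)
      after_of_le := fun x => r.after_of_le (x + n)
      after_of_ne := fun x => by simpa only [hpred] using r.after_of_ne (x + n) }
  exact (hη.shift n).seatRules.unique (hη.shift n) r'
    (fun _ => (hη.shift n).seat_eq_zero_iff) fun _ => by
      rw [isRecord_shiftBy, hη.seat_eq_zero_iff]

lemma HasRecords.seat_shiftBy (hη : HasRecords η) (n x : ℤ) :
    seat (shiftBy n η) x = seat η (x + n) :=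
  congrFun (hη.seat_carrier_shiftBy n).1 x

lemma HasRecords.carrier_shiftBy (hη : HasRecords η) (n x : ℤ) :
    carrier (shiftBy n η) x = carrier η (x + n) :=
  congrFun (hη.seat_carrier_shiftBy n).2 x

end Shift

/-! ### Signed sums -/

/-- The sum of `f` over `(0, n]`, with the sign convention of an oriented integral: it is minus the
sum over `(n, 0]` if `n` is negative. -/
noncomputable def signedSum (f : ℤ → ℝ) (n : ℤ) : ℝ := ∑ x ∈ Ioc 0 n, f x - ∑ x ∈ Ioc n 0, f x

section SignedSum

variable (f : ℤ → ℝ)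

@[simp]
lemma signedSum_zero : signedSum f 0 = 0 := by simp [signedSum]

lemma signedSum_eq_add_pred (n : ℤ) : signedSum f n = signedSum f (n - 1) + f n := by
  unfold signedSum
  rcases le_or_gt n 0 with h | h
  · have e : Ioc (n - 1) 0 = insert n (Ioc n 0) := by
      ext y; simp only [Finset.mem_Ioc, Finset.mem_insert]; omega
    rw [Ioc_eq_empty_of_le h, Ioc_eq_empty_of_le (by omega : n - 1 ≤ 0), e,
      Finset.sum_insert (by simp)]
    ring
  · have e : Ioc 0 n = insert n (Ioc 0 (n - 1)) := by
      ext y; simp only [Finset.mem_Ioc, Finset.mem_insert]; omega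
    rw [Ioc_eq_empty_of_le h.le, Ioc_eq_empty_of_le (by omega : 0 ≤ n - 1), e,
      Finset.sum_insert (by simp)]
    ring

lemma eq_of_forall_sub_pred_eq {g h : ℤ → ℝ} (h0 : g 0 = h 0)
    (hs : ∀ n, g n - g (n - 1) = h n - h (n - 1)) : g = h := by
  funext n
  induction n using Int.induction_on with
  | zero => exact h0
  | succ i ih => have := hs (i + 1); rw [add_sub_cancel_right] at this; linarith
  | pred i ih => have := hs (-i); linarith

lemma signedSum_sub {a b : ℤ} (hab : a ≤ b) :
    signedSum f b - signedSum f a = ∑ x ∈ Ioc a b, f x := by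
  induction b, hab using Int.leInduction with
  | base => simp
  | succ b hb ih =>
    have e : Ioc a (b + 1) = insert (b + 1) (Ioc a b) := by
      ext y; simp only [Finset.mem_Ioc, Finset.mem_insert]; omega
    rw [e, Finset.sum_insert (by simp), ← ih, signedSum_eq_add_pred f (b + 1),
      add_sub_cancel_right]
    ring

lemma signedSum_add (n m : ℤ) :
    signedSum f (n + m) = signedSum f n + signedSum (fun x => f (x + n)) m := by
  refine congrFun (eq_of_forall_sub_pred_eq (g := fun m => signedSum f (n + m))
    (h := fun m => signedSum f n + signedSum (fun x => f (x + n)) m) (by simp) fun m => ?_) m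
  have h := signedSum_eq_add_pred f (n + m)
  have h' := signedSum_eq_add_pred (fun x => f (x + n)) m
  rw [show n + (m - 1) = n + m - 1 by ring, h, h', add_comm m n]
  ring

lemma abs_signedSum_le {f : ℤ → ℝ} {C : ℝ} (hf : ∀ x, |f x| ≤ C) (n : ℤ) :
    |signedSum f n| ≤ C * |(n : ℝ)| := by
  have key {a b : ℤ} (hab : a ≤ b) : |signedSum f b - signedSum f a| ≤ C * (b - a) := by
    rw [signedSum_sub f hab]
    calc |∑ x ∈ Ioc a b, f x| ≤ #(Ioc a b) • C :=
          (Finset.abs_sum_le_sum_abs _ _).trans (Finset.sum_le_card_nsmul _ _ _ fun x _ => hf x)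
      _ = C * (b - a) := by
          rw [nsmul_eq_mul, mul_comm, Int.card_Ioc, ← Int.cast_natCast,
            Int.toNat_of_nonneg (by omega), Int.cast_sub]
  rcases le_total 0 n with h | h
  · simpa [abs_of_nonneg (Int.cast_nonneg h : (0 : ℝ) ≤ n)] using key h
  · simpa [abs_of_nonpos (Int.cast_nonpos.2 h : (n : ℝ) ≤ 0)] using key h

end SignedSum

/-! ### Conservation laws -/

/-- Indicator that `x` is a ball on seat `j` of the carrier. -/
noncomputable def ballAtSeat (j : ℕ) (η : Cfg) (x : ℤ) : ℝ :=
  if seat η x = j ∧ η x = true then 1 else 0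

/-- Indicator that `x` is an empty box vacating seat `j` of the carrier. -/
noncomputable def emptyAtSeat (j : ℕ) (η : Cfg) (x : ℤ) : ℝ :=
  if seat η x = j ∧ η x = false then 1 else 0

/-- Indicator that `x` is a `k`-slot, that is, a record or a site whose seat exceeds `k`. -/
noncomputable def slotDensity (k : ℕ) (η : Cfg) (x : ℤ) : ℝ :=
  if seat η x = 0 ∨ k < seat η x then 1 else 0

/-- The current of `k`-slots from `x` to `x + 1` during one step of the dynamics. -/
noncomputable def slotCurrent (k : ℕ) (η : Cfg) (x : ℤ) : ℝ :=
  k - ∑ j ∈ Icc 1 k, (valR (carrier η x j) + valR (carrier (bbsT η) x j))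

/-- A density for the number of `m`-solitons: the head of a `k`-soliton uses the seats `1, …, k`
once each, so it contributes `1` in total if `k = m` and `0` otherwise. -/
noncomputable def solitonDensity (m : ℕ) (η : Cfg) (x : ℤ) : ℝ :=
  ballAtSeat m η x - ballAtSeat (m + 1) η x

/-- The current of `m`-solitons from `x` to `x + 1` during one step of the dynamics. -/
noncomputable def solitonCurrent (m : ℕ) (η : Cfg) (x : ℤ) : ℝ :=
  valR (carrier η x m) - valR (carrier η x (m + 1))

section Conservation

variable {η : Cfg} {j k m : ℕ} {x : ℤ}

lemma ballAtSeat_add_emptyAtSeat :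
    ballAtSeat j η x + emptyAtSeat j η x = if seat η x = j then 1 else 0 := by
  unfold ballAtSeat emptyAtSeat
  cases η x <;> by_cases h : seat η x = j <;> simp [h]

lemma slotDensity_eq_one_sub_sum :
    slotDensity k η x = 1 - ∑ j ∈ Icc 1 k, (ballAtSeat j η x + emptyAtSeat j η x) := by
  simp only [ballAtSeat_add_emptyAtSeat, Finset.sum_ite_eq, Finset.mem_Icc, slotDensity]
  by_cases h : seat η x = 0 ∨ k < seat η x
  · rw [if_pos h, if_neg (by omega), sub_zero]
  · rw [if_neg h, if_pos (by omega), sub_self]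

namespace HasRecords

variable (hη : HasRecords η)
include hη

lemma valR_carrier_sub_pred (hj : 1 ≤ j) :
    valR (carrier η x j) - valR (carrier η (x - 1) j) = ballAtSeat j η x - emptyAtSeat j η x := by
  by_cases h : seat η x = j
  · have hx : 1 ≤ seat η x := h ▸ hj
    rw [← h, hη.seatRules.after_self hx, hη.seatRules.before_self x hx]
    cases hb : η x <;> simp [ballAtSeat, emptyAtSeat, hb, valR]
  · rw [hη.seatRules.after_of_ne x j hj (Ne.symm h)]
    simp [ballAtSeat, emptyAtSeat, h]

variable (hη' : HasRecords (bbsT η))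
include hη'

lemma ballAtSeat_bbsT (hj : 1 ≤ j) : ballAtSeat j (bbsT η) x = emptyAtSeat j η x := by
  simp only [ballAtSeat, emptyAtSeat, hη.seat_bbsT_eq_iff hη' hj]

lemma solitonDensity_bbsT_sub (hm : 1 ≤ m) :
    solitonDensity m (bbsT η) x - solitonDensity m η x =
      solitonCurrent m η (x - 1) - solitonCurrent m η x := by
  unfold solitonDensity solitonCurrent
  rw [hη.ballAtSeat_bbsT hη' hm, hη.ballAtSeat_bbsT hη' m.succ_pos]
  linarith [hη.valR_carrier_sub_pred (x := x) hm, hη.valR_carrier_sub_pred (x := x) m.succ_pos]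

lemma slotDensity_bbsT_sub :
    slotDensity k (bbsT η) x - slotDensity k η x =
      slotCurrent k η (x - 1) - slotCurrent k η x := by
  have hsum : ∑ j ∈ Icc 1 k, (ballAtSeat j η x + emptyAtSeat j η x) -
        ∑ j ∈ Icc 1 k, (ballAtSeat j (bbsT η) x + emptyAtSeat j (bbsT η) x) =
      ∑ j ∈ Icc 1 k, (valR (carrier η x j) + valR (carrier (bbsT η) x j)) -
        ∑ j ∈ Icc 1 k, (valR (carrier η (x - 1) j) + valR (carrier (bbsT η) (x - 1) j)) := by
    rw [← Finset.sum_sub_distrib, ← Finset.sum_sub_distrib]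
    refine Finset.sum_congr rfl fun j hj => ?_
    have hj := (Finset.mem_Icc.1 hj).1
    linarith [hη.valR_carrier_sub_pred (x := x) hj, hη'.valR_carrier_sub_pred (x := x) hj,
      hη.ballAtSeat_bbsT hη' (x := x) hj]
  rw [slotDensity_eq_one_sub_sum, slotDensity_eq_one_sub_sum]
  unfold slotCurrent
  linarith

end HasRecords

namespace IsSoliton

variable {γ : Finset ℤ} {u d z : ℤ} (hγ : IsSoliton η k γ u d) (hη : HasRecords η)
include hγ

lemma signedSum_slotDensity (hz : z ∈ γ) :
    signedSum (slotDensity k η) z = signedSum (slotDensity k η) (max u d) := by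
  obtain ⟨hle, hseat⟩ := hγ.span hz
  have h := signedSum_sub (slotDensity k η) hle
  rw [Finset.sum_eq_zero fun y hy => ?_] at h
  · linarith
  · have hy := Finset.mem_Ioc.1 hy
    have := hseat y ⟨hy.1.le, hy.2⟩
    exact if_neg (by omega)

include hη

lemma slotCurrent_tail (hη' : HasRecords (bbsT η)) : slotCurrent k η d = 0 := by
  have hk := hγ.one_le
  have hd := hγ.seat_tail
  obtain ⟨hd', hb'⟩ := (hη.seat_bbsT_eq_iff hη' hk).2 ⟨hd, hγ.apply_tail⟩
  have hone : ∀ j ∈ Icc 1 k, valR (carrier η d j) + valR (carrier (bbsT η) d j) = 1 := by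
    intro j hj
    have hjk := (Finset.mem_Icc.1 hj).2
    rw [hη.seatRules.after_of_le d (hd ▸ hk) j (hd ▸ hjk), hγ.apply_tail,
      hη'.seatRules.after_of_le d (hd' ▸ hk) j (hd' ▸ hjk), hb']
    simp [valR]
  rw [slotCurrent, Finset.sum_congr rfl hone]
  simp

lemma signedSum_slotDensity_tail_sub_head (hη' : HasRecords (bbsT η)) :
    signedSum (slotDensity k η) d - signedSum (slotDensity k η) u = slotCurrent k η d := by
  rw [hγ.slotCurrent_tail hη hη', hγ.signedSum_slotDensity hγ.tail_mem,
    hγ.signedSum_slotDensity hγ.head_mem, sub_self]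

lemma signedSum_solitonDensity_tail_sub_head :
    signedSum (solitonDensity k η) d - signedSum (solitonDensity k η) u =
      solitonCurrent k η d := by
  have hvacant : carrier η d k = false := by
    have := hη.seatRules.after_self (hγ.seat_tail ▸ hγ.one_le)
    rwa [hγ.seat_tail, hγ.apply_tail] at this
  have hsucc := hγ.carrier_succ_eq hη (z := d) ⟨min_le_right _ _, le_max_right _ _⟩
  have hinner : ∀ z ∈ Set.Ioo (min u d) (max u d), solitonDensity k η z = 0 := fun z hz => by
    have := hγ.seat_lt hz
    rw [solitonDensity, ballAtSeat, ballAtSeat, if_neg (by omega), if_neg (by omega), sub_zero]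
  rw [solitonCurrent, hvacant, hsucc]
  rcases lt_or_gt_of_ne hγ.ne with h | h
  · have hd : solitonDensity k η d = 0 := by
      simp [solitonDensity, ballAtSeat, hγ.apply_tail]
    rw [max_eq_right h.le, hγ.apply_tail, signedSum_sub _ h.le, sub_self]
    refine Finset.sum_eq_zero fun z hz => ?_
    obtain ⟨hz1, hz2⟩ := Finset.mem_Ioc.1 hz
    rcases hz2.eq_or_lt with rfl | hlt
    · exact hd
    · exact hinner z ⟨(min_eq_left h.le).trans_lt hz1, hlt.trans_eq (max_eq_right h.le).symm⟩
  · have hu : solitonDensity k η u = 1 := by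
      simp [solitonDensity, ballAtSeat, hγ.apply_head, hγ.seat_head]
    have hsum := signedSum_sub (solitonDensity k η) h.le
    rw [Finset.sum_eq_single_of_mem u (Finset.mem_Ioc.2 ⟨h, le_rfl⟩) fun z hz hne => ?_] at hsum
    · rw [max_eq_left h.le, hγ.apply_head]
      simp only [valR, Bool.false_eq_true, if_false, if_true]
      linarith
    · obtain ⟨hz1, hz2⟩ := Finset.mem_Ioc.1 hz
      exact hinner z ⟨(min_eq_right h.le).trans_lt hz1,
        (hz2.lt_of_ne hne).trans_eq (max_eq_left h.le).symm⟩

end IsSoliton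

end Conservation

/-! ### The maximal ergodic inequality -/

section MaximalErgodic

/-- The maximum of the Birkhoff sums `birkhoffSum S g m` over `m ≤ n`. -/
def maxBirkhoffSum {α : Type*} (S : α → α) (g : α → ℝ) : ℕ → α → ℝ
  | 0, _ => 0
  | n + 1, x => max 0 (g x + maxBirkhoffSum S g n (S x))

variable {α : Type*} {S : α → α} {g : α → ℝ} {n : ℕ} {x : α}

lemma maxBirkhoffSum_nonneg : 0 ≤ maxBirkhoffSum S g n x := by
  cases n <;> simp [maxBirkhoffSum]

lemma maxBirkhoffSum_le_succ : maxBirkhoffSum S g n x ≤ maxBirkhoffSum S g (n + 1) x := by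
  induction n generalizing x with
  | zero => exact maxBirkhoffSum_nonneg
  | succ n ih => exact max_le_max le_rfl (by linarith [ih (x := S x)])

lemma birkhoffSum_le_maxBirkhoffSum : birkhoffSum S g n x ≤ maxBirkhoffSum S g n x := by
  induction n generalizing x with
  | zero => simp [maxBirkhoffSum]
  | succ n ih =>
    rw [maxBirkhoffSum, birkhoffSum_succ']
    exact le_max_of_le_right (by linarith [ih (x := S x)])

lemma maxBirkhoffSum_le_add_comp (hx : 0 < maxBirkhoffSum S g n x) :
    maxBirkhoffSum S g n x ≤ g x + maxBirkhoffSum S g n (S x) := by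
  cases n with
  | zero => simp [maxBirkhoffSum] at hx
  | succ n =>
    have hle := maxBirkhoffSum_le_succ (S := S) (g := g) (n := n) (x := S x)
    have hpos := (lt_max_iff.1 hx).resolve_left (lt_irrefl _)
    rw [maxBirkhoffSum, max_eq_right hpos.le]
    linarith

variable [MeasurableSpace α] {μ : Measure α}

lemma integral_comp_of_measurePreserving (hS : MeasurePreserving S μ μ) (hm : Measurable g) :
    ∫ x, g (S x) ∂μ = ∫ x, g x ∂μ := by
  rw [← integral_map hS.measurable.aemeasurable hm.aestronglyMeasurable, hS.map_eq]

lemma measurable_maxBirkhoffSum (hS : Measurable S) (hg : Measurable g) (n : ℕ) :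
    Measurable (maxBirkhoffSum S g n) := by
  induction n with
  | zero => exact measurable_const
  | succ n ih => exact measurable_const.max (hg.add (ih.comp hS))

lemma integrable_maxBirkhoffSum (hS : MeasurePreserving S μ μ) (hg : Integrable g μ) (n : ℕ) :
    Integrable (maxBirkhoffSum S g n) μ := by
  induction n with
  | zero => exact integrable_zero _ _ _
  | succ n ih => exact (integrable_zero _ _ _).sup (hg.add (hS.integrable_comp_of_integrable ih))

lemma setIntegral_maxBirkhoffSum_pos_nonneg (hS : MeasurePreserving S μ μ) (hm : Measurable g)
    (hg : Integrable g μ) (n : ℕ) : 0 ≤ ∫ x in {x | 0 < maxBirkhoffSum S g n x}, g x ∂μ := by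
  have hMm := measurable_maxBirkhoffSum hS.measurable hm n
  have hM := integrable_maxBirkhoffSum hS hg n
  have hE : MeasurableSet {x | 0 < maxBirkhoffSum S g n x} := measurableSet_lt measurable_const hMm
  have hMS : Integrable (fun x => maxBirkhoffSum S g n (S x)) μ :=
    hS.integrable_comp_of_integrable hM
  calc 0 = ∫ x, (maxBirkhoffSum S g n x - maxBirkhoffSum S g n (S x)) ∂μ := by
        rw [integral_sub hM hMS, integral_comp_of_measurePreserving hS hMm, sub_self]
    _ ≤ ∫ x, {x | 0 < maxBirkhoffSum S g n x}.indicator g x ∂μ := by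
        refine integral_mono (hM.sub hMS) (hg.indicator hE) fun x => ?_
        by_cases hx : 0 < maxBirkhoffSum S g n x
        · rw [Set.indicator_of_mem (by exact hx)]
          linarith [maxBirkhoffSum_le_add_comp hx]
        · rw [Set.indicator_of_notMem (by exact hx)]
          linarith [maxBirkhoffSum_nonneg (S := S) (g := g) (n := n) (x := S x)]
    _ = ∫ x in {x | 0 < maxBirkhoffSum S g n x}, g x ∂μ := integral_indicator hE

theorem integral_nonneg_of_ae_exists_birkhoffSum_pos (hS : MeasurePreserving S μ μ)
    (hm : Measurable g) (hg : Integrable g μ) (hpos : ∀ᵐ x ∂μ, ∃ n, 0 < birkhoffSum S g n x) :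
    0 ≤ ∫ x, g x ∂μ := by
  have hmono : Monotone fun n => {x | 0 < maxBirkhoffSum S g n x} :=
    monotone_nat_of_le_succ fun n x hx => lt_of_lt_of_le hx maxBirkhoffSum_le_succ
  have hcover : (⋃ n, {x | 0 < maxBirkhoffSum S g n x}) =ᵐ[μ] Set.univ := by
    refine eventuallyEq_univ.2 (hpos.mono fun x ⟨n, hn⟩ => ?_)
    exact Set.mem_iUnion.2 ⟨n, hn.trans_le birkhoffSum_le_maxBirkhoffSum⟩
  have hlim := tendsto_setIntegral_of_monotone
    (fun n => measurableSet_lt measurable_const (measurable_maxBirkhoffSum hS.measurable hm n))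
    hmono hg.integrableOn
  rw [setIntegral_congr_set hcover, setIntegral_univ] at hlim
  exact ge_of_tendsto' hlim (setIntegral_maxBirkhoffSum_pos_nonneg hS hm hg)

end MaximalErgodic

/-! ### Density below one half produces records -/

section Density

variable {η : Cfg} {ξ : ℤ → ℤ} {lam : ℝ}

namespace IsLift

variable (hξ : IsLift η ξ)
include hξ

lemma exists_isRecord_le (hbot : Tendsto ξ atBot atTop) {K w : ℤ} (hw : ξ w ≤ K) :
    ∃ y ≤ w, isRecord η y ∧ ξ y ≤ K := by
  obtain ⟨N, hN⟩ := eventually_atBot.1 (hbot.eventually_gt_atTop K)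
  obtain ⟨y, hy, hleast⟩ := Int.exists_least_of_bdd (P := fun z => ξ z ≤ K)
    ⟨N, fun z hz => (not_le.1 fun hzN => (hN z hzN).not_ge hz).le⟩ ⟨w, hw⟩
  exact ⟨y, hleast w hw, hξ.isRecord_iff.2 fun z hz =>
    hy.trans_lt (not_le.1 fun hzK => hz.not_ge (hleast z hzK)), hy⟩

lemma hasRecords (hbot : Tendsto ξ atBot atTop) (htop : Tendsto ξ atTop atBot) :
    HasRecords η := fun x => by
  obtain ⟨y, hyx, hy, -⟩ := hξ.exists_isRecord_le hbot (le_refl (ξ x))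
  obtain ⟨m, hm⟩ := ((Set.finite_Icc y x).image ξ).bddBelow
  have hmin : ∀ z ≤ x, m ≤ ξ z := fun z hzx => by
    rcases lt_or_ge z y with hzy | hyz
    · exact (hm ⟨y, ⟨le_rfl, hyx⟩, rfl⟩).trans (hξ.isRecord_iff.1 hy z hzy).le
    · exact hm ⟨z, ⟨hyz, hzx⟩, rfl⟩
  obtain ⟨w, hw⟩ := (htop.eventually_le_atBot (m - 1)).exists
  obtain ⟨z, -, hz, hzm⟩ := hξ.exists_isRecord_le hbot hw
  exact ⟨⟨y, hyx, hy⟩, z, le_of_not_gt fun hzx => by have := hmin z hzx.le; omega, hz⟩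

end IsLift

lemma intCast_valZ (b : Bool) : ((valZ b : ℤ) : ℝ) = valR b := by cases b <;> simp [valZ, valR]

lemma tendsto_sum_one_sub_two_mul_valZ {s : ℕ → Finset ℤ} (hs : ∀ y, #(s y) = y + 1)
    (hlam : lam < 1 / 2)
    (h : Tendsto (fun y : ℕ => (∑ x ∈ s y, valR (η x)) / (y : ℝ)) atTop (nhds lam)) :
    Tendsto (fun y => ∑ x ∈ s y, (1 - 2 * valZ (η x))) atTop atTop := by
  obtain ⟨a, hlama, ha⟩ := exists_between hlam
  refine tendsto_intCast_atTop_iff (R := ℝ) |>.1 (tendsto_atTop_mono' atTop ?_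
    (tendsto_natCast_atTop_atTop.const_mul_atTop (by linarith : 0 < 1 - 2 * a)))
  filter_upwards [h.eventually_lt_const hlama, eventually_gt_atTop 0] with y hy hy0
  rw [div_lt_iff₀ (by exact_mod_cast hy0)] at hy
  push_cast
  simp only [intCast_valZ]
  rw [Finset.sum_sub_distrib, ← Finset.mul_sum, Finset.sum_const, hs, nsmul_one]
  push_cast
  linarith

lemma IsLift.tendsto_atBot_atTop (hξ : IsLift η ξ) (hlam : lam < 1 / 2) (h : inXlam lam η) :
    Tendsto ξ atBot atTop := by
  have hsum := tendsto_sum_one_sub_two_mul_valZ (fun y => by simp; omega) hlam h.1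
  have hξy : ∀ y : ℕ, ∑ x ∈ Icc (-(y : ℤ)) 0, (1 - 2 * valZ (η x)) = ξ (-y - 1) - ξ 0 := fun y => by
    rw [← neg_sub (ξ 0), ← hξ.sum_Icc (by omega), ← Finset.sum_neg_distrib]
    simp only [neg_sub]
  refine tendsto_atTop.2 fun K => ?_
  obtain ⟨N, hN⟩ := eventually_atTop.1 (hsum.eventually_ge_atTop (K - ξ 0))
  refine eventually_atBot.2 ⟨-N - 1, fun z hz => ?_⟩
  have := hN (-z - 1).toNat (by omega)
  rw [hξy, show -((-z - 1).toNat : ℤ) - 1 = z by omega] at this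
  omega

lemma IsLift.tendsto_atTop_atBot (hξ : IsLift η ξ) (hlam : lam < 1 / 2) (h : inXlam lam η) :
    Tendsto ξ atTop atBot := by
  have hsum := tendsto_sum_one_sub_two_mul_valZ (fun y => by simp) hlam h.2
  have hξy : ∀ y : ℕ, ∑ x ∈ Icc (0 : ℤ) y, (1 - 2 * valZ (η x)) = ξ (0 - 1) - ξ y := fun y => by
    rw [← neg_sub (ξ y), ← hξ.sum_Icc (by omega), ← Finset.sum_neg_distrib]
    simp only [neg_sub]
  refine tendsto_atBot.2 fun K => ?_
  obtain ⟨N, hN⟩ := eventually_atTop.1 (hsum.eventually_ge_atTop (ξ (0 - 1) - K))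
  refine eventually_atTop.2 ⟨N, fun z hz => ?_⟩
  have := hN z.toNat (by omega)
  rw [hξy, show (z.toNat : ℤ) = z by omega] at this
  omega

lemma hasRecords_of_inXlam (hlam : lam < 1 / 2) (h : inXlam lam η) : HasRecords η :=
  (isLift_xi0 η).hasRecords ((isLift_xi0 η).tendsto_atBot_atTop hlam h)
    ((isLift_xi0 η).tendsto_atTop_atBot hlam h)

end Density

/-! ### Measurability -/

section Measurability

lemma measurable_apply (x : ℤ) : Measurable fun η : Cfg => η x := measurable_pi_apply x

lemma measurable_comp_apply {β : Type*} [MeasurableSpace β] (f : Bool → β) (x : ℤ) :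
    Measurable fun η : Cfg => f (η x) :=
  (measurable_of_countable f).comp (measurable_apply x)

lemma measurableSet_isRecord (x : ℤ) : MeasurableSet {η | isRecord η x} := by
  simp only [isRecord, Set.ofPred_forall]
  exact MeasurableSet.iInter fun z => MeasurableSet.iInter fun _ => measurableSet_lt
    (Finset.measurable_sum _ fun y _ => measurable_comp_apply valZ y)
    (Finset.measurable_sum _ fun y _ => measurable_comp_apply (1 - valZ ·) y)

lemma measurable_bbsT : Measurable bbsT := measurable_pi_lambda _ fun x => by
  classical
  exact Measurable.ite (measurableSet_isRecord x) measurable_const (measurable_comp_apply not x)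

lemma measurable_shiftBy (n : ℤ) : Measurable (shiftBy n) :=
  measurable_pi_lambda _ fun x => measurable_apply (x + n)

lemma measurableSet_inXlam (lam : ℝ) : MeasurableSet {η | inXlam lam η} :=
  MeasurableSet.inter
    (measurableSet_tendsto _ fun _ =>
      (Finset.measurable_sum _ fun x _ => measurable_comp_apply valR x).div_const _)
    (measurableSet_tendsto _ fun _ =>
      (Finset.measurable_sum _ fun x _ => measurable_comp_apply valR x).div_const _)

instance : MeasurableSpace RunStack := ⊤

instance : DiscreteMeasurableSpace RunStack := ⟨fun _ => trivial⟩

lemma measurable_stackFrom (y : ℤ) (n : ℕ) : Measurable fun η => stackFrom η y n := by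
  induction n with
  | zero => exact measurable_const
  | succ n ih =>
    exact (measurable_of_countable fun p : RunStack × Bool => p.1.step (y + n + 1, p.2)).comp
      (ih.prodMk (measurable_apply (y + n + 1)))

lemma measurable_stackAt (x : ℤ) : Measurable fun η => stackAt η x := by
  classical
  let p : ℕ → Cfg → Prop := fun n η => isRecord η (x - n) ∨ ∀ m : ℕ, ¬ isRecord η (x - m)
  have hp : ∀ n, MeasurableSet {η | p n η} := fun n => (measurableSet_isRecord _).union <| by
    change MeasurableSet {η | ∀ m : ℕ, ¬ isRecord η (x - m)}
    rw [Set.ofPred_forall]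
    exact MeasurableSet.iInter fun m => (measurableSet_isRecord _).compl
  have hex : ∀ η, ∃ n, p n η := fun η => by
    by_cases h : ∃ n : ℕ, isRecord η (x - n)
    · exact h.imp fun n hn => Or.inl hn
    · exact ⟨0, Or.inr (not_exists.1 h)⟩
  let f : ℕ → Cfg → RunStack := fun n η =>
    if isRecord η (x - n) then stackFrom η (x - n) n else []
  have hf : ∀ n, Measurable (f n) := fun n =>
    Measurable.ite (measurableSet_isRecord _) (measurable_stackFrom _ n) measurable_const
  convert Measurable.find hf hp hex using 2 with η
  unfold stackAt
  split_ifs with h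
  · have hfind : Nat.find (hex η) = Nat.find h :=
      Nat.find_congr' fun {n} => ⟨fun hn => hn.resolve_right (not_forall_not.2 h), Or.inl⟩
    rw [hfind]
    exact (if_pos (Nat.find_spec h)).symm
  · exact (if_neg fun hr => h ⟨_, hr⟩).symm

lemma measurable_carrier (x : ℤ) (j : ℕ) : Measurable fun η => carrier η x j :=
  (measurable_of_countable fun st : RunStack => st.occupied j).comp (measurable_stackAt x)

lemma measurable_seat (x : ℤ) : Measurable fun η => seat η x :=
  (measurable_of_countable fun p : RunStack × Bool => (push p.1 (x, p.2)).1.length).comp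
    ((measurable_stackAt (x - 1)).prodMk (measurable_apply x))

lemma measurable_valR_carrier (x : ℤ) (j : ℕ) : Measurable fun η => valR (carrier η x j) :=
  (measurable_of_countable valR).comp (measurable_carrier x j)

lemma measurable_comp_seat_apply (f : ℕ × Bool → ℝ) (x : ℤ) :
    Measurable fun η => f (seat η x, η x) :=
  (measurable_of_countable f).comp ((measurable_seat x).prodMk (measurable_apply x))

lemma measurable_ballAtSeat (j : ℕ) (x : ℤ) : Measurable fun η => ballAtSeat j η x :=
  measurable_comp_seat_apply (fun p => if p.1 = j ∧ p.2 = true then 1 else 0) x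

lemma measurable_emptyAtSeat (j : ℕ) (x : ℤ) : Measurable fun η => emptyAtSeat j η x :=
  measurable_comp_seat_apply (fun p => if p.1 = j ∧ p.2 = false then 1 else 0) x

lemma measurable_solitonDensity (m : ℕ) (x : ℤ) : Measurable fun η => solitonDensity m η x :=
  (measurable_ballAtSeat m x).sub (measurable_ballAtSeat (m + 1) x)

lemma measurable_solitonCurrent (m : ℕ) (x : ℤ) : Measurable fun η => solitonCurrent m η x :=
  (measurable_valR_carrier x m).sub (measurable_valR_carrier x (m + 1))

lemma measurable_slotDensity (k : ℕ) (x : ℤ) : Measurable fun η => slotDensity k η x :=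
  measurable_comp_seat_apply (fun p => if p.1 = 0 ∨ k < p.1 then 1 else 0) x

lemma measurable_slotCurrent (k : ℕ) (x : ℤ) : Measurable fun η => slotCurrent k η x :=
  measurable_const.sub (Finset.measurable_sum _ fun j _ =>
    (measurable_valR_carrier x j).add ((measurable_valR_carrier x j).comp measurable_bbsT))

end Measurability

/-! ### Invariant ergodic measures -/

section IsErgodicInvariant

/-- The standing assumptions on a measure on configurations: it is a probability measure, invariant
under the box-ball dynamics, ergodic for the shift, and carried by configurations of density in
`(0, 1/2)` all of whose iterates have records in both directions. -/
structure IsErgodicInvariant (mu : Measure Cfg) : Prop where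
  isProbabilityMeasure : IsProbabilityMeasure mu
  measurePreserving_bbsT : MeasurePreserving bbsT mu mu
  ergodic_shiftC : Ergodic shiftC mu
  ae_alwaysHasRecords : ∀ᵐ η ∂mu, AlwaysHasRecords η
  ae_inX : ∀ᵐ η ∂mu, inX η

lemma shiftBy_shiftBy (n m : ℤ) (η : Cfg) : shiftBy n (shiftBy m η) = shiftBy (n + m) η :=
  funext fun x => congrArg η (by ring)

lemma shiftBy_zero (η : Cfg) : shiftBy 0 η = η := funext fun x => congrArg η (add_zero x)

variable {mu : Measure Cfg}

lemma measurePreserving_shiftBy (hmu : MeasurePreserving shiftC mu mu) (n : ℤ) :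
    MeasurePreserving (shiftBy n) mu mu := by
  have hinv : shiftBy (-1) ∘ shiftC = id :=
    funext fun η => (shiftBy_shiftBy (-1) 1 η).trans (shiftBy_zero η)
  have hneg : MeasurePreserving (shiftBy (-1)) mu mu := by
    refine ⟨measurable_shiftBy _, ?_⟩
    conv_lhs => rw [← hmu.map_eq]
    rw [Measure.map_map (measurable_shiftBy _) hmu.measurable, hinv, Measure.map_id]
  induction n using Int.induction_on with
  | zero => exact (funext shiftBy_zero : shiftBy 0 = id) ▸ MeasurePreserving.id mu
  | succ i ih => exact (funext (shiftBy_shiftBy i 1) : shiftBy i ∘ shiftC = _) ▸ ih.comp hmu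
  | pred i ih =>
    exact (funext (shiftBy_shiftBy (-i) (-1)) : shiftBy (-i) ∘ shiftBy (-1) = _) ▸ ih.comp hneg

lemma IsErgodicInvariant.measurePreserving_shiftBy (hmu : IsErgodicInvariant mu) (n : ℤ) :
    MeasurePreserving (shiftBy n) mu mu :=
  _root_.measurePreserving_shiftBy hmu.ergodic_shiftC.toMeasurePreserving n

lemma IsErgodicInvariant.integral_apply_eq (hmu : IsErgodicInvariant mu) {F : Cfg → ℤ → ℝ}
    (hm : Measurable fun η => F η 0)
    (hF : ∀ {η}, AlwaysHasRecords η → ∀ n x, F (shiftBy n η) x = F η (x + n)) (x : ℤ) :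
    ∫ η, F η x ∂mu = ∫ η, F η 0 ∂mu := by
  rw [← integral_comp_of_measurePreserving (hmu.measurePreserving_shiftBy x) hm]
  refine integral_congr_ae ?_
  filter_upwards [hmu.ae_alwaysHasRecords] with η hη
  rw [hF hη, zero_add]

lemma isErgodicInvariant_of_inXlam [IsProbabilityMeasure mu] {lam : ℝ} (h0 : 0 < lam)
    (h1 : lam < 1 / 2) (hsupp : mu {η | inXlam lam η} = 1) (hT : mu.map bbsT = mu)
    (herg : Ergodic shiftC mu) : IsErgodicInvariant mu := by
  have hT' : MeasurePreserving bbsT mu mu := ⟨measurable_bbsT, hT⟩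
  have hae : ∀ᵐ η ∂mu, inXlam lam η := (prob_compl_eq_zero_iff (measurableSet_inXlam lam)).2 hsupp
  refine ⟨inferInstance, hT', herg, ae_all_iff.2 fun t => ?_,
    hae.mono fun η h => ⟨lam, h0, h1, h⟩⟩
  exact ((hT'.iterate t).quasiMeasurePreserving.ae hae).mono fun η => hasRecords_of_inXlam h1

end IsErgodicInvariant

/-! ### Birkhoff averages along a transformation commuting with an ergodic one -/

section BirkhoffAverage

variable {α : Type*} [MeasurableSpace α] {μ : Measure α} {S R : α → α} {g : α → ℝ} {M : ℝ}

lemma ae_bddAbove_or_ae_not_bddAbove_of_ergodic {X : ℕ → α → ℝ} (hS : Ergodic S μ)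
    (hX : ∀ i, Measurable (X i)) (hM : ∀ᵐ x ∂μ, ∀ i, |X i (S x) - X i x| ≤ M) :
    (∀ᵐ x ∂μ, BddAbove (Set.range fun i => X i x)) ∨
      ∀ᵐ x ∂μ, ¬ BddAbove (Set.range fun i => X i x) := by
  refine eventuallyConst_set.1 (hS.quasiErgodic.aeconst_set₀
    (s := {x | BddAbove (Set.range fun i => X i x)})
    (measurableSet_bddAbove_range hX).nullMeasurableSet (eventuallyEq_set.2 ?_))
  filter_upwards [hM] with x hx
  constructor <;> rintro ⟨c, hc⟩ <;> refine ⟨c + M, Set.forall_mem_range.2 fun i => ?_⟩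
  · linarith [hc (Set.mem_range_self i), (abs_le.1 (hx i)).1]
  · linarith [hc (Set.mem_range_self i), (abs_le.1 (hx i)).2]

lemma measurable_birkhoffSum (hR : Measurable R) (hm : Measurable g) (i : ℕ) :
    Measurable (birkhoffSum R g i) :=
  Finset.measurable_sum _ fun n _ => hm.comp (hR.iterate n)

lemma ae_bddAbove_birkhoffSum_of_integral_neg (hS : Ergodic S μ) (hR : MeasurePreserving R μ μ)
    (hm : Measurable g) (hg : Integrable g μ)
    (hM : ∀ᵐ x ∂μ, ∀ i, |birkhoffSum R g i (S x) - birkhoffSum R g i x| ≤ M)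
    (hneg : ∫ x, g x ∂μ < 0) :
    ∀ᵐ x ∂μ, BddAbove (Set.range fun i => birkhoffSum R g i x) := by
  refine (ae_bddAbove_or_ae_not_bddAbove_of_ergodic hS
    (fun i => measurable_birkhoffSum hR.measurable hm i) hM).resolve_right fun h => ?_
  refine hneg.not_ge (integral_nonneg_of_ae_exists_birkhoffSum_pos hR hm hg ?_)
  filter_upwards [h] with x hx
  by_contra! hle
  exact hx ⟨0, Set.forall_mem_range.2 hle⟩

variable [IsProbabilityMeasure μ]

lemma ae_eventually_birkhoffSum_div_lt (hS : Ergodic S μ) (hR : MeasurePreserving R μ μ)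
    (hm : Measurable g) (hg : Integrable g μ)
    (hM : ∀ᵐ x ∂μ, ∀ i, |birkhoffSum R g i (S x) - birkhoffSum R g i x| ≤ M) :
    ∀ᵐ x ∂μ, ∀ b > ∫ x, g x ∂μ, ∀ᶠ i : ℕ in atTop, birkhoffSum R g i x / i < b := by
  have hconst (r : ℝ) (i : ℕ) (x : α) :
      birkhoffSum R (fun x => g x - r) i x = birkhoffSum R g i x - i * r := by
    simp [birkhoffSum, Finset.sum_sub_distrib]
  have hbdd : ∀ᵐ x ∂μ, ∀ r : ℚ, ∫ x, g x ∂μ < r →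
      BddAbove (Set.range fun i : ℕ => birkhoffSum R g i x - i * r) := by
    refine ae_all_iff.2 fun r => eventually_imp_distrib_left.2 fun hr => ?_
    have := ae_bddAbove_birkhoffSum_of_integral_neg (g := fun x => g x - r) hS hR
      (hm.sub_const _) (hg.sub (integrable_const _))
      (by simpa only [hconst, sub_sub_sub_cancel_right] using hM)
      (by rw [integral_sub hg (integrable_const _)]; simpa using hr)
    simpa only [hconst] using this
  filter_upwards [hbdd] with x hx b hb
  obtain ⟨r, hr, hrb⟩ := exists_rat_btwn hb
  obtain ⟨c, hc⟩ := hx r hr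
  have hlim : Tendsto (fun i : ℕ => r + c / (i : ℝ)) atTop (nhds (r + 0)) :=
    tendsto_const_nhds.add (tendsto_const_div_atTop_nhds_zero_nat c)
  rw [add_zero] at hlim
  filter_upwards [hlim.eventually_lt_const hrb, eventually_gt_atTop 0] with i hi hi0
  have hi0 : (0 : ℝ) < i := Nat.cast_pos.2 hi0
  refine lt_of_le_of_lt ?_ hi
  rw [div_le_iff₀ hi0, add_mul, div_mul_cancel₀ c hi0.ne']
  linarith [hc (Set.mem_range_self i)]

theorem ae_tendsto_birkhoffSum_div (hS : Ergodic S μ) (hR : MeasurePreserving R μ μ)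
    (hm : Measurable g) (hg : Integrable g μ)
    (hM : ∀ᵐ x ∂μ, ∀ i, |birkhoffSum R g i (S x) - birkhoffSum R g i x| ≤ M) :
    ∀ᵐ x ∂μ, Tendsto (fun i : ℕ => birkhoffSum R g i x / i) atTop (nhds (∫ x, g x ∂μ)) := by
  have hneg (i : ℕ) (x : α) : birkhoffSum R (fun x => -g x) i x = -birkhoffSum R g i x :=
    birkhoffSum_neg R g i x
  have hMneg : ∀ᵐ x ∂μ, ∀ i, |birkhoffSum R (fun x => -g x) i (S x) -
      birkhoffSum R (fun x => -g x) i x| ≤ M := by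
    filter_upwards [hM] with x hx i
    rw [hneg, hneg, neg_sub_neg, abs_sub_comm]
    exact hx i
  filter_upwards [ae_eventually_birkhoffSum_div_lt hS hR hm hg hM,
    ae_eventually_birkhoffSum_div_lt (g := fun x => -g x) hS hR hm.neg hg.neg hMneg] with x hlt hgt
  refine tendsto_order.2 ⟨fun a ha => ?_, hlt⟩
  filter_upwards [hgt (-a) (by rw [integral_neg]; exact neg_lt_neg ha)] with i hi
  rw [hneg, neg_div] at hi
  exact neg_lt_neg_iff.1 hi

end BirkhoffAverage

/-! ### Height functions of conservation laws -/

section HeightFunction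

/-- The density `f` and the current `h` form a local conservation law of the box-ball dynamics:
they are measurable, bounded by `C` and shift covariant, and the change of the density at a site
in one step is the current entering from the left minus the current leaving to the right. -/
structure IsConservationLaw (f h : Cfg → ℤ → ℝ) (C : ℝ) : Prop where
  density_bbsT_sub : ∀ {η}, AlwaysHasRecords η → ∀ x, f (bbsT η) x - f η x = h η (x - 1) - h η x
  density_shiftBy : ∀ {η}, AlwaysHasRecords η → ∀ n x, f (shiftBy n η) x = f η (x + n)
  current_shiftBy : ∀ {η}, AlwaysHasRecords η → ∀ n x, h (shiftBy n η) x = h η (x + n)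
  abs_density_le : ∀ η x, |f η x| ≤ C
  abs_current_le : ∀ η x, |h η x| ≤ C
  measurable_density : ∀ x, Measurable fun η => f η x
  measurable_current : ∀ x, Measurable fun η => h η x

/-- The height function of a conservation law with density `f` and current `h`: the flux across the
space-time path `(0, 0) → (0, t) → (n, t)`. By conservation, any other path with the same endpoints
gives the same flux. -/
noncomputable def heightFunction (f h : Cfg → ℤ → ℝ) (t : ℕ) (n : ℤ) (η : Cfg) : ℝ :=
  signedSum (f (bbsT^[t] η)) n - ∑ s ∈ range t, h (bbsT^[s] η) 0

variable {f h : Cfg → ℤ → ℝ} {C : ℝ} {η : Cfg}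

lemma heightFunction_zero_zero : heightFunction f h 0 0 η = 0 := by simp [heightFunction]

lemma heightFunction_add_right (t : ℕ) (n m : ℤ) :
    heightFunction f h t (n + m) η =
      heightFunction f h t n η + signedSum (fun x => f (bbsT^[t] η) (x + n)) m := by
  rw [heightFunction, signedSum_add, heightFunction]
  ring

lemma monotone_heightFunction (hf : ∀ η x, 0 ≤ f η x) (t : ℕ) :
    Monotone fun n => heightFunction f h t n η := fun a b hab => by
  have := signedSum_sub (f (bbsT^[t] η)) hab
  have := Finset.sum_nonneg fun x (_ : x ∈ Ioc a b) => hf (bbsT^[t] η) x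
  simp only [heightFunction]
  linarith

namespace IsConservationLaw

variable (F : IsConservationLaw f h C)
include F

lemma bound_nonneg : 0 ≤ C := (abs_nonneg _).trans (F.abs_density_le (fun _ => false) 0)

lemma signedSum_density_bbsT (hη : AlwaysHasRecords η) (n : ℤ) :
    signedSum (f (bbsT η)) n = signedSum (f η) n + h η 0 - h η n := by
  refine congrFun (eq_of_forall_sub_pred_eq (h := fun n => signedSum (f η) n + h η 0 - h η n)
    (by simp) fun n => ?_) n
  linarith [signedSum_eq_add_pred (f (bbsT η)) n, signedSum_eq_add_pred (f η) n,
    F.density_bbsT_sub hη n]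

lemma heightFunction_succ (hη : AlwaysHasRecords η) (t : ℕ) (n : ℤ) :
    heightFunction f h (t + 1) n η = heightFunction f h t n η - h (bbsT^[t] η) n := by
  unfold heightFunction
  rw [Function.iterate_succ_apply', F.signedSum_density_bbsT (hη.iterate t),
    Finset.sum_range_succ]
  ring

lemma heightFunction_add_left (hη : AlwaysHasRecords η) (t s : ℕ) (n : ℤ) :
    heightFunction f h (t + s) n η =
      heightFunction f h t n η - ∑ r ∈ range s, h (bbsT^[r] (bbsT^[t] η)) n := by
  induction s with
  | zero => simp
  | succ s ih =>
    rw [← add_assoc, F.heightFunction_succ hη, ih, Finset.sum_range_succ,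
      ← Function.iterate_add_apply, add_comm s t]
    ring

lemma heightFunction_add_add (hη : AlwaysHasRecords η) (t s : ℕ) (n m : ℤ) :
    heightFunction f h (t + s) (n + m) η =
      heightFunction f h t n η + heightFunction f h s m (shiftBy n (bbsT^[t] η)) := by
  have hdensity : f (bbsT^[s] (shiftBy n (bbsT^[t] η))) =
      fun x => f (bbsT^[t + s] η) (x + n) := funext fun x => by
    rw [iterate_bbsT_shiftBy, F.density_shiftBy ((hη.iterate t).iterate s),
      ← Function.iterate_add_apply, add_comm s t]
  have hcurrent (r : ℕ) : h (bbsT^[r] (shiftBy n (bbsT^[t] η))) 0 =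
      h (bbsT^[r] (bbsT^[t] η)) n := by
    rw [iterate_bbsT_shiftBy, F.current_shiftBy ((hη.iterate t).iterate r), zero_add]
  rw [heightFunction_add_right, F.heightFunction_add_left hη, heightFunction.eq_def f h s m,
    hdensity, Finset.sum_congr rfl fun r _ => hcurrent r]
  ring

lemma abs_sum_current_le (s : Finset ℕ) (g : ℕ → Cfg) (n : ℤ) :
    |∑ r ∈ s, h (g r) n| ≤ C * #s := by
  rw [mul_comm, ← nsmul_eq_mul]
  exact (Finset.abs_sum_le_sum_abs _ _).trans
    (Finset.sum_le_card_nsmul _ _ _ fun _ _ => F.abs_current_le _ _)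

lemma abs_heightFunction_le (t : ℕ) (n : ℤ) (η : Cfg) :
    |heightFunction f h t n η| ≤ C * (|(n : ℝ)| + t) := by
  have hsum := F.abs_sum_current_le (range t) (fun s => bbsT^[s] η) 0
  rw [card_range] at hsum
  rw [mul_add]
  exact (abs_sub _ _).trans (add_le_add (abs_signedSum_le (F.abs_density_le _) n) hsum)

lemma abs_heightFunction_sub_le (hη : AlwaysHasRecords η) {s t : ℕ} (hst : s ≤ t) (n m : ℤ) :
    |heightFunction f h t n η - heightFunction f h s m η| ≤ C * (|(n : ℝ) - m| + (t - s)) := by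
  have := F.heightFunction_add_add hη s (t - s) m (n - m)
  rw [add_sub_cancel, Nat.add_sub_cancel' hst] at this
  rw [this, add_sub_cancel_left]
  simpa only [Int.cast_sub, Nat.cast_sub hst] using F.abs_heightFunction_le (t - s) (n - m) _

lemma abs_heightFunction_shiftC_sub_le (hη : AlwaysHasRecords η) (t : ℕ) (n : ℤ) :
    |heightFunction f h t n (shiftC η) - heightFunction f h t n η| ≤ 2 * C := by
  have hfirst := F.heightFunction_add_add hη 0 t 1 n
  have hlast := F.heightFunction_add_add hη t 0 n 1
  rw [zero_add, Function.iterate_zero_apply] at hfirst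
  rw [add_zero, add_comm n 1] at hlast
  have b₁ := F.abs_heightFunction_le 0 1 η
  have b₂ := F.abs_heightFunction_le 0 1 (shiftBy n (bbsT^[t] η))
  simp only [Int.cast_one, abs_one, Nat.cast_zero, add_zero, mul_one] at b₁ b₂
  change |heightFunction f h t n (shiftBy 1 η) - _| ≤ _
  rw [abs_le] at *
  constructor <;> linarith

lemma measurable_heightFunction (t : ℕ) (n : ℤ) : Measurable (heightFunction f h t n) :=
  have hdensity (s : Finset ℤ) : Measurable fun η => ∑ x ∈ s, f (bbsT^[t] η) x :=
    Finset.measurable_sum _ fun x _ => (F.measurable_density x).comp (measurable_bbsT.iterate t)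
  ((hdensity _).sub (hdensity _)).sub <| Finset.measurable_sum _ fun s _ =>
    (F.measurable_current 0).comp (measurable_bbsT.iterate s)

lemma birkhoffSum_heightFunction (hη : AlwaysHasRecords η) (p : ℤ) (q i : ℕ) :
    birkhoffSum (fun η => shiftBy p (bbsT^[q] η)) (heightFunction f h q p) i η =
      heightFunction f h (q * i) (p * i) η := by
  induction i generalizing η with
  | zero => simp [heightFunction_zero_zero]
  | succ i ih =>
    rw [birkhoffSum_succ', ih ((hη.iterate q).shift p), ← F.heightFunction_add_add hη,
      Nat.cast_succ, mul_add_one, mul_add_one, add_comm q, add_comm p]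

variable {mu : Measure Cfg} (hmu : IsErgodicInvariant mu)
include hmu

lemma integral_sum_density (t : ℕ) (s : Finset ℤ) :
    Integrable (fun η => ∑ x ∈ s, f (bbsT^[t] η) x) mu ∧
      ∫ η, ∑ x ∈ s, f (bbsT^[t] η) x ∂mu = #s * ∫ η, f η 0 ∂mu := by
  have := hmu.isProbabilityMeasure
  have hint (x : ℤ) : Integrable (fun η => f (bbsT^[t] η) x) mu :=
    .of_bound ((F.measurable_density x).comp (measurable_bbsT.iterate t)).aestronglyMeasurable C
      (ae_of_all _ fun _ => F.abs_density_le _ _)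
  refine ⟨integrable_finsetSum _ fun x _ => hint x, ?_⟩
  rw [integral_finsetSum _ fun x _ => hint x, ← nsmul_eq_mul]
  refine Finset.sum_eq_card_nsmul fun x _ => ?_
  exact (integral_comp_of_measurePreserving (hmu.measurePreserving_bbsT.iterate t)
    (F.measurable_density x)).trans
    (hmu.integral_apply_eq (F.measurable_density 0) F.density_shiftBy x)

lemma integral_sum_current (t : ℕ) :
    Integrable (fun η => ∑ s ∈ range t, h (bbsT^[s] η) 0) mu ∧
      ∫ η, ∑ s ∈ range t, h (bbsT^[s] η) 0 ∂mu = t * ∫ η, h η 0 ∂mu := by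
  have := hmu.isProbabilityMeasure
  have hint (s : ℕ) : Integrable (fun η => h (bbsT^[s] η) 0) mu :=
    .of_bound ((F.measurable_current 0).comp (measurable_bbsT.iterate s)).aestronglyMeasurable C
      (ae_of_all _ fun _ => F.abs_current_le _ _)
  refine ⟨integrable_finsetSum _ fun s _ => hint s, ?_⟩
  rw [integral_finsetSum _ fun s _ => hint s]
  simp only [integral_comp_of_measurePreserving (hmu.measurePreserving_bbsT.iterate _)
    (F.measurable_current 0), Finset.sum_const, card_range, nsmul_eq_mul]

lemma integral_heightFunction (t : ℕ) (n : ℤ) :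
    ∫ η, heightFunction f h t n η ∂mu = n * ∫ η, f η 0 ∂mu - t * ∫ η, h η 0 ∂mu := by
  obtain ⟨hi₁, he₁⟩ := F.integral_sum_density hmu t (Ioc 0 n)
  obtain ⟨hi₂, he₂⟩ := F.integral_sum_density hmu t (Ioc n 0)
  obtain ⟨hi₃, he₃⟩ := F.integral_sum_current hmu t
  have hcard : (n : ℝ) = #(Ioc 0 n) - #(Ioc n 0) := by
    rw [Int.card_Ioc, Int.card_Ioc]
    exact_mod_cast (by omega : n = ((n - 0).toNat : ℤ) - ((0 - n).toNat : ℤ))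
  unfold heightFunction signedSum
  rw [integral_sub (by exact hi₁.sub hi₂) hi₃, integral_sub hi₁ hi₂, he₁, he₂, he₃, hcard, sub_mul]

lemma ae_tendsto_heightFunction_mul_div (p : ℤ) (q : ℕ) :
    ∀ᵐ η ∂mu, Tendsto (fun i : ℕ => heightFunction f h (q * i) (p * i) η / i) atTop
      (nhds (p * ∫ η, f η 0 ∂mu - q * ∫ η, h η 0 ∂mu)) := by
  have := hmu.isProbabilityMeasure
  have hR : MeasurePreserving (fun η => shiftBy p (bbsT^[q] η)) mu mu :=
    (hmu.measurePreserving_shiftBy p).comp (hmu.measurePreserving_bbsT.iterate q)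
  have hm := F.measurable_heightFunction q p
  have hM : ∀ᵐ η ∂mu, ∀ i,
      |birkhoffSum (fun η => shiftBy p (bbsT^[q] η)) (heightFunction f h q p) i (shiftC η) -
        birkhoffSum (fun η => shiftBy p (bbsT^[q] η)) (heightFunction f h q p) i η| ≤ 2 * C := by
    filter_upwards [hmu.ae_alwaysHasRecords] with η hη i
    have hη' : AlwaysHasRecords (shiftC η) := hη.shift 1
    rw [F.birkhoffSum_heightFunction hη',
      F.birkhoffSum_heightFunction hη]
    exact F.abs_heightFunction_shiftC_sub_le hη _ _
  have hlim := ae_tendsto_birkhoffSum_div hmu.ergodic_shiftC hR hm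
    (.of_bound hm.aestronglyMeasurable _ (ae_of_all _ (F.abs_heightFunction_le q p))) hM
  filter_upwards [hlim, hmu.ae_alwaysHasRecords] with η hlim hη
  simpa only [F.birkhoffSum_heightFunction hη, F.integral_heightFunction hmu] using hlim

end IsConservationLaw

lemma tendsto_natCast_div_div_atTop (q : ℕ) :
    Tendsto (fun t : ℕ => ((t / q : ℕ) : ℝ) / t) atTop (nhds (1 / q)) := by
  have := (tendsto_nat_floor_mul_div_atTop (R := ℝ) (a := 1 / q) (by positivity)).comp
    tendsto_natCast_atTop_atTop
  refine this.congr fun t => ?_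
  rw [Function.comp_apply, one_div_mul_eq_div, Nat.floor_div_eq_div]

lemma tendsto_intCast_floor_mul_div_atTop (a : ℝ) :
    Tendsto (fun t : ℕ => (⌊a * t⌋ : ℝ) / t) atTop (nhds a) := by
  have hlower : Tendsto (fun t : ℕ => a - 1 / (t : ℝ)) atTop (nhds a) := by
    simpa using (tendsto_const_nhds (x := a)).sub (tendsto_const_div_atTop_nhds_zero_nat (1 : ℝ))
  refine tendsto_of_tendsto_of_tendsto_of_le_of_le' hlower tendsto_const_nhds ?_ ?_ <;>
    filter_upwards [eventually_gt_atTop 0] with t ht <;>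
    have ht : (0 : ℝ) < t := Nat.cast_pos.2 ht
  · rw [le_div_iff₀ ht, sub_mul, one_div_mul_cancel ht.ne']
    exact (Int.sub_one_lt_floor _).le
  · exact (div_le_iff₀ ht).2 (Int.floor_le _)

namespace IsConservationLaw

variable (F : IsConservationLaw f h C)
include F

lemma eventually_abs_heightFunction_div_sub_lt {Ef Eh a e : ℝ} (hη : AlwaysHasRecords η) {r : ℚ}
    (hray : Tendsto (fun i : ℕ => heightFunction f h (r.den * i) (r.num * i) η / i) atTop
      (nhds (r.num * Ef - r.den * Eh))) {n : ℕ → ℤ}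
    (hn : Tendsto (fun t => (n t : ℝ) / t) atTop (nhds a)) (he : (C + |Ef|) * |a - r| < e) :
    ∀ᶠ t : ℕ in atTop, |heightFunction f h t (n t) η / t - (a * Ef - Eh)| < e := by
  set p := r.num
  set q := r.den
  have hq : (q : ℝ) ≠ 0 := Nat.cast_ne_zero.2 r.den_ne_zero
  have hpq : (p : ℝ) * (1 / q) = r := by rw [mul_one_div]; exact (Rat.cast_def r).symm
  have hfrac := tendsto_natCast_div_div_atTop q
  have hfloor : Tendsto (fun t : ℕ => t / q) atTop atTop :=
    Nat.tendsto_div_const_atTop r.den_ne_zero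
  have happrox : Tendsto (fun t : ℕ => heightFunction f h (q * (t / q)) (p * (t / q : ℕ)) η / t)
      atTop (nhds (r * Ef - Eh)) := by
    have := (hray.comp hfloor).mul hfrac
    rw [show (p * Ef - q * Eh) * (1 / (q : ℝ)) = r * Ef - Eh by rw [← hpq]; field_simp] at this
    refine this.congr' ?_
    filter_upwards [hfloor.eventually_ne_atTop 0] with t ht
    exact div_mul_div_cancel₀ (Nat.cast_ne_zero.2 ht)
  have herror : Tendsto (fun t : ℕ => C * (|(n t : ℝ) / t - p * ((t / q : ℕ) / t)| + q / t))
      atTop (nhds (C * |a - r|)) := by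
    have := ((hn.sub (hfrac.const_mul (p : ℝ))).abs.add
      (tendsto_const_div_atTop_nhds_zero_nat (q : ℝ))).const_mul C
    rwa [add_zero, hpq] at this
  have htotal := herror.add (happrox.sub_const (a * Ef - Eh)).abs
  have hlimit : C * |a - r| + |r * Ef - Eh - (a * Ef - Eh)| = (C + |Ef|) * |a - r| := by
    rw [show (r : ℝ) * Ef - Eh - (a * Ef - Eh) = -(Ef * (a - r)) by ring, abs_neg, abs_mul]
    ring
  filter_upwards [htotal.eventually_lt_const (hlimit.trans_lt he), eventually_gt_atTop 0]
    with t ht ht0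
  have ht0 : (0 : ℝ) < t := Nat.cast_pos.2 ht0
  refine ((abs_sub_le _ _ _).trans (add_le_add_left ?_ _)).trans_lt ht
  have hdiv : (t : ℝ) - (q * (t / q) : ℕ) ≤ q := by
    have : t < q * (t / q) + q := Nat.lt_mul_div_succ t r.den_pos
    exact sub_le_iff_le_add'.2 (by exact_mod_cast this.le)
  rw [← sub_div, abs_div, abs_of_pos ht0, div_le_iff₀ ht0]
  refine (F.abs_heightFunction_sub_le hη (Nat.mul_div_le t q) _ _).trans ?_
  rw [mul_assoc, add_mul, div_mul_cancel₀ _ ht0.ne', ← abs_of_pos ht0, ← abs_mul, abs_of_pos ht0,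
    ← mul_div_assoc, ← sub_div, div_mul_cancel₀ _ ht0.ne', Int.cast_mul, Int.cast_natCast]
  exact mul_le_mul_of_nonneg_left (by gcongr) F.bound_nonneg

theorem ae_tendsto_heightFunction_div {mu : Measure Cfg} (hmu : IsErgodicInvariant mu) :
    ∀ᵐ η ∂mu, ∀ (a : ℝ) (n : ℕ → ℤ), Tendsto (fun t => (n t : ℝ) / t) atTop (nhds a) →
      Tendsto (fun t : ℕ => heightFunction f h t (n t) η / t) atTop
        (nhds (a * ∫ η, f η 0 ∂mu - ∫ η, h η 0 ∂mu)) := by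
  have hray : ∀ᵐ η ∂mu, ∀ r : ℚ,
      Tendsto (fun i : ℕ => heightFunction f h (r.den * i) (r.num * i) η / i) atTop
        (nhds (r.num * ∫ η, f η 0 ∂mu - r.den * ∫ η, h η 0 ∂mu)) :=
    ae_all_iff.2 fun r => F.ae_tendsto_heightFunction_mul_div hmu r.num r.den
  filter_upwards [hray, hmu.ae_alwaysHasRecords] with η hray hη a n hn
  refine Metric.tendsto_nhds.2 fun e he => ?_
  have hpos : 0 < C + |∫ η, f η 0 ∂mu| + 1 := by
    linarith [F.bound_nonneg, abs_nonneg (∫ η, f η 0 ∂mu)]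
  obtain ⟨r, hr⟩ := Rat.denseRange_cast.exists_dist_lt a (div_pos he hpos)
  rw [Real.dist_eq, lt_div_iff₀ hpos] at hr
  exact F.eventually_abs_heightFunction_div_sub_lt hη (hray r) hn
    (by linarith [abs_nonneg (a - r)])

end IsConservationLaw

lemma tendsto_div_of_monotone_of_eq {Φ : ℕ → ℤ → ℝ} {α β K : ℝ} {n : ℕ → ℤ}
    (hmono : ∀ t, Monotone (Φ t)) (hα : 0 < α)
    (hΦ : ∀ b : ℝ, Tendsto (fun t : ℕ => Φ t ⌊b * t⌋ / t) atTop (nhds (b * α - β)))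
    (hK : ∀ t, Φ t (n t) = K) : Tendsto (fun t => (n t : ℝ) / t) atTop (nhds (β / α)) := by
  have hdiff (b : ℝ) : Tendsto (fun t : ℕ => (Φ t ⌊b * t⌋ - K) / t) atTop (nhds (b * α - β)) := by
    simpa only [sub_div, sub_zero] using
      (hΦ b).sub (tendsto_const_div_atTop_nhds_zero_nat K)
  refine tendsto_order.2 ⟨fun a ha => ?_, fun a ha => ?_⟩
  · obtain ⟨b, hab, hb⟩ := exists_between ha
    filter_upwards [(hdiff b).eventually_lt_const (sub_neg.2 ((lt_div_iff₀ hα).1 hb)),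
      eventually_gt_atTop 0] with t ht ht0
    have ht0 : (0 : ℝ) < t := Nat.cast_pos.2 ht0
    have hlt : Φ t ⌊b * t⌋ < Φ t (n t) := by
      rw [hK]
      exact sub_neg.1 ((div_lt_iff₀ ht0).1 ht |>.trans_eq (zero_mul _))
    exact hab.trans ((lt_div_iff₀ ht0).2 (Int.floor_lt.1 ((hmono t).reflect_lt hlt)))
  · obtain ⟨b, hb, hba⟩ := exists_between ha
    filter_upwards [(hdiff b).eventually_const_lt (sub_pos.2 ((div_lt_iff₀ hα).1 hb)),
      eventually_gt_atTop 0] with t ht ht0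
    have ht0 : (0 : ℝ) < t := Nat.cast_pos.2 ht0
    have hlt : Φ t (n t) < Φ t ⌊b * t⌋ := by
      rw [hK]
      exact sub_pos.1 ((div_pos_iff_of_pos_right ht0).1 ht)
    exact ((div_le_iff₀ ht0).2 (Int.le_floor.1 ((hmono t).reflect_lt hlt).le)).trans_lt hba

theorem IsConservationLaw.ae_tendsto_div_of_heightFunction_eq (F : IsConservationLaw f h C)
    {mu : Measure Cfg} (hmu : IsErgodicInvariant mu) (hf : ∀ η x, 0 ≤ f η x)
    (hpos : 0 < ∫ η, f η 0 ∂mu) :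
    ∀ᵐ η ∂mu, ∀ (K : ℝ) (n : ℕ → ℤ), (∀ t, heightFunction f h t (n t) η = K) →
      Tendsto (fun t => (n t : ℝ) / t) atTop
        (nhds ((∫ η, h η 0 ∂mu) / ∫ η, f η 0 ∂mu)) := by
  filter_upwards [F.ae_tendsto_heightFunction_div hmu] with η hη K n hn
  exact tendsto_div_of_monotone_of_eq (fun t => monotone_heightFunction hf t) hpos
    (fun b => hη b _ (tendsto_intCast_floor_mul_div_atTop b)) hn

end HeightFunction

/-! ### Slot and soliton heights, and soliton velocities -/

section Bounds

variable (j k m : ℕ) (η : Cfg) (x : ℤ)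

lemma ite_one_zero_mem_Icc (p : Prop) [Decidable p] :
    (if p then 1 else 0 : ℝ) ∈ Set.Icc (0 : ℝ) 1 := by
  split_ifs <;> simp

lemma valR_mem_Icc (b : Bool) : valR b ∈ Set.Icc (0 : ℝ) 1 := ite_one_zero_mem_Icc _

lemma ballAtSeat_mem_Icc : ballAtSeat j η x ∈ Set.Icc (0 : ℝ) 1 := ite_one_zero_mem_Icc _

lemma emptyAtSeat_mem_Icc : emptyAtSeat j η x ∈ Set.Icc (0 : ℝ) 1 := ite_one_zero_mem_Icc _

lemma slotDensity_mem_Icc : slotDensity k η x ∈ Set.Icc (0 : ℝ) 1 := ite_one_zero_mem_Icc _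

lemma abs_slotCurrent_le : |slotCurrent k η x| ≤ k := by
  have hnonneg : 0 ≤ ∑ j ∈ Icc 1 k, (valR (carrier η x j) + valR (carrier (bbsT η) x j)) :=
    Finset.sum_nonneg fun j _ => add_nonneg (valR_mem_Icc _).1 (valR_mem_Icc _).1
  have hle : ∑ j ∈ Icc 1 k, (valR (carrier η x j) + valR (carrier (bbsT η) x j)) ≤
      #(Icc 1 k) • (1 + 1 : ℝ) :=
    Finset.sum_le_card_nsmul _ _ _ fun j _ => add_le_add (valR_mem_Icc _).2 (valR_mem_Icc _).2
  rw [Nat.card_Icc, Nat.add_sub_cancel, nsmul_eq_mul] at hle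
  exact abs_le.2 ⟨by unfold slotCurrent; linarith, by unfold slotCurrent; linarith⟩

end Bounds

section SolitonSpeed

variable {k m : ℕ}

lemma isConservationLaw_slot (k : ℕ) :
    IsConservationLaw (slotDensity k) (slotCurrent k) (k + 1) where
  density_bbsT_sub hη _ := hη.hasRecords.slotDensity_bbsT_sub hη.next.hasRecords
  density_shiftBy hη n x := by
    simp only [slotDensity, hη.hasRecords.seat_shiftBy]
  current_shiftBy hη n x := by
    simp only [slotCurrent, hη.hasRecords.carrier_shiftBy, bbsT_shiftBy,
      hη.next.hasRecords.carrier_shiftBy]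
  abs_density_le η x := by
    rw [abs_of_nonneg (slotDensity_mem_Icc k η x).1]
    exact (slotDensity_mem_Icc k η x).2.trans (le_add_of_nonneg_left k.cast_nonneg)
  abs_current_le η x := (abs_slotCurrent_le k η x).trans (le_add_of_nonneg_right zero_le_one)
  measurable_density := measurable_slotDensity k
  measurable_current := measurable_slotCurrent k

lemma isConservationLaw_soliton (hm : 1 ≤ m) :
    IsConservationLaw (solitonDensity m) (solitonCurrent m) 1 where
  density_bbsT_sub hη _ := hη.hasRecords.solitonDensity_bbsT_sub hη.next.hasRecords hm
  density_shiftBy hη n x := by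
    simp only [solitonDensity, ballAtSeat, hη.hasRecords.seat_shiftBy, shiftBy]
  current_shiftBy hη n x := by
    simp only [solitonCurrent, hη.hasRecords.carrier_shiftBy]
  abs_density_le η x := abs_sub_le_of_nonneg_of_le (ballAtSeat_mem_Icc m η x).1
    (ballAtSeat_mem_Icc m η x).2 (ballAtSeat_mem_Icc _ η x).1 (ballAtSeat_mem_Icc _ η x).2
  abs_current_le η x := abs_sub_le_of_nonneg_of_le (valR_mem_Icc _).1 (valR_mem_Icc _).2
    (valR_mem_Icc _).1 (valR_mem_Icc _).2
  measurable_density := measurable_solitonDensity m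
  measurable_current := measurable_solitonCurrent m

lemma IsConservationLaw.heightFunction_eq_of_signedSum_sub {f h : Cfg → ℤ → ℝ} {C : ℝ} {η : Cfg}
    (F : IsConservationLaw f h C) (hη : AlwaysHasRecords η) {u : ℕ → ℤ}
    (hu : ∀ t, signedSum (f (bbsT^[t] η)) (u (t + 1)) - signedSum (f (bbsT^[t] η)) (u t) =
      h (bbsT^[t] η) (u (t + 1))) (t : ℕ) :
    heightFunction f h t (u t) η = heightFunction f h 0 (u 0) η := by
  induction t with
  | zero => rfl
  | succ t ih =>
    rw [F.heightFunction_succ hη, ← ih, heightFunction, heightFunction]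
    linarith [hu t]

lemma leftmost_mem {γ : Finset ℤ} (hγ : γ.Nonempty) : leftmost γ ∈ γ :=
  Finset.mem_coe.1 (Int.csInf_mem (Finset.coe_nonempty.2 hγ) γ.bddBelow)

/-- The velocity of `k`-solitons under `mu`: they move with the level lines of the height function
of the `k`-slots. -/
noncomputable def solitonVelocity (mu : Measure Cfg) (k : ℕ) : ℝ :=
  (∫ η, slotCurrent k η 0 ∂mu) / ∫ η, slotDensity k η 0 ∂mu

variable {mu : Measure Cfg} (hmu : IsErgodicInvariant mu)
include hmu

lemma ae_tendsto_of_isSoliton_solTraj (hpos : 0 < ∫ η, slotDensity k η 0 ∂mu) :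
    ∀ᵐ η ∂mu, ∀ γ, ∀ u : ℕ → ℤ,
      (∀ t, IsSoliton (bbsT^[t] η) k (solTraj η k γ t) (u t) (u (t + 1))) →
      ∀ z : ℕ → ℤ, (∀ t, z t ∈ solTraj η k γ t) →
        Tendsto (fun t : ℕ => (z t : ℝ) / t) atTop (nhds (solitonVelocity mu k)) := by
  have F := isConservationLaw_slot k
  filter_upwards [F.ae_tendsto_div_of_heightFunction_eq hmu
    (fun η x => (slotDensity_mem_Icc k η x).1) hpos, hmu.ae_alwaysHasRecords]
    with η hlim hη γ u hu z hz
  have hconst := F.heightFunction_eq_of_signedSum_sub hη fun t =>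
    (hu t).signedSum_slotDensity_tail_sub_head (hη t) (hη.iterate t).next.hasRecords
  refine hlim _ z fun t => Eq.trans ?_ (hconst t)
  rw [heightFunction, heightFunction, (hu t).signedSum_slotDensity (hz t),
    (hu t).signedSum_slotDensity (hu t).head_mem]

theorem ae_tendsto_leftmost_solTraj (hpos : 0 < ∫ η, slotDensity k η 0 ∂mu) :
    ∀ᵐ η ∂mu, ∀ γ ∈ Gamma η k,
      Tendsto (fun t : ℕ => (leftmost (solTraj η k γ t) : ℝ) / t) atTop
        (nhds (solitonVelocity mu k)) := by
  filter_upwards [ae_tendsto_of_isSoliton_solTraj hmu hpos, hmu.ae_alwaysHasRecords]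
    with η hlim hη γ hγ
  obtain ⟨u, hu⟩ := exists_isSoliton_solTraj hη hγ
  exact hlim γ u hu _ fun t => leftmost_mem ⟨_, (hu t).head_mem⟩

theorem integral_solitonCurrent_of_frequently_nonempty (hm : 1 ≤ m)
    (hpos : 0 < ∫ η, slotDensity m η 0 ∂mu) (hfreq : ∃ᶠ η in ae mu, (Gamma η m).Nonempty) :
    ∫ η, solitonCurrent m η 0 ∂mu = solitonVelocity mu m * ∫ η, solitonDensity m η 0 ∂mu := by
  have F := isConservationLaw_soliton hm
  obtain ⟨η, ⟨γ, hγ⟩, ⟨hvel, hheight⟩, hη⟩ :=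
    (hfreq.and_eventually (((ae_tendsto_of_isSoliton_solTraj hmu hpos).and
      (F.ae_tendsto_heightFunction_div hmu)).and hmu.ae_alwaysHasRecords)).exists
  obtain ⟨u, hu⟩ := exists_isSoliton_solTraj hη hγ
  have hconst := F.heightFunction_eq_of_signedSum_sub hη fun t =>
    (hu t).signedSum_solitonDensity_tail_sub_head (hη t)
  have hlim := hheight _ u (hvel γ u hu u fun t => (hu t).head_mem)
  simp only [hconst] at hlim
  have hzero := tendsto_nhds_unique hlim (tendsto_const_div_atTop_nhds_zero_nat _)
  linarith

end SolitonSpeed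

/-! ### Completed solitons -/

/-- The configurations in which an `m`-soliton is completed at site `x`: the last letter of its
block is read at `x`, on seat `m`, while seats `m` and `m + 1` are left in the same state. -/
def completionSet (m : ℕ) (x : ℤ) : Set Cfg :=
  {η | seat η x = m ∧ carrier η x m = carrier η x (m + 1)}

/-- Indicator that seat `m` of the carrier is occupied and seat `m + 1` is not. It is the potential
by which `solitonDensity m` differs from the indicator of the completions of `m`-solitons. -/
noncomputable def carrierDrop (m : ℕ) (η : Cfg) (x : ℤ) : ℝ :=
  if carrier η x m = true ∧ carrier η x (m + 1) = false then 1 else 0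

lemma carrierDrop_mem_Icc (m : ℕ) (η : Cfg) (x : ℤ) : carrierDrop m η x ∈ Set.Icc (0 : ℝ) 1 :=
  ite_one_zero_mem_Icc _

lemma measurableSet_completionSet (m : ℕ) (x : ℤ) : MeasurableSet (completionSet m x) :=
  (measurableSet_eq_fun (measurable_seat x) measurable_const).inter
    (measurableSet_eq_fun (measurable_carrier x m) (measurable_carrier x (m + 1)))

lemma measurable_carrierDrop (m : ℕ) (x : ℤ) : Measurable fun η => carrierDrop m η x :=
  (measurable_of_countable
    fun p : Bool × Bool => if p.1 = true ∧ p.2 = false then (1 : ℝ) else 0).comp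
    ((measurable_carrier x m).prodMk (measurable_carrier x (m + 1)))

namespace HasRecords

variable {η : Cfg} {m : ℕ} {x : ℤ} (hη : HasRecords η)
include hη

lemma shiftBy_mem_completionSet_iff {n : ℤ} :
    shiftBy n η ∈ completionSet m x ↔ η ∈ completionSet m (x + n) := by
  simp only [completionSet, Set.mem_ofPred_eq, hη.seat_shiftBy, hη.carrier_shiftBy]

lemma carrierDrop_shiftBy (n : ℤ) : carrierDrop m (shiftBy n η) x = carrierDrop m η (x + n) := by
  simp only [carrierDrop, hη.carrier_shiftBy]

lemma carrierDrop_eq_zero_of_isRecord (hx : isRecord η x) : carrierDrop m η x = 0 :=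
  if_neg fun h => by
    simp [hη.seatRules.after_record x (hη.seat_eq_zero_iff.2 hx)] at h

lemma solitonCurrent_eq_zero_of_isRecord (hx : isRecord η x) : solitonCurrent m η x = 0 := by
  have hempty := hη.seatRules.after_record x (hη.seat_eq_zero_iff.2 hx)
  rw [solitonCurrent, hempty, hempty, sub_self]

lemma solitonDensity_eq_indicator_add (hm : 1 ≤ m) :
    solitonDensity m η x = (completionSet m x).indicator 1 η +
      (carrierDrop m η x - carrierDrop m η (x - 1)) := by
  have r := hη.seatRules
  have hind : (completionSet m x).indicator (1 : Cfg → ℝ) η =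
      if seat η x = m ∧ carrier η x m = carrier η x (m + 1) then 1 else 0 := by
    classical exact (Set.indicator_apply _ _ _).trans (if_congr Iff.rfl rfl rfl)
  rw [hind]
  simp only [solitonDensity, ballAtSeat, carrierDrop]
  rcases Nat.eq_zero_or_pos (seat η x) with h0 | h1
  · simp [h0, r.before_record x h0, r.after_record x h0, (Nat.one_le_iff_ne_zero.1 hm).symm]
  by_cases hseat : seat η x = m
  · rw [← hseat, r.before_self x h1, r.after_self h1,
      r.after_of_ne x (seat η x + 1) (Nat.succ_pos _) (Nat.succ_ne_self _)]
    cases η x <;> cases carrier η (x - 1) (seat η x + 1) <;> simp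
  rw [r.after_of_ne x m hm (Ne.symm hseat)]
  by_cases hseat' : seat η x = m + 1
  · have hbefore := r.before_self x h1
    have hsame := r.after_of_le x h1 m (by omega)
    rw [r.after_of_ne x m hm (Ne.symm hseat)] at hsame
    have hafter := r.after_self h1
    rw [hseat'] at hbefore hafter
    rw [hbefore, hafter, hsame, hseat']
    cases η x <;> simp
  · simp [hseat, hseat', r.after_of_ne x (m + 1) m.succ_pos (Ne.symm hseat')]

-- Without completed `m`-solitons both densities are gradients of `carrierDrop`, so the conservation
-- law makes the difference of the two sides a constant, whose sign is read off at the records.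
lemma solitonCurrent_eq_carrierDrop_sub (hη' : HasRecords (bbsT η)) (hm : 1 ≤ m)
    (hno : ∀ y, η ∉ completionSet m y) (hno' : ∀ y, bbsT η ∉ completionSet m y) :
    solitonCurrent m η x = carrierDrop m η x - carrierDrop m (bbsT η) x := by
  have hconst : (fun y => solitonCurrent m η y + carrierDrop m (bbsT η) y - carrierDrop m η y) =
      fun _ => solitonCurrent m η 0 + carrierDrop m (bbsT η) 0 - carrierDrop m η 0 := by
    refine eq_of_forall_sub_pred_eq rfl fun y => ?_
    have hdens := hη.solitonDensity_eq_indicator_add (x := y) hm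
    have hdens' := hη'.solitonDensity_eq_indicator_add (x := y) hm
    rw [Set.indicator_of_notMem (hno y)] at hdens
    rw [Set.indicator_of_notMem (hno' y)] at hdens'
    linarith [hη.solitonDensity_bbsT_sub hη' (x := y) hm]
  have heq (y : ℤ) := congrFun hconst y
  obtain ⟨y, -, hy⟩ := (hη 0).1
  obtain ⟨z, -, hz⟩ := (hη' 0).1
  have hle : solitonCurrent m η z ≤ carrierDrop m η z := by
    unfold solitonCurrent carrierDrop
    cases carrier η z m <;> cases carrier η z (m + 1) <;> simp [valR]
  have hy0 := heq y
  have hz0 := heq z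
  simp only [hη.solitonCurrent_eq_zero_of_isRecord hy, hη.carrierDrop_eq_zero_of_isRecord hy,
    hη'.carrierDrop_eq_zero_of_isRecord hz] at hy0 hz0
  linarith [heq x, (carrierDrop_mem_Icc m (bbsT η) y).1]

lemma notMem_completionSet_of_Gamma_eq_empty (hm : 1 ≤ m) (hΓ : Gamma η m = ∅) :
    η ∉ completionSet m x := fun ⟨hseat, hcarrier⟩ => by
  obtain ⟨γ, hγ, -⟩ := hη.exists_isSoliton_of_carrier_eq hm hseat hcarrier
  exact hΓ.subset hγ

end HasRecords

/-! ### Mean densities and currents -/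

section Means

/-- The mean number of balls per site that are put on seat `j` of the carrier. -/
noncomputable def seatDensity (mu : Measure Cfg) (j : ℕ) : ℝ := ∫ η, ballAtSeat j η 0 ∂mu

/-- The probability that seat `j` of the carrier is occupied. -/
noncomputable def carrierLoad (mu : Measure Cfg) (j : ℕ) : ℝ := ∫ η, valR (carrier η 0 j) ∂mu

/-- The mean number of records per site. -/
noncomputable def recordDensity (mu : Measure Cfg) : ℝ := mu.real {η | isRecord η 0}

/-- The mean number of completed `m`-solitons per site. -/
noncomputable def completionDensity (mu : Measure Cfg) (m : ℕ) : ℝ := mu.real (completionSet m 0)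

variable {mu : Measure Cfg}

lemma completionDensity_nonneg (m : ℕ) : 0 ≤ completionDensity mu m := measureReal_nonneg

section Integrability

variable [IsFiniteMeasure mu] (j k m : ℕ) (x : ℤ)

lemma integrable_ballAtSeat : Integrable (fun η => ballAtSeat j η x) mu :=
  .of_mem_Icc 0 1 (measurable_ballAtSeat j x).aemeasurable
    (ae_of_all _ fun η => ballAtSeat_mem_Icc j η x)

lemma integrable_emptyAtSeat : Integrable (fun η => emptyAtSeat j η x) mu :=
  .of_mem_Icc 0 1 (measurable_emptyAtSeat j x).aemeasurable
    (ae_of_all _ fun η => emptyAtSeat_mem_Icc j η x)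

lemma integrable_slotDensity : Integrable (fun η => slotDensity k η x) mu :=
  .of_mem_Icc 0 1 (measurable_slotDensity k x).aemeasurable
    (ae_of_all _ fun η => slotDensity_mem_Icc k η x)

lemma integrable_valR_carrier : Integrable (fun η => valR (carrier η x j)) mu :=
  .of_mem_Icc 0 1 (measurable_valR_carrier x j).aemeasurable (ae_of_all _ fun _ => valR_mem_Icc _)

lemma integrable_carrierDrop : Integrable (fun η => carrierDrop m η x) mu :=
  .of_mem_Icc 0 1 (measurable_carrierDrop m x).aemeasurable
    (ae_of_all _ fun η => carrierDrop_mem_Icc m η x)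

lemma integral_solitonDensity :
    ∫ η, solitonDensity m η 0 ∂mu = seatDensity mu m - seatDensity mu (m + 1) :=
  integral_sub (integrable_ballAtSeat m 0) (integrable_ballAtSeat (m + 1) 0)

lemma integral_solitonCurrent_eq_sub :
    ∫ η, solitonCurrent m η 0 ∂mu = carrierLoad mu m - carrierLoad mu (m + 1) :=
  integral_sub (integrable_valR_carrier m 0) (integrable_valR_carrier (m + 1) 0)

lemma tendsto_integral_of_eventually_eq {F : ℕ → Cfg → ℝ} {f : Cfg → ℝ}
    (hF : ∀ n, Measurable (F n)) (hmem : ∀ n η, F n η ∈ Set.Icc (0 : ℝ) 1)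
    (hlim : ∀ᵐ η ∂mu, ∀ᶠ n in atTop, F n η = f η) :
    Tendsto (fun n => ∫ η, F n η ∂mu) atTop (nhds (∫ η, f η ∂mu)) :=
  tendsto_integral_of_dominated_convergence (fun _ => 1) (fun n => (hF n).aestronglyMeasurable)
    (integrable_const 1)
    (fun n => ae_of_all _ fun η => abs_le.2 ⟨by linarith [(hmem n η).1], (hmem n η).2⟩)
    (hlim.mono fun _ h => tendsto_const_nhds.congr' (h.mono fun _ => Eq.symm))

lemma tendsto_carrierLoad : Tendsto (carrierLoad mu) atTop (nhds 0) := by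
  have h := tendsto_integral_of_eventually_eq (mu := mu) (f := fun _ => 0)
    (fun j => measurable_valR_carrier 0 j) (fun j η => valR_mem_Icc (carrier η 0 j))
    (ae_of_all _ fun η => by
      obtain ⟨N, hN⟩ := exists_forall_ge_occupied_eq_false (stackAt η 0)
      exact eventually_atTop.2 ⟨N, fun n hn => by rw [carrier, hN n hn, valR, if_neg (by simp)]⟩)
  rwa [integral_zero] at h

end Integrability

namespace IsErgodicInvariant

variable (hmu : IsErgodicInvariant mu)
include hmu

lemma ae_hasRecords : ∀ᵐ η ∂mu, HasRecords η :=
  hmu.ae_alwaysHasRecords.mono fun _ hη => hη.hasRecords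

lemma integral_emptyAtSeat {j : ℕ} (hj : 1 ≤ j) :
    ∫ η, emptyAtSeat j η 0 ∂mu = seatDensity mu j := by
  rw [seatDensity, ← integral_comp_of_measurePreserving hmu.measurePreserving_bbsT
    (measurable_ballAtSeat j 0)]
  refine integral_congr_ae ?_
  filter_upwards [hmu.ae_alwaysHasRecords] with η hη
  exact (hη.hasRecords.ballAtSeat_bbsT hη.next.hasRecords hj).symm

lemma integral_slotDensity (k : ℕ) :
    ∫ η, slotDensity k η 0 ∂mu = 1 - 2 * ∑ j ∈ Icc 1 k, seatDensity mu j := by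
  have := hmu.isProbabilityMeasure
  have hint (j : ℕ) : Integrable (fun η => ballAtSeat j η 0 + emptyAtSeat j η 0) mu :=
    (integrable_ballAtSeat j 0).add (integrable_emptyAtSeat j 0)
  have hpair : ∀ j ∈ Icc 1 k, ∫ η, (ballAtSeat j η 0 + emptyAtSeat j η 0) ∂mu =
      2 * seatDensity mu j := fun j hj => by
    rw [integral_add (integrable_ballAtSeat j 0) (integrable_emptyAtSeat j 0),
      hmu.integral_emptyAtSeat (Finset.mem_Icc.1 hj).1, two_mul, seatDensity]
  simp only [slotDensity_eq_one_sub_sum]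
  rw [integral_sub (integrable_const _) (integrable_finsetSum _ fun j _ => hint j),
    integral_finsetSum _ fun j _ => hint j, Finset.sum_congr rfl hpair, Finset.mul_sum]
  simp

lemma integral_slotCurrent (k : ℕ) :
    ∫ η, slotCurrent k η 0 ∂mu = k - 2 * ∑ j ∈ Icc 1 k, carrierLoad mu j := by
  have := hmu.isProbabilityMeasure
  have hbbsT := hmu.measurePreserving_bbsT
  have hint' (j : ℕ) : Integrable (fun η => valR (carrier (bbsT η) 0 j)) mu :=
    hbbsT.integrable_comp_of_integrable (integrable_valR_carrier j 0)
  have hint (j : ℕ) :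
      Integrable (fun η => valR (carrier η 0 j) + valR (carrier (bbsT η) 0 j)) mu :=
    (integrable_valR_carrier j 0).add (hint' j)
  have hpair (j : ℕ) : ∫ η, (valR (carrier η 0 j) + valR (carrier (bbsT η) 0 j)) ∂mu =
      2 * carrierLoad mu j := by
    rw [integral_add (integrable_valR_carrier j 0) (hint' j),
      integral_comp_of_measurePreserving hbbsT (measurable_valR_carrier 0 j), two_mul, carrierLoad]
  simp only [slotCurrent]
  rw [integral_sub (integrable_const _) (integrable_finsetSum _ fun j _ => hint j),
    integral_finsetSum _ fun j _ => hint j, Finset.sum_congr rfl fun j _ => hpair j,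
    Finset.mul_sum]
  simp

lemma recordDensity_le_integral_slotDensity (k : ℕ) :
    recordDensity mu ≤ ∫ η, slotDensity k η 0 ∂mu := by
  have := hmu.isProbabilityMeasure
  rw [recordDensity, ← integral_indicator_one (measurableSet_isRecord 0)]
  refine integral_mono_ae ((integrable_const (1 : ℝ)).indicator (measurableSet_isRecord 0))
    (integrable_slotDensity k 0) ?_
  filter_upwards [hmu.ae_hasRecords] with η hη
  refine Set.indicator_apply_le' (fun h => ?_) fun _ => (slotDensity_mem_Icc k η 0).1
  exact (if_pos (Or.inl (hη.seat_eq_zero_iff.2 h))).ge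

lemma recordDensity_pos : 0 < recordDensity mu := by
  have := hmu.isProbabilityMeasure
  refine measureReal_nonneg.lt_of_ne' fun h => ?_
  have h0 : ∀ᵐ η ∂mu, ¬ isRecord η 0 := by simpa [ae_iff] using (measureReal_eq_zero_iff).1 h
  have hall : ∀ᵐ η ∂mu, ∀ x : ℤ, ¬ isRecord η x := ae_all_iff.2 fun x => by
    filter_upwards [(hmu.measurePreserving_shiftBy x).quasiMeasurePreserving.ae h0] with η hη
    rwa [isRecord_shiftBy, zero_add] at hη
  obtain ⟨η, hnone, hη⟩ := (hall.and hmu.ae_hasRecords).exists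
  obtain ⟨y, -, hy⟩ := (hη 0).1
  exact hnone y hy

lemma integral_slotDensity_pos (k : ℕ) : 0 < ∫ η, slotDensity k η 0 ∂mu :=
  hmu.recordDensity_pos.trans_le (hmu.recordDensity_le_integral_slotDensity k)

lemma tendsto_integral_slotDensity :
    Tendsto (fun k => ∫ η, slotDensity k η 0 ∂mu) atTop (nhds (recordDensity mu)) := by
  classical
  have := hmu.isProbabilityMeasure
  rw [recordDensity, ← integral_indicator_one (measurableSet_isRecord 0)]
  refine tendsto_integral_of_eventually_eq (fun k => measurable_slotDensity k 0)
    (fun k η => slotDensity_mem_Icc k η 0) ?_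
  filter_upwards [hmu.ae_hasRecords] with η hη
  filter_upwards [eventually_ge_atTop (seat η 0)] with k hk
  rw [slotDensity, Set.indicator_apply]
  exact if_congr ((or_iff_left hk.not_gt).trans hη.seat_eq_zero_iff) rfl rfl

lemma completionDensity_eq_integral {m : ℕ} (hm : 1 ≤ m) :
    completionDensity mu m = ∫ η, solitonDensity m η 0 ∂mu := by
  have := hmu.isProbabilityMeasure
  have hdens : ∫ η, solitonDensity m η 0 ∂mu = ∫ η, ((completionSet m 0).indicator 1 η +
      (carrierDrop m η 0 - carrierDrop m η (0 - 1))) ∂mu :=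
    integral_congr_ae <| hmu.ae_hasRecords.mono fun η hη => hη.solitonDensity_eq_indicator_add hm
  have hdrop := hmu.integral_apply_eq (measurable_carrierDrop m 0)
    (fun hη n x => hη.hasRecords.carrierDrop_shiftBy n) (0 - 1)
  have hint : Integrable (fun η => carrierDrop m η 0 - carrierDrop m η (0 - 1)) mu :=
    (integrable_carrierDrop m 0).sub (integrable_carrierDrop m (0 - 1))
  have hind : Integrable ((completionSet m 0).indicator (1 : Cfg → ℝ)) mu :=
    (integrable_const 1).indicator (measurableSet_completionSet m 0)
  rw [hdens, integral_add hind hint,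
    integral_sub (integrable_carrierDrop m 0) (integrable_carrierDrop m (0 - 1)), hdrop, sub_self,
    add_zero, integral_indicator_one (measurableSet_completionSet m 0), completionDensity]

lemma ae_solitonCurrent_eq_carrierDrop_sub {m : ℕ} (hm : 1 ≤ m)
    (hΓ : ∀ᵐ η ∂mu, Gamma η m = ∅) :
    ∀ᵐ η ∂mu, solitonCurrent m η 0 = carrierDrop m η 0 - carrierDrop m (bbsT η) 0 := by
  filter_upwards [hΓ, hmu.measurePreserving_bbsT.quasiMeasurePreserving.ae hΓ,
    hmu.ae_alwaysHasRecords] with η hΓη hΓη' hη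
  have hrec := hη.hasRecords
  have hrec' := hη.next.hasRecords
  exact hrec.solitonCurrent_eq_carrierDrop_sub hrec' hm
    (fun _ => hrec.notMem_completionSet_of_Gamma_eq_empty hm hΓη)
    (fun _ => hrec'.notMem_completionSet_of_Gamma_eq_empty hm hΓη')

lemma integral_solitonCurrent {m : ℕ} (hm : 1 ≤ m) :
    ∫ η, solitonCurrent m η 0 ∂mu = completionDensity mu m * solitonVelocity mu m := by
  have := hmu.isProbabilityMeasure
  by_cases hfreq : ∃ᶠ η in ae mu, (Gamma η m).Nonempty
  · rw [integral_solitonCurrent_of_frequently_nonempty hmu hm (hmu.integral_slotDensity_pos m)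
      hfreq, hmu.completionDensity_eq_integral hm, mul_comm]
  have hΓ : ∀ᵐ η ∂mu, Gamma η m = ∅ :=
    (not_frequently.1 hfreq).mono fun _ => Set.not_nonempty_iff_eq_empty.1
  have hbbsT := hmu.measurePreserving_bbsT
  have hdrop := integrable_carrierDrop (mu := mu) m 0
  have hdrop' : Integrable (fun η => carrierDrop m (bbsT η) 0) mu :=
    hbbsT.integrable_comp_of_integrable hdrop
  have hcompletion : completionDensity mu m = 0 := by
    refine (measureReal_eq_zero_iff).2 (measure_eq_zero_iff_ae_notMem.2 ?_)
    filter_upwards [hΓ, hmu.ae_hasRecords] with η hΓη hη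
    exact hη.notMem_completionSet_of_Gamma_eq_empty hm hΓη
  rw [integral_congr_ae (hmu.ae_solitonCurrent_eq_carrierDrop_sub hm hΓ),
    integral_sub hdrop hdrop',
    integral_comp_of_measurePreserving hbbsT (measurable_carrierDrop m 0), sub_self, hcompletion,
    zero_mul]

end IsErgodicInvariant

end Means

/-! ### Summation by parts -/

section Summation

lemma sum_range_mul_sub_succ {R : Type*} [CommRing R] (a : ℕ → R) (n : ℕ) :
    ∑ m ∈ range n, (m : R) * (a m - a (m + 1)) = ∑ j ∈ Icc 1 n, a j - n * a n := by
  induction n with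
  | zero => simp
  | succ n ih =>
    rw [Finset.sum_range_succ, ih, Finset.sum_Icc_succ_top n.succ_pos]
    push_cast
    ring

lemma sum_Ico_one_mul_of_eq_sub_succ {R : Type*} [CommRing R] {f a : ℕ → R}
    (hfa : ∀ m ≥ 1, f m = a m - a (m + 1)) {n : ℕ} (hn : 1 ≤ n) :
    ∑ m ∈ Ico 1 n, (m : R) * f m = ∑ j ∈ Icc 1 n, a j - n * a n := by
  rw [← sum_range_mul_sub_succ, Finset.sum_range_eq_add_Ico _ hn, Nat.cast_zero, zero_mul, zero_add]
  exact Finset.sum_congr rfl fun m hm => by rw [hfa m (Finset.mem_Ico.1 hm).1]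

lemma tendsto_zero_of_tendsto_sum_Icc {E : Type*} [AddCommGroup E] [TopologicalSpace E]
    [IsTopologicalAddGroup E] {a : ℕ → E} {S : E}
    (hS : Tendsto (fun n => ∑ j ∈ Icc 1 n, a j) atTop (nhds S)) : Tendsto a atTop (nhds 0) := by
  have h := ((tendsto_add_atTop_iff_nat 1).2 hS).sub hS
  rw [sub_self] at h
  refine (tendsto_add_atTop_iff_nat 1).1 (h.congr fun n => ?_)
  rw [Finset.sum_Icc_succ_top n.succ_pos, add_sub_cancel_left]

lemma hasSum_mul_sub_succ {a : ℕ → ℝ} {S : ℝ} (ha : ∀ m ≥ 1, a (m + 1) ≤ a m)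
    (hS : Tendsto (fun n => ∑ j ∈ Icc 1 n, a j) atTop (nhds S)) :
    HasSum (fun m : ℕ => (m : ℝ) * (a m - a (m + 1))) S := by
  have hanti : AntitoneOn a {m | 1 ≤ m} := antitoneOn_nat_Ici_of_succ_le ha
  have hzero := tendsto_zero_of_tendsto_sum_Icc hS
  have hnonneg : ∀ j ≥ 1, 0 ≤ a j := fun j hj => le_of_tendsto hzero <|
    (eventually_ge_atTop j).mono fun n hn => hanti hj (le_trans hj hn) hn
  have hpartial (n : ℕ) : ∑ m ∈ range n, (m : ℝ) * (a m - a (m + 1)) =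
      ∑ j ∈ Icc 1 n, (a j - a n) := by
    simp [sum_range_mul_sub_succ, Finset.sum_sub_distrib]
  have hle (n : ℕ) : ∑ j ∈ Icc 1 n, (a j - a n) ≤ S := by
    have hmono : Monotone fun n => ∑ j ∈ Icc 1 n, a j := fun n n' h =>
      Finset.sum_le_sum_of_subset_of_nonneg (Finset.Icc_subset_Icc_right h)
        fun j hj _ => hnonneg j (Finset.mem_Icc.1 hj).1
    refine le_trans (Finset.sum_le_sum fun j hj => ?_) (hmono.ge_of_tendsto hS n)
    have hj := Finset.mem_Icc.1 hj
    exact sub_le_self _ (hnonneg n (hj.1.trans hj.2))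
  refine (hasSum_iff_tendsto_nat_of_nonneg (fun m => ?_) S).2 ?_
  · rcases Nat.eq_zero_or_pos m with rfl | hm
    · simp
    · exact mul_nonneg m.cast_nonneg (sub_nonneg.2 (ha m hm))
  simp only [hpartial]
  refine tendsto_order.2 ⟨fun c hc => ?_, fun c hc => .of_forall fun n => (hle n).trans_lt hc⟩
  obtain ⟨N, hN⟩ := (hS.eventually_const_lt hc).exists
  have htrunc : Tendsto (fun n => ∑ j ∈ Icc 1 N, (a j - a n)) atTop
      (nhds (∑ j ∈ Icc 1 N, a j)) := by
    simpa using tendsto_finsetSum (Icc 1 N) fun j _ => hzero.const_sub (a j)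
  filter_upwards [htrunc.eventually_const_lt hN, eventually_ge_atTop N] with n hn hNn
  refine hn.trans_le (Finset.sum_le_sum_of_subset_of_nonneg (Finset.Icc_subset_Icc_right hNn)
    fun j hj _ => sub_nonneg.2 ?_)
  have hj := Finset.mem_Icc.1 hj
  exact hanti hj.1 (hj.1.trans hj.2) hj.2

lemma hasSum_ite_lt_of_eq_sub_succ {E : Type*} [AddCommGroup E] [TopologicalSpace E]
    [IsTopologicalAddGroup E] [T2Space E] {f a : ℕ → E} {k : ℕ}
    (hf : Summable f) (ha : Tendsto a atTop (nhds 0))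
    (hfa : ∀ m > k, f m = a m - a (m + 1)) :
    HasSum (fun m => if k < m then f m else 0) (a (k + 1)) := by
  have hsupp : ∀ m ∉ Set.range (· + (k + 1)), (if k < m then f m else 0) = 0 :=
    fun m hm => if_neg fun h => hm ⟨m - (k + 1), Nat.sub_add_cancel h⟩
  rw [← (add_left_injective (k + 1)).hasSum_iff hsupp]
  have hterm (m : ℕ) : (if k < m + (k + 1) then f (m + (k + 1)) else 0) = f (m + (k + 1)) :=
    if_pos (by omega)
  simp only [Function.comp_def, hterm]
  rw [((summable_nat_add_iff (k + 1)).2 hf).hasSum_iff_tendsto_nat]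
  have hlim := ((tendsto_add_atTop_iff_nat (k + 1)).2 ha).const_sub (a (k + 1))
  rw [sub_zero] at hlim
  refine hlim.congr fun n => ?_
  have htele := Finset.sum_range_sub' (fun m => a (m + (k + 1))) n
  rw [zero_add] at htele
  rw [← htele]
  refine Finset.sum_congr rfl fun m _ => ?_
  rw [hfa _ (by omega), add_right_comm]

end Summation

/-! ### Densities of solitons -/

namespace IsErgodicInvariant

variable {mu : Measure Cfg} (hmu : IsErgodicInvariant mu)
include hmu

lemma completionDensity_eq_sub {m : ℕ} (hm : 1 ≤ m) :
    completionDensity mu m = seatDensity mu m - seatDensity mu (m + 1) := by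
  have := hmu.isProbabilityMeasure
  rw [hmu.completionDensity_eq_integral hm, integral_solitonDensity]

lemma completionDensity_mul_solitonVelocity {m : ℕ} (hm : 1 ≤ m) :
    completionDensity mu m * solitonVelocity mu m = carrierLoad mu m - carrierLoad mu (m + 1) := by
  have := hmu.isProbabilityMeasure
  rw [← hmu.integral_solitonCurrent hm, integral_solitonCurrent_eq_sub]

lemma solitonVelocity_mul (k : ℕ) :
    solitonVelocity mu k * (1 - 2 * ∑ j ∈ Icc 1 k, seatDensity mu j) =
      k - 2 * ∑ j ∈ Icc 1 k, carrierLoad mu j := by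
  rw [solitonVelocity, ← hmu.integral_slotDensity, ← hmu.integral_slotCurrent]
  exact div_mul_cancel₀ _ (hmu.integral_slotDensity_pos k).ne'

lemma abs_solitonVelocity_le (k : ℕ) : |solitonVelocity mu k| ≤ k / recordDensity mu := by
  have := hmu.isProbabilityMeasure
  have hcurrent : |∫ η, slotCurrent k η 0 ∂mu| ≤ k := by
    simpa using norm_integral_le_of_norm_le_const (μ := mu) (f := fun η => slotCurrent k η 0)
      (C := k) (ae_of_all _ fun η => abs_slotCurrent_le k η 0)
  rw [solitonVelocity, abs_div, abs_of_pos (hmu.integral_slotDensity_pos k)]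
  exact div_le_div₀ k.cast_nonneg hcurrent hmu.recordDensity_pos
    (hmu.recordDensity_le_integral_slotDensity k)

lemma tendsto_sum_seatDensity :
    Tendsto (fun n => ∑ j ∈ Icc 1 n, seatDensity mu j) atTop
      (nhds ((1 - recordDensity mu) / 2)) := by
  refine ((hmu.tendsto_integral_slotDensity.const_sub 1).div_const 2).congr fun n => ?_
  rw [hmu.integral_slotDensity]
  ring

lemma hasSum_mul_completionDensity :
    HasSum (fun m : ℕ => 2 * (m : ℝ) * completionDensity mu m) (1 - recordDensity mu) := by
  have hanti : ∀ m ≥ 1, seatDensity mu (m + 1) ≤ seatDensity mu m := fun m hm => by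
    rw [← sub_nonneg, ← hmu.completionDensity_eq_sub hm]
    exact completionDensity_nonneg m
  have h := (hasSum_mul_sub_succ hanti hmu.tendsto_sum_seatDensity).mul_left 2
  rw [mul_div_cancel₀ _ two_ne_zero] at h
  refine h.congr_fun fun m => ?_
  rcases Nat.eq_zero_or_pos m with rfl | hm
  · simp
  · rw [hmu.completionDensity_eq_sub hm, mul_assoc]

lemma summable_completionDensity : Summable (completionDensity mu) := by
  refine .of_norm_bounded_eventually_nat hmu.hasSum_mul_completionDensity.summable ?_
  filter_upwards [eventually_ge_atTop 1] with m hm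
  have hm : (1 : ℝ) ≤ 2 * m := by exact_mod_cast (by omega : 1 ≤ 2 * m)
  rw [Real.norm_of_nonneg (completionDensity_nonneg m)]
  exact le_mul_of_one_le_left (completionDensity_nonneg m) hm

lemma summable_completionDensity_mul_solitonVelocity :
    Summable fun m => completionDensity mu m * solitonVelocity mu m := by
  refine .of_norm_bounded
    (hmu.hasSum_mul_completionDensity.summable.mul_right (1 / (2 * recordDensity mu))) fun m => ?_
  have hrecord := hmu.recordDensity_pos
  rw [norm_mul, Real.norm_of_nonneg (completionDensity_nonneg m), Real.norm_eq_abs]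
  calc completionDensity mu m * |solitonVelocity mu m|
      ≤ completionDensity mu m * (m / recordDensity mu) :=
        mul_le_mul_of_nonneg_left (hmu.abs_solitonVelocity_le m) (completionDensity_nonneg m)
    _ = 2 * m * completionDensity mu m * (1 / (2 * recordDensity mu)) := by field_simp

lemma hasSum_completionDensity_tail (k : ℕ) :
    HasSum (fun m => if k < m then completionDensity mu m else 0) (seatDensity mu (k + 1)) :=
  hasSum_ite_lt_of_eq_sub_succ hmu.summable_completionDensity
    (tendsto_zero_of_tendsto_sum_Icc hmu.tendsto_sum_seatDensity)
    fun _ hm => hmu.completionDensity_eq_sub (Nat.one_le_of_lt hm)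

lemma hasSum_completionDensity_mul_solitonVelocity_tail (k : ℕ) :
    HasSum (fun m => if k < m then completionDensity mu m * solitonVelocity mu m else 0)
      (carrierLoad mu (k + 1)) := by
  have := hmu.isProbabilityMeasure
  exact hasSum_ite_lt_of_eq_sub_succ hmu.summable_completionDensity_mul_solitonVelocity
    tendsto_carrierLoad
    fun _ hm => hmu.completionDensity_mul_solitonVelocity (Nat.one_le_of_lt hm)

end IsErgodicInvariant

/-! ### The Palm formula for the soliton densities -/

/-- The soliton whose block is completed when site `x` is read (empty if there is none). -/
noncomputable def completedSoliton (η : Cfg) (x : ℤ) : Finset ℤ :=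
  (((completedAt η x).getD []).map Prod.fst).toFinset

/-- The event that the origin is a record and a `k`-soliton of the excursion starting there is
completed at site `n`. -/
def excursionCompletionSet (k n : ℕ) : Set Cfg :=
  {η | isRecord η 0 ∧ (∀ z ∈ Set.Ioc (0 : ℤ) n, ¬ isRecord η z) ∧ η ∈ completionSet k n}

lemma measurableSet_excursionCompletionSet (k n : ℕ) :
    MeasurableSet (excursionCompletionSet k n) := by
  have hno : MeasurableSet {η | ∀ z ∈ Set.Ioc (0 : ℤ) n, ¬ isRecord η z} := by
    simp only [Set.ofPred_forall]
    exact .iInter fun z => .iInter fun _ => (measurableSet_isRecord z).compl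
  exact (measurableSet_isRecord 0).inter (hno.inter (measurableSet_completionSet k n))

namespace HasRecords

variable {η : Cfg} {k : ℕ} {x : ℤ} (hη : HasRecords η)
include hη

lemma isLeast_rFirst : IsLeast {x : ℤ | 1 ≤ x ∧ isRecord η x} (rFirst η) := by
  have hbdd : BddBelow {x : ℤ | 1 ≤ x ∧ isRecord η x} := ⟨1, fun x hx => hx.1⟩
  exact ⟨Int.csInf_mem (hη 1).2 hbdd, fun x hx => csInf_le hbdd hx⟩

lemma mem_excursionCompletionSet_iff (h0 : isRecord η 0) {n : ℕ} :
    η ∈ excursionCompletionSet k n ↔ n < rFirst η ∧ η ∈ completionSet k n := by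
  have hfirst := hη.isLeast_rFirst
  refine ⟨fun h => ⟨not_le.1 fun hle => h.2.1 _ ⟨hfirst.1.1, hle⟩ hfirst.1.2, h.2.2⟩,
    fun h => ⟨h0, fun z hz hr => ?_, h.2⟩⟩
  have := hfirst.2 ⟨hz.1, hr⟩
  exact absurd hz.2 (not_le.2 (h.1.trans_le this))

lemma exists_isSoliton_completedSoliton (hk : 1 ≤ k) (hx : η ∈ completionSet k x) :
    ∃ u d, max u d = x ∧ IsSoliton η k (completedSoliton η x) u d := by
  obtain ⟨rfl, hcarrier⟩ := hx
  obtain ⟨s, hs⟩ := Option.isSome_iff_exists.1 (hη.isSome_completedAt_iff.2 ⟨hk, hcarrier⟩)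
  rw [completedSoliton, hs]
  exact (hη.isSoliton_of_completedAt hs).2

lemma isGreatest_completedSoliton (hk : 1 ≤ k) (hx : η ∈ completionSet k x) :
    IsGreatest (completedSoliton η x : Set ℤ) x := by
  obtain ⟨u, d, rfl, hsol⟩ := hη.exists_isSoliton_completedSoliton hk hx
  have hmem : ∀ z ∈ ({u, d} : Set ℤ), z ∈ completedSoliton η (max u d) := by
    simpa using ⟨hsol.head_mem, hsol.tail_mem⟩
  exact ⟨hmem _ (max_choice u d), fun z hz => (hsol.span hz).1⟩

lemma injOn_completedSoliton (hk : 1 ≤ k) :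
    Set.InjOn (completedSoliton η) {x | η ∈ completionSet k x} := fun _ hx _ hy hxy =>
  (hη.isGreatest_completedSoliton hk hx).unique (hxy ▸ hη.isGreatest_completedSoliton hk hy)

lemma Gamma_eq_image_completedSoliton (hk : 1 ≤ k) :
    Gamma η k = completedSoliton η '' {x | η ∈ completionSet k x} := by
  ext γ
  rw [hη.mem_Gamma_iff]
  constructor
  · rintro ⟨x, s, hs, hlen, rfl⟩
    have hseat : seat η x = k := by have := (hη.isSoliton_of_completedAt hs).1; omega
    have hcarrier := (hη.isSome_completedAt_iff.1 (by rw [hs]; rfl)).2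
    exact ⟨x, ⟨hseat, hseat ▸ hcarrier⟩, by rw [completedSoliton, hs]; rfl⟩
  · rintro ⟨x, ⟨rfl, hcarrier⟩, rfl⟩
    obtain ⟨s, hs⟩ := Option.isSome_iff_exists.1 (hη.isSome_completedAt_iff.2 ⟨hk, hcarrier⟩)
    exact ⟨x, s, hs, (hη.isSoliton_of_completedAt hs).1, by rw [completedSoliton, hs]; rfl⟩

lemma forall_mem_completedSoliton_pos (hk : 1 ≤ k) (hx : η ∈ completionSet k x)
    (h0 : isRecord η 0) (hx0 : 0 ≤ x) : ∀ z ∈ completedSoliton η x, 0 < z := fun z hz => by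
  obtain ⟨u, d, rfl, hsol⟩ := hη.exists_isSoliton_completedSoliton hk hx
  refine not_le.1 fun hz0 => ?_
  have hseat := ((hsol.span hz).2 0 ⟨hz0, hx0⟩).1
  rw [hη.seat_eq_zero_iff.2 h0] at hseat
  omega

lemma setOf_Gamma_excursion_eq_image (hk : 1 ≤ k) (h0 : isRecord η 0) :
    {γ | γ ∈ Gamma η k ∧ ∀ x ∈ γ, 0 < x ∧ x < rFirst η} =
      (fun n : ℕ => completedSoliton η n) '' {n | η ∈ excursionCompletionSet k n} := by
  ext γ
  rw [hη.Gamma_eq_image_completedSoliton hk]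
  constructor
  · rintro ⟨⟨x, hx, rfl⟩, hγ⟩
    obtain ⟨hpos, hlt⟩ := hγ x (hη.isGreatest_completedSoliton hk hx).1
    lift x to ℕ using hpos.le
    exact ⟨x, (hη.mem_excursionCompletionSet_iff h0).2 ⟨hlt, hx⟩, rfl⟩
  · rintro ⟨n, hn, rfl⟩
    obtain ⟨hlt, hn⟩ := (hη.mem_excursionCompletionSet_iff h0).1 hn
    exact ⟨⟨n, hn, rfl⟩, fun z hz =>
      ⟨hη.forall_mem_completedSoliton_pos hk hn h0 n.cast_nonneg z hz,
        ((hη.isGreatest_completedSoliton hk hn).2 hz).trans_lt hlt⟩⟩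

lemma excCount_eq_tsum (hk : 1 ≤ k) (h0 : isRecord η 0) :
    (excCount η k : ENNReal) = ∑' n : ℕ, (excursionCompletionSet k n).indicator 1 η := by
  have hinj : Set.InjOn (fun n : ℕ => completedSoliton η n)
      {n | η ∈ excursionCompletionSet k n} := fun n hn n' hn' h =>
    Nat.cast_injective (hη.injOn_completedSoliton hk hn.2.2 hn'.2.2 h)
  have hfin : {n : ℕ | η ∈ excursionCompletionSet k n}.Finite :=
    (Set.finite_lt_nat (rFirst η).toNat).subset fun n hn => by
      have := ((hη.mem_excursionCompletionSet_iff h0).1 hn).1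
      simp only [Set.mem_ofPred_eq]
      omega
  rw [excCount, hη.setOf_Gamma_excursion_eq_image hk h0, hinj.ncard_image,
    ← ENat.toENNReal_coe, hfin.cast_ncard_eq, ← ENNReal.tsum_set_one]
  exact _root_.tsum_subtype _ 1

end HasRecords

namespace IsErgodicInvariant

variable {mu : Measure Cfg} {k : ℕ} (hmu : IsErgodicInvariant mu)
include hmu

/-- Mass transport: each completion site sends its mass to the last record before it. -/
lemma tsum_measure_excursionCompletionSet :
    ∑' n, mu (excursionCompletionSet k n) = mu (completionSet k 0) := by
  let B (n : ℕ) : Set Cfg := shiftBy (-n) ⁻¹' excursionCompletionSet k n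
  have hB (n : ℕ) : MeasurableSet (B n) :=
    measurable_shiftBy _ (measurableSet_excursionCompletionSet k n)
  have hdisj : Pairwise (Function.onFun Disjoint B) := by
    refine (pairwise_disjoint_on B).2 fun n n' hlt => Set.disjoint_left.2 fun η hn hn' => ?_
    have hrecord := isRecord_shiftBy.1 hn.1
    refine hn'.2.1 (n' - n) ⟨by omega, by omega⟩ (isRecord_shiftBy.2 ?_)
    rwa [show (n' : ℤ) - n + -n' = 0 + -n by ring]
  have hunion : ⋃ n, B n =ᵐ[mu] completionSet k 0 := by
    refine eventuallyEq_set.2 (hmu.ae_hasRecords.mono fun η hη => Set.mem_iUnion.trans ?_)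
    have hcompletion (n : ℕ) : shiftBy (-n) η ∈ completionSet k n ↔ η ∈ completionSet k 0 := by
      rw [hη.shiftBy_mem_completionSet_iff, add_neg_cancel]
    refine ⟨fun ⟨n, hn⟩ => (hcompletion n).1 hn.2.2, fun h => ?_⟩
    obtain ⟨y, n, hy, hr, hno⟩ := hη.exists_last_record 0
    obtain rfl : y = -n := by omega
    refine ⟨n, isRecord_shiftBy.2 (by rwa [zero_add]), fun z hz hz' => ?_, (hcompletion n).2 h⟩
    exact hno (z + -n) ⟨by have := hz.1; omega, by have := hz.2; omega⟩ (isRecord_shiftBy.1 hz')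
  rw [← measure_congr hunion, measure_iUnion hdisj hB]
  exact tsum_congr fun n => ((hmu.measurePreserving_shiftBy (-n)).measure_preimage
    (measurableSet_excursionCompletionSet k n).nullMeasurableSet).symm

lemma ae_excCount_eq_tsum (hk : 1 ≤ k) : ∀ᵐ η ∂mu.restrict {η | isRecord η 0},
    (excCount η k : ENNReal) = ∑' n, (excursionCompletionSet k n).indicator 1 η := by
  filter_upwards [ae_restrict_of_ae hmu.ae_hasRecords,
    ae_restrict_mem (measurableSet_isRecord 0)] with η hη h0
  exact hη.excCount_eq_tsum hk h0

lemma aemeasurable_excCount (hk : 1 ≤ k) :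
    AEMeasurable (fun η => (excCount η k : ENNReal)) (mu.restrict {η | isRecord η 0}) :=
  (Measurable.tsum fun n => measurable_one.indicator
    (measurableSet_excursionCompletionSet k n)).aemeasurable.congr
    (EventuallyEq.symm (hmu.ae_excCount_eq_tsum hk))

lemma setLIntegral_excCount (hk : 1 ≤ k) :
    ∫⁻ η in {η | isRecord η 0}, (excCount η k : ENNReal) ∂mu = mu (completionSet k 0) := by
  have hE := measurableSet_excursionCompletionSet k
  rw [lintegral_congr_ae (hmu.ae_excCount_eq_tsum hk),
    lintegral_tsum fun n => (measurable_one.indicator (hE n)).aemeasurable,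
    ← hmu.tsum_measure_excursionCompletionSet]
  refine tsum_congr fun n => ?_
  rw [lintegral_indicator_one (hE n), Measure.restrict_apply (hE n),
    Set.inter_eq_left.2 fun η hη => hη.1]

lemma rhoK_eq (hk : 1 ≤ k) : rhoK mu k = completionDensity mu k / recordDensity mu := by
  have hXhat : XhatSet =ᵐ[mu] {η | isRecord η 0} :=
    eventuallyEq_set.2 (hmu.ae_inX.mono fun η hη => and_iff_right hη)
  rw [rhoK, ProbabilityTheory.cond, integral_smul_measure, measure_congr hXhat,
    Measure.restrict_congr_set hXhat, smul_eq_mul, ENNReal.toReal_inv, ← div_eq_inv_mul,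
    completionDensity, recordDensity, Measure.real, Measure.real, ← hmu.setLIntegral_excCount hk,
    ← integral_toReal (hmu.aemeasurable_excCount hk)
      (ae_of_all _ fun _ => ENNReal.natCast_lt_top _)]
  simp only [ENNReal.toReal_natCast]

lemma w0of_eq : w0of mu = 1 / recordDensity mu := by
  have hterm (k : ℕ) : 2 * (k : ℝ) * rhoK mu k =
      2 * k * completionDensity mu k / recordDensity mu := by
    rcases Nat.eq_zero_or_pos k with rfl | hk
    · simp
    · rw [hmu.rhoK_eq hk, mul_div_assoc]
  rw [w0of, tsum_congr hterm, (hmu.hasSum_mul_completionDensity.div_const _).tsum_eq, sub_div,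
    div_self hmu.recordDensity_pos.ne', add_sub_cancel]

lemma rhoBar_eq (hk : 1 ≤ k) : rhoBar mu k = completionDensity mu k := by
  rw [rhoBar, hmu.rhoK_eq hk, hmu.w0of_eq, div_div_div_cancel_right₀ hmu.recordDensity_pos.ne',
    div_one]

/-! ### The speed equations -/

lemma sum_Ico_rhoBar_mul_sub (hk : 1 ≤ k) (v : ℝ) :
    ∑ m ∈ Ico 1 k, 2 * (m : ℝ) * rhoBar mu m * (v - solitonVelocity mu m) =
      2 * v * (∑ j ∈ Icc 1 k, seatDensity mu j - k * seatDensity mu k) -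
        2 * (∑ j ∈ Icc 1 k, carrierLoad mu j - k * carrierLoad mu k) := by
  rw [← sum_Ico_one_mul_of_eq_sub_succ (f := completionDensity mu)
      (fun m hm => hmu.completionDensity_eq_sub hm) hk,
    ← sum_Ico_one_mul_of_eq_sub_succ (f := fun m => completionDensity mu m * solitonVelocity mu m)
      (fun m hm => hmu.completionDensity_mul_solitonVelocity hm) hk,
    Finset.mul_sum, Finset.mul_sum, ← Finset.sum_sub_distrib]
  refine Finset.sum_congr rfl fun m hm => ?_
  rw [hmu.rhoBar_eq (Finset.mem_Ico.1 hm).1]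
  ring

lemma tsum_rhoBar_mul_sub (k : ℕ) (v : ℝ) :
    ∑' m, (if k < m then 2 * (k : ℝ) * rhoBar mu m * (solitonVelocity mu m - v) else 0) =
      2 * k * (carrierLoad mu (k + 1) - v * seatDensity mu (k + 1)) := by
  have h := ((hmu.hasSum_completionDensity_mul_solitonVelocity_tail k).sub
    ((hmu.hasSum_completionDensity_tail k).mul_left v)).mul_left (2 * (k : ℝ))
  refine (h.congr_fun fun m => ?_).tsum_eq
  split_ifs with hm
  · rw [hmu.rhoBar_eq (Nat.one_le_of_lt hm)]
    ring
  · ring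

theorem solitonVelocity_eq (hk : 1 ≤ k) :
    solitonVelocity mu k = k +
      ∑ m ∈ Ico 1 k, 2 * (m : ℝ) * rhoBar mu m * (solitonVelocity mu k - solitonVelocity mu m) -
      ∑' m, if k < m then
        2 * (k : ℝ) * rhoBar mu m * (solitonVelocity mu m - solitonVelocity mu k) else 0 := by
  have hcompletion := hmu.completionDensity_mul_solitonVelocity hk
  rw [hmu.completionDensity_eq_sub hk] at hcompletion
  rw [hmu.sum_Ico_rhoBar_mul_sub hk, hmu.tsum_rhoBar_mul_sub]
  linear_combination hmu.solitonVelocity_mul k + 2 * k * hcompletion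

end IsErgodicInvariant

open MeasureTheory Filter in
/-- **existence of soliton speeds and speed equations.** Let `μ`
be a `T`-invariant, shift-ergodic probability measure on `𝒳_λ`, `0 < λ < 1/2`.
Then there is a deterministic sequence `(v_k)_{k≥1}` of finite reals such that
`μ`-a.s. every tagged `k`-soliton `γ ∈ Γ_k η` satisfies
`x(γ^t)/t → v_k`, and the speeds satisfy, for every `k ≥ 1`,
`v_k = k + Σ_{m<k} 2m·ρ̄_m·(v_k − v_m) − Σ_{m>k} 2k·ρ̄_m·(v_m − v_k)`. -/
theorem soliton_speeds (lam : ℝ) (h0 : 0 < lam) (h1 : lam < 1 / 2)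
    (mu : Measure Cfg) [IsProbabilityMeasure mu]
    (hsupp : mu {η : Cfg | inXlam lam η} = 1)
    (hT : mu.map bbsT = mu) (herg : Ergodic shiftC mu) :
    ∃ v : ℕ → ℝ,
      (∀ᵐ η ∂mu, ∀ k : ℕ, 1 ≤ k → ∀ γ ∈ Gamma η k,
        Tendsto (fun t : ℕ => (leftmost (solTraj η k γ t) : ℝ) / (t : ℝ))
          atTop (nhds (v k))) ∧
      ∀ k : ℕ, 1 ≤ k →
        v k = (k : ℝ) +
          (∑ m ∈ Finset.Ico 1 k, 2 * (m : ℝ) * rhoBar mu m * (v k - v m)) -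
          ∑' m : ℕ, if k < m then 2 * (k : ℝ) * rhoBar mu m * (v m - v k) else 0 := by
  have hmu := isErgodicInvariant_of_inXlam h0 h1 hsupp hT herg
  refine ⟨solitonVelocity mu, ?_, fun k hk => hmu.solitonVelocity_eq hk⟩
  refine ae_all_iff.2 fun k => ?_
  filter_upwards [ae_tendsto_leftmost_solTraj hmu (hmu.integral_slotDensity_pos k)] with η hη _ γ
  exact hη γ
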